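/- arXiv:1808.01460 — 5 statements merged into one kernel-verified Lean document; each statement's English description precedes it below -/
import Mathlib

section
/- Let H be a complex Hilbert space, let B(H) be the algebra of bounded linear operators on H with operator norm, and let e ∈ B(H) be a non-zero partial isometry. Then every element a of the face F_e = {e + z : z ∈ B(H), z = (1 − e e*) z (1 − e* e), ‖z‖ ≤ 1} can be written as the average a = (u₁ + u₂)/2 of two extreme points u₁, u₂ of the closed unit ball of B(H) which themselves belong to F_e. (This is the instance for the JBW*-triple B(H) of the statement that every element of the norm-closed face associated with a non-zero compact tripotent is the average of two extreme points of the unit ball belonging to that face.) -/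
/-- An embedding of index sets of Hilbert bases induces an isometric embedding. -/
theorem HilbertBasis.nonempty_linearIsometry {𝕜 E F ι κ : Type*} [RCLike 𝕜]
    [NormedAddCommGroup E] [InnerProductSpace 𝕜 E]
    [NormedAddCommGroup F] [InnerProductSpace 𝕜 F] [CompleteSpace F]
    (b : HilbertBasis ι 𝕜 E) (c : HilbertBasis κ 𝕜 F) (j : ι ↪ κ) : Nonempty (E →ₗᵢ[𝕜] F) :=
  ⟨(c.orthonormal.comp j j.injective).orthogonalFamily.linearIsometry.comp
    b.repr.toLinearIsometry⟩

/-- Of two Hilbert spaces, one embeds isometrically into the other. -/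
theorem nonempty_linearIsometry_or (𝕜 E F : Type*) [RCLike 𝕜]
    [NormedAddCommGroup E] [InnerProductSpace 𝕜 E] [CompleteSpace E]
    [NormedAddCommGroup F] [InnerProductSpace 𝕜 F] [CompleteSpace F] :
    Nonempty (E →ₗᵢ[𝕜] F) ∨ Nonempty (F →ₗᵢ[𝕜] E) := by
  obtain ⟨s, b, -⟩ := exists_hilbertBasis 𝕜 E
  obtain ⟨t, c, -⟩ := exists_hilbertBasis 𝕜 F
  exact (Function.Embedding.total s t).imp (fun ⟨j⟩ ↦ b.nonempty_linearIsometry c j)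
    fun ⟨j⟩ ↦ c.nonempty_linearIsometry b j

namespace ContinuousLinearMap

variable {H : Type*} [NormedAddCommGroup H] [InnerProductSpace ℂ H] [CompleteSpace H]

/-- If `‖f x‖ = ‖g x‖` for all `x`, then `f` factors through `g` by an isometry, provided that
the orthogonal complement of the range of `g` embeds into that of `f`. -/
theorem exists_isometry_mul_eq_of_norm_eq {f g : H →L[ℂ] H} (h : ∀ x, ‖f x‖ = ‖g x‖)
    (w : g.rangeᗮ →ₗᵢ[ℂ] f.rangeᗮ) :
    ∃ v : H →L[ℂ] H, star v * v = 1 ∧ v * g = f := by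
  let T : Submodule ℂ H := g.range.topologicalClosure
  have : CompleteSpace T := g.range.isClosed_topologicalClosure.completeSpace_coe
  let k : H →ₗ[ℂ] T := (Submodule.inclusion g.range.le_topologicalClosure).comp
    g.toLinearMap.rangeRestrict
  have hk (x : H) : (k x : H) = g x := rfl
  have hkd : DenseRange k :=
    ((denseRange_inclusion_iff subset_closure).mpr subset_rfl).comp
      g.toLinearMap.surjective_rangeRestrict.denseRange (by fun_prop)
  let v₀ : T →L[ℂ] H := f.toLinearMap.extendOfNorm k
  have hv₀ (x : H) : v₀ (k x) = f x :=
    LinearMap.extendOfNorm_eq hkd ⟨1, fun x ↦ by simp [h, ← hk]⟩ x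
  have hv₀n (y : T) : ‖v₀ y‖ = ‖y‖ := by
    refine hkd.induction_on y (isClosed_eq (by fun_prop) (by fun_prop)) fun x ↦ ?_
    rw [hv₀, h, ← hk, Submodule.coe_norm]
  have hv₀mem (y : T) (z : f.rangeᗮ) : inner ℂ (v₀ y) (z : H) = 0 := by
    refine hkd.induction_on y (isClosed_eq (by fun_prop) (by fun_prop)) fun x ↦ ?_
    rw [hv₀]
    exact z.2 _ ⟨x, rfl⟩
  have hTo : Tᗮ = g.rangeᗮ := Submodule.orthogonal_closure _
  let w' : Tᗮ →L[ℂ] f.rangeᗮ :=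
    (w.comp (LinearIsometryEquiv.ofEq _ _ hTo).toLinearIsometry).toContinuousLinearMap
  have hw' (y : Tᗮ) : ‖w' y‖ = ‖y‖ := by simp [w']
  refine ⟨v₀ ∘L T.orthogonalProjectionOnto +
    f.rangeᗮ.subtypeL ∘L w' ∘L Tᗮ.orthogonalProjectionOnto, ?_, ?_⟩
  · refine (norm_map_iff_adjoint_comp_self _).mp fun x ↦ ?_
    rw [← mul_self_inj (norm_nonneg _) (norm_nonneg _), ← sq ‖x‖,
      Submodule.norm_sq_eq_add_norm_sq_projection x T]
    refine (norm_add_sq_eq_norm_sq_add_norm_sq_of_inner_eq_zero _ _ (hv₀mem _ _)).trans ?_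
    change ‖v₀ _‖ * ‖v₀ _‖ + ‖w' _‖ * ‖w' _‖ = _
    rw [hv₀n, hw', ← sq, ← sq]
    rfl
  · ext x
    have h1 : T.orthogonalProjectionOnto (g x) = k x :=
      T.orthogonalProjectionOnto_mem_subspace_eq_self (k x)
    have h2 : Tᗮ.orthogonalProjectionOnto (g x) = 0 :=
      Submodule.orthogonalProjectionOnto_orthogonal_apply_eq_zero (k x).2
    simp [h1, h2, hv₀]

/-- A form of the polar decomposition, in which the partial isometry is replaced by
an isometry or a coisometry. -/
theorem exists_eq_mul_abs (a : H →L[ℂ] H) :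
    ∃ v : H →L[ℂ] H, (star v * v = 1 ∨ v * star v = 1) ∧ a = v * CFC.abs a := by
  have h (x : H) : ‖a x‖ = ‖CFC.abs a x‖ := by
    rw [← sq_eq_sq₀ (norm_nonneg _) (norm_nonneg _), apply_norm_sq_eq_inner_adjoint_left,
      apply_norm_sq_eq_inner_adjoint_left, ← star_eq_adjoint, ← star_eq_adjoint,
      (CFC.abs_nonneg a).isSelfAdjoint.star_eq, ← mul_def, ← mul_def, CFC.abs_mul_abs]
  obtain ⟨⟨w⟩⟩ | ⟨⟨w⟩⟩ := nonempty_linearIsometry_or ℂ (CFC.abs a).rangeᗮ a.rangeᗮ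
  · obtain ⟨v, hv, hva⟩ := exists_isometry_mul_eq_of_norm_eq h w
    exact ⟨v, .inl hv, hva.symm⟩
  · obtain ⟨v, hv, hva⟩ := exists_isometry_mul_eq_of_norm_eq (fun x ↦ (h x).symm) w
    exact ⟨star v, .inr (by rwa [star_star]), by rw [← hva, ← mul_assoc, hv, one_mul]⟩

theorem norm_le_one_of_isometry {u : H →L[ℂ] H} (hu : star u * u = 1) : ‖u‖ ≤ 1 :=
  u.opNorm_le_bound zero_le_one fun x ↦ by
    rw [(norm_map_iff_adjoint_comp_self u).mpr hu, one_mul]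

theorem isometry_mem_extremePoints {u : H →L[ℂ] H} (hu : star u * u = 1) :
    u ∈ Set.extremePoints ℝ (Metric.closedBall (0 : H →L[ℂ] H) 1) := by
  simp only [mem_extremePoints_iff_left, mem_closedBall_zero_iff]
  refine ⟨norm_le_one_of_isometry hu, ?_⟩
  rintro x hx y hy ⟨s, t, hs, ht, hst, rfl⟩
  have hxy : x = y := by
    let := InnerProductSpace.rclikeToReal ℂ H
    ext ξ
    by_contra hne
    refine (norm_combo_lt_of_ne (x.le_of_opNorm_le hx ξ) (y.le_of_opNorm_le hy ξ)
      hne hs ht hst).ne ?_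
    simpa using (norm_map_iff_adjoint_comp_self _).mpr hu ξ
  rw [← hxy, ← add_smul, hst, one_smul]

theorem coisometry_mem_extremePoints {u : H →L[ℂ] H} (hu : u * star u = 1) :
    u ∈ Set.extremePoints ℝ (Metric.closedBall (0 : H →L[ℂ] H) 1) := by
  have h := isometry_mem_extremePoints (u := star u) (by rwa [star_star])
  simp only [mem_extremePoints_iff_left, mem_closedBall_zero_iff, norm_star] at h ⊢
  refine ⟨h.1, ?_⟩
  rintro x hx y hy ⟨s, t, hs, ht, hst, rfl⟩
  exact star_injective <| h.2 (star x) (by rwa [norm_star]) (star y) (by rwa [norm_star])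
    ⟨s, t, hs, ht, hst, by simp⟩

/-- A contraction that agrees with a partial isometry `e` on the initial space of `e` lies in the
face associated with `e`. -/
theorem mem_face_of_mul_eq {e u : H →L[ℂ] H} (he : e * star e * e = e) (hu : ‖u‖ ≤ 1)
    (hue : u * (star e * e) = e) :
    u ∈ {x : H →L[ℂ] H | ∃ z, (1 - e * star e) * z * (1 - star e * e) = z ∧
      ‖z‖ ≤ 1 ∧ x = e + z} := by
  have hp : IsStarProjection (star e * e) :=
    ⟨by rw [IsIdempotentElem, mul_assoc, ← mul_assoc e, he], .star_mul_self e⟩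
  have hq : IsStarProjection (e * star e) :=
    ⟨by rw [IsIdempotentElem, ← mul_assoc, he], .mul_star_self e⟩
  have he1 : ‖e‖ ≤ 1 := by
    rw [← hue]
    exact (norm_mul_le _ _).trans (mul_le_one₀ hu (norm_nonneg _) hp.norm_le)
  have hse : star u * e = star e * e := by
    ext ξ
    rw [← sub_eq_zero, ← norm_eq_zero, ← sq_eq_zero_iff]
    refine le_antisymm ?_ (sq_nonneg _)
    rw [@norm_sub_sq ℂ]
    have h1 : inner ℂ ((star u * e) ξ) ((star e * e) ξ) = inner ℂ (e ξ) (e ξ) := by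
      change inner ℂ (adjoint u (e ξ)) _ = _
      rw [adjoint_inner_left]
      exact congrArg (fun t : H →L[ℂ] H ↦ inner ℂ (e ξ) (t ξ)) hue
    have h2 : ‖(star u * e) ξ‖ ≤ ‖e ξ‖ := by
      simpa using (star u).le_of_opNorm_le (by rwa [norm_star] : ‖star u‖ ≤ 1) (e ξ)
    have h3 : ‖(star e * e) ξ‖ ≤ ‖e ξ‖ := by
      simpa using (star e).le_of_opNorm_le (by rwa [norm_star] : ‖star e‖ ≤ 1) (e ξ)
    rw [h1, inner_self_eq_norm_sq]
    nlinarith [norm_nonneg ((star u * e) ξ), norm_nonneg ((star e * e) ξ)]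
  have heu : e * star e * u = e := by
    have := congrArg (fun t ↦ e * star t) hse
    simpa [← mul_assoc, he] using this
  have hz : (1 - e * star e) * u * (1 - star e * e) = u - e := by
    rw [sub_mul, one_mul, heu, mul_sub, mul_one, sub_mul, hue, ← mul_assoc, he, sub_self, sub_zero]
  refine ⟨u - e, ?_, ?_, by abel⟩
  · rw [← hz]
    simp only [mul_assoc, hp.one_sub.isIdempotentElem.eq]
    simp only [← mul_assoc, hq.one_sub.isIdempotentElem.eq]
  · rw [← hz]
    refine (norm_mul_le _ _).trans (mul_le_one₀ ?_ (norm_nonneg _) hp.one_sub.norm_le)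
    exact (norm_mul_le _ _).trans (mul_le_one₀ hq.one_sub.norm_le (norm_nonneg _) hu)

end ContinuousLinearMap

/-- every element of the norm-closed face `F_e = e + B_{M₀(e)}` of the
closed unit ball of `B(H)` associated with a non-zero partial isometry `e` is the
average of two extreme points of the closed unit ball belonging to `F_e`. -/
theorem average_of_two_extreme_points_in_face
    {H : Type*} [NormedAddCommGroup H] [InnerProductSpace ℂ H] [CompleteSpace H]
    (e : H →L[ℂ] H) (he : e * star e * e = e) (hene : e ≠ 0)
    (a : H →L[ℂ] H)
    (ha : a ∈ {x : H →L[ℂ] H | ∃ z, (1 - e * star e) * z * (1 - star e * e) = z ∧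
      ‖z‖ ≤ 1 ∧ x = e + z}) :
    ∃ u₁ u₂ : H →L[ℂ] H,
      u₁ ∈ Set.extremePoints ℝ (Metric.closedBall (0 : H →L[ℂ] H) 1) ∧
      u₂ ∈ Set.extremePoints ℝ (Metric.closedBall (0 : H →L[ℂ] H) 1) ∧
      u₁ ∈ {x : H →L[ℂ] H | ∃ z, (1 - e * star e) * z * (1 - star e * e) = z ∧
        ‖z‖ ≤ 1 ∧ x = e + z} ∧
      u₂ ∈ {x : H →L[ℂ] H | ∃ z, (1 - e * star e) * z * (1 - star e * e) = z ∧
        ‖z‖ ≤ 1 ∧ x = e + z} ∧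
      a = (2 : ℝ)⁻¹ • (u₁ + u₂) := by
  obtain ⟨z, hz, hz1, rfl⟩ := ha
  set p := star e * e with hp_def
  have hp : IsStarProjection p :=
    ⟨by rw [IsIdempotentElem, hp_def, mul_assoc, ← mul_assoc e, he], .star_mul_self e⟩
  have hep : e * p = e := by rw [hp_def, ← mul_assoc, he]
  have hzp : z * p = 0 := by
    rw [← hz, mul_assoc, hp.isIdempotentElem.one_sub_mul_self, mul_zero]
  have hez : star e * z = 0 := by
    have h : star e * (1 - e * star e) = 0 := by
      have : star e * e * star e = star e := by simpa [mul_assoc] using congrArg star he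
      rw [mul_sub, mul_one, ← mul_assoc, this, sub_self]
    rw [← hz, ← mul_assoc, ← mul_assoc, h, zero_mul, zero_mul]
  have hze : star z * e = 0 := by simpa using congrArg star hez
  set a := e + z with ha_def
  have hap : a * p = e := by rw [ha_def, add_mul, hep, hzp, add_zero]
  have hsa : star a * a = p + star z * z := by
    simp [ha_def, add_mul, mul_add, hez, hze, hp_def]
  have hsap : star a * a * p = p := by
    rw [hsa, add_mul, mul_assoc (star z), hzp, mul_zero, add_zero, hp.isIdempotentElem.eq]
  have hzz : star z * z ≤ 1 - p := by
    have h1 : star z * z ≤ 1 := by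
      rw [← CStarAlgebra.norm_le_one_iff_of_nonneg _ (star_mul_self_nonneg z),
        CStarRing.norm_star_mul_self]
      exact mul_le_one₀ hz1 (norm_nonneg _) hz1
    have h2 := hp.one_sub.isSelfAdjoint.conjugate_le_conjugate h1
    have h3 : z * (1 - p) = z := by rw [mul_sub, hzp, mul_one, sub_zero]
    have h4 : (1 - p) * star z = star z := by
      simpa [hp.isSelfAdjoint.star_eq] using congrArg star h3
    rwa [← mul_assoc, h4, mul_assoc, h3, mul_one, hp.one_sub.isIdempotentElem.eq] at h2
  have hle : star a * a ≤ 1 := by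
    rw [hsa]
    simpa using add_le_add_right hzz p
  have ha1 : ‖a‖ ≤ 1 := by
    rw [← CStarAlgebra.norm_le_one_iff_of_nonneg _ (star_mul_self_nonneg a),
      CStarRing.norm_star_mul_self] at hle
    nlinarith [norm_nonneg a]
  let b : selfAdjoint (H →L[ℂ] H) := ⟨CFC.abs a, (CFC.abs_nonneg a).isSelfAdjoint⟩
  have hb1 : ‖b‖ ≤ 1 := CFC.norm_abs.trans_le ha1
  set d : H →L[ℂ] H := CFC.sqrt (1 - (b : H →L[ℂ] H) ^ 2) with hd_def
  have hd : d * d = 1 - star a * a := by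
    rw [hd_def, sq, CFC.abs_mul_abs, CFC.sqrt_mul_sqrt_self _ (sub_nonneg.mpr hle)]
  have hdp : d * p = 0 := by
    rw [← CStarRing.star_mul_self_eq_zero_iff, star_mul, mul_assoc, ← mul_assoc (star d),
      (CFC.sqrt_nonneg _ : 0 ≤ d).isSelfAdjoint.star_eq, hd, sub_mul, hsap, one_mul, sub_self,
      mul_zero]
  obtain ⟨v, hv, hva⟩ := a.exists_eq_mul_abs
  let w := selfAdjoint.unitarySelfAddISMul b hb1
  have hw : (w : H →L[ℂ] H) = CFC.abs a + Complex.I • d := rfl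
  have hw' : ((star w : unitary (H →L[ℂ] H)) : H →L[ℂ] H) = CFC.abs a - Complex.I • d :=
    selfAdjoint.star_coe_unitarySelfAddISMul b hb1
  have hext (y : unitary (H →L[ℂ] H)) :
      v * y ∈ Set.extremePoints ℝ (Metric.closedBall (0 : H →L[ℂ] H) 1) := by
    refine hv.elim (fun h ↦ ContinuousLinearMap.isometry_mem_extremePoints ?_)
      fun h ↦ ContinuousLinearMap.coisometry_mem_extremePoints ?_
    · rw [star_mul, mul_assoc, ← mul_assoc (star v), h, one_mul, Unitary.coe_star_mul_self]
    · rw [star_mul, mul_assoc, ← mul_assoc (y : H →L[ℂ] H), Unitary.mul_star_self_of_mem y.2,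
        one_mul, h]
  have hball {u : H →L[ℂ] H}
      (hu : u ∈ Set.extremePoints ℝ (Metric.closedBall (0 : H →L[ℂ] H) 1)) : ‖u‖ ≤ 1 :=
    mem_closedBall_zero_iff.mp hu.1
  refine ⟨v * w, v * (star w : unitary (H →L[ℂ] H)), hext w, hext (star w),
    ContinuousLinearMap.mem_face_of_mul_eq he (hball (hext w)) ?_,
    ContinuousLinearMap.mem_face_of_mul_eq he (hball (hext (star w))) ?_, ?_⟩
  · rw [hw, mul_add, ← hva, add_mul, hap, mul_smul_comm, smul_mul_assoc, mul_assoc, hdp]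
    simp
  · rw [hw', mul_sub, ← hva, sub_mul, hap, mul_smul_comm, smul_mul_assoc, mul_assoc, hdp]
    simp
  · rw [hw, hw', ← mul_add, add_add_sub_cancel, mul_add, ← hva, ← two_smul ℝ a, smul_smul]
    norm_num
end

section
/- Let n ≥ 3 and let Mₙ(ℂ) be the C*-algebra of n×n complex matrices. For every partial isometry e ∈ Mₙ(ℂ) of matrix rank one and every unitary u ∈ Mₙ(ℂ), there exists a partial isometry w ∈ Mₙ(ℂ) of matrix rank one such that e w* = 0, w* e = 0 (i.e. w is triple-orthogonal to e) and u = w + (1 − w w*) u (1 − w* w). (This is the instance for the rank-n type 1 Cartan factor Mₙ(ℂ) of the statement that every Cartan factor of rank at least three satisfies property (𝒫): for each minimal tripotent e and each complete tripotent u there is a minimal tripotent w orthogonal to e with u = w + P₀(w)(u).) -/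
open Matrix in
/-- Two square matrices whose ranks add up to less than the dimension have a common null vector. -/
theorem Matrix.exists_ne_zero_mulVec_eq_zero_of_rank_add_rank_lt {K : Type*} [Field K] {n : ℕ}
    (a b : Matrix (Fin n) (Fin n) K) (h : a.rank + b.rank < n) :
    ∃ x : Fin n → K, x ≠ 0 ∧ a *ᵥ x = 0 ∧ b *ᵥ x = 0 := by
  have ha := a.mulVecLin.finrank_range_add_finrank_ker
  have hb := b.mulVecLin.finrank_range_add_finrank_ker
  have hab := Submodule.finrank_sup_add_finrank_inf_eq
    (LinearMap.ker a.mulVecLin) (LinearMap.ker b.mulVecLin)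
  have hle := Submodule.finrank_le (LinearMap.ker a.mulVecLin ⊔ LinearMap.ker b.mulVecLin)
  rw [Module.finrank_fin_fun] at ha hb hle
  unfold Matrix.rank at h
  have hne : LinearMap.ker a.mulVecLin ⊓ LinearMap.ker b.mulVecLin ≠ ⊥ := by
    intro hbot
    rw [hbot, finrank_bot] at hab
    omega
  obtain ⟨x, hx, hx0⟩ := Submodule.exists_mem_ne_zero_of_ne_bot hne
  exact ⟨x, hx0, by simpa using hx.1, by simpa using hx.2⟩

open ComplexOrder in
theorem Matrix.rank_star {n : ℕ} (a : Matrix (Fin n) (Fin n) ℂ) :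
    (star a).rank = a.rank :=
  a.rank_conjTranspose

open Matrix ComplexOrder in
/-- The orthogonal projection onto the line spanned by a nonzero vector. -/
theorem Matrix.exists_rank_one_projection {n : ℕ} (x : Fin n → ℂ) (hx : x ≠ 0) :
    ∃ p : Matrix (Fin n) (Fin n) ℂ, star p = p ∧ p * p = p ∧ p.rank = 1 ∧
      ∀ a : Matrix (Fin n) (Fin n) ℂ, a *ᵥ x = 0 → a * p = 0 := by
  have hd : star x ⬝ᵥ x ≠ 0 := fun h => hx (dotProduct_star_self_eq_zero.mp h)
  have hs : star (star x ⬝ᵥ x) = star x ⬝ᵥ x := by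
    rw [← star_dotProduct_star, star_star]
  refine ⟨vecMulVec ((star x ⬝ᵥ x)⁻¹ • x) (star x), ?_, ?_, ?_, ?_⟩
  · rw [star_eq_conjTranspose, conjTranspose_vecMulVec, star_star, star_smul, star_inv₀, hs,
      vecMulVec_smul, smul_vecMulVec]
  · rw [vecMulVec_mul_vecMulVec, dotProduct_smul, smul_eq_mul, inv_mul_cancel₀ hd, one_smul]
  · refine le_antisymm (rank_vecMulVec_le _ _) (Nat.one_le_iff_ne_zero.mpr fun h => ?_)
    rw [Matrix.rank, Submodule.finrank_eq_zero, LinearMap.range_eq_bot, ← toLin'_apply',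
      LinearEquiv.map_eq_zero_iff] at h
    simp [vecMulVec_eq_zero, hx] at h
  · intro a ha
    rw [mul_vecMulVec, mulVec_smul, ha, smul_zero, zero_vecMulVec]

/-- the rank-`n` type 1 Cartan factor `Mₙ(ℂ)` (`n ≥ 3`) satisfies
property (𝒫): for every rank-one partial isometry `e` and every unitary `u`, there
is a rank-one partial isometry `w` orthogonal to `e` with
`u = w + (1 - w w*) u (1 - w* w)`. -/
theorem matrix_property_P (n : ℕ) (hn : 3 ≤ n)
    (e : Matrix (Fin n) (Fin n) ℂ) (he : e * star e * e = e) (herank : e.rank = 1)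
    (u : Matrix (Fin n) (Fin n) ℂ) (hu : u ∈ unitary (Matrix (Fin n) (Fin n) ℂ)) :
    ∃ w : Matrix (Fin n) (Fin n) ℂ,
      w * star w * w = w ∧ w.rank = 1 ∧
      e * star w = 0 ∧ star w * e = 0 ∧
      u = w + (1 - w * star w) * u * (1 - star w * w) := by
  have hu1 : star u * u = 1 := hu.1
  have hr : (star e * u).rank ≤ 1 :=
    (Matrix.rank_mul_le_left _ _).trans (by
      rw [Matrix.rank_star, herank])
  obtain ⟨x, hx, hex, hux⟩ :=
    Matrix.exists_ne_zero_mulVec_eq_zero_of_rank_add_rank_lt e (star e * u) (by omega)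
  obtain ⟨p, hsp, hpp, hrp, hp⟩ := Matrix.exists_rank_one_projection x hx
  have hwl : star (u * p) * u = p := by rw [star_mul, hsp, mul_assoc, hu1, mul_one]
  have hww : star (u * p) * (u * p) = p := by rw [← mul_assoc, hwl, hpp]
  refine ⟨u * p, ?_, ?_, ?_, ?_, ?_⟩
  · rw [mul_assoc, hww, mul_assoc, hpp]
  · refine le_antisymm (hrp ▸ Matrix.rank_mul_le_right u p) ?_
    calc 1 = (star u * (u * p)).rank := by rw [← mul_assoc, hu1, one_mul, hrp]
      _ ≤ (u * p).rank := Matrix.rank_mul_le_right _ _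
  · rw [star_mul, hsp, ← mul_assoc, hp e hex, zero_mul]
  · rw [← star_eq_zero, star_mul, star_star, ← mul_assoc, hp _ hux]
  · have hsub : (1 - u * p * star (u * p)) * u = u * (1 - p) := by
      rw [sub_mul, one_mul, mul_assoc, hwl, mul_assoc, hpp, mul_sub, mul_one]
    rw [hww, hsub, mul_assoc, IsIdempotentElem.one_sub hpp, mul_sub, mul_one, add_sub_cancel]
end

section
/- Let H and K be complex Hilbert spaces with dim H ≥ 3 and dim K ≥ 3, and let B(H, K) be the Banach space of bounded linear operators from H to K with the operator norm. Then B(H, K) satisfies the Mazur–Ulam property: for every real Banach space Y, every surjective isometry Δ : S(B(H, K)) → S(Y) between the unit spheres admits a unique extension to a surjective real-linear isometry from B(H, K) onto Y. (This is the type 1 Cartan factor instance of the theorem that every JBW*-triple of rank at least three satisfies the Mazur–Ulam property, since B(H, K) is a JBW*-triple of rank min(dim H, dim K) ≥ 3.) -/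
namespace OperatorSphere

section Hilbert

variable {H K : Type*} [NormedAddCommGroup H] [InnerProductSpace ℂ H]
  [NormedAddCommGroup K] [InnerProductSpace ℂ K]

/-- The rank one operator `h ↦ ⟪w, h⟫ v`. -/
noncomputable abbrev rk (v : K) (w : H) : H →L[ℂ] K := InnerProductSpace.rankOne ℂ v w

/-- The contractions sending `w` to `v`. -/
def Face (v : K) (w : H) : Set (H →L[ℂ] K) := {x | ‖x‖ ≤ 1 ∧ x w = v}

/-- The operators whose matrix with respect to `w`, `v` has vanishing first row and column. -/
noncomputable def Corner (v : K) (w : H) : Submodule ℂ (H →L[ℂ] K) where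
  carrier := {x | x w = 0 ∧ ∀ h, inner ℂ v (x h) = 0}
  add_mem' := by
    rintro a b ⟨ha, ha'⟩ ⟨hb, hb'⟩
    exact ⟨by simp [ha, hb], fun h => by simp [ha', hb']⟩
  zero_mem' := ⟨by simp, by simp⟩
  smul_mem' := by
    rintro c a ⟨ha, ha'⟩
    exact ⟨by simp [ha], fun h => by simp [ha']⟩

lemma mem_Corner {v : K} {w : H} {x : H →L[ℂ] K} :
    x ∈ Corner v w ↔ x w = 0 ∧ ∀ h, inner ℂ v (x h) = 0 := Iff.rfl

lemma real_smul_mem_Corner {v : K} {w : H} {x : H →L[ℂ] K} (hx : x ∈ Corner v w) (r : ℝ) :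
    r • x ∈ Corner v w := by
  rw [← Complex.coe_smul]
  exact (Corner v w).smul_mem _ hx

lemma inner_self_one {v : K} (hv : ‖v‖ = 1) : inner ℂ v v = 1 := by
  simp [inner_self_eq_norm_sq_to_K, hv]

lemma eq_of_two_le_norm_add {a b : K} (ha : ‖a‖ ≤ 1) (hb : ‖b‖ ≤ 1) (h : 2 ≤ ‖a + b‖) : a = b := by
  have := parallelogram_law_with_norm ℂ a b
  have h0 : ‖a - b‖ = 0 := by
    nlinarith [norm_nonneg a, norm_nonneg b, norm_nonneg (a - b)]
  exact sub_eq_zero.1 (norm_eq_zero.1 h0)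

lemma norm_apply_le_of_contraction {x : H →L[ℂ] K} (hx : ‖x‖ ≤ 1) (h : H) : ‖x h‖ ≤ ‖h‖ :=
  (x.le_of_opNorm_le hx h).trans_eq (one_mul _)

lemma norm_eq_one_of_apply {x : H →L[ℂ] K} (hx : ‖x‖ ≤ 1) {w : H} (hw : ‖w‖ = 1)
    (h : ‖x w‖ = 1) : ‖x‖ = 1 := by
  refine le_antisymm hx ?_
  have := x.le_opNorm w
  rwa [h, hw, mul_one] at this

/-- Pythagoras for the splitting along a unit vector. -/
lemma norm_sq_split {w : H} (hw : ‖w‖ = 1) (h : H) :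
    ‖h‖ ^ 2 = ‖inner ℂ w h‖ ^ 2 + ‖h - inner ℂ w h • w‖ ^ 2 := by
  have h1 : inner ℂ (inner ℂ w h • w) (h - inner ℂ w h • w) = 0 := by
    rw [inner_smul_left, inner_sub_right, inner_smul_right, inner_self_one hw]; ring
  have h2 := norm_add_sq_eq_norm_sq_add_norm_sq_of_inner_eq_zero _ _ h1
  rw [add_sub_cancel, norm_smul, hw] at h2
  nlinarith

lemma norm_sq_add_smul {v : K} (hv : ‖v‖ = 1) (c : ℂ) {k : K} (hk : inner ℂ v k = 0) :
    ‖c • v + k‖ ^ 2 = ‖c‖ ^ 2 + ‖k‖ ^ 2 := by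
  have h1 : inner ℂ (c • v) k = 0 := by simp [hk]
  have h2 := norm_add_sq_eq_norm_sq_add_norm_sq_of_inner_eq_zero _ _ h1
  rw [norm_smul, hv] at h2
  nlinarith

lemma apply_eq_of_norm_add_rk {x : H →L[ℂ] K} {v : K} {w : H} (hx : ‖x‖ ≤ 1) (hv : ‖v‖ = 1)
    (hw : ‖w‖ = 1) (h : ‖x + rk v w‖ = 2) : x w = v := by
  refine eq_of_two_le_norm_add ((norm_apply_le_of_contraction hx w).trans hw.le) hv.le ?_
  by_contra! hlt
  obtain ⟨δ, hδ⟩ : ∃ δ, δ = 2 - ‖x w + v‖ := ⟨_, rfl⟩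
  have hδ0 : 0 < δ := by linarith
  have hδ2 : δ ≤ 2 := by linarith [norm_nonneg (x w + v)]
  have hlt2 : 2 - δ ^ 2 / 16 < ‖x + rk v w‖ := by rw [h]; nlinarith
  obtain ⟨u, hu, hu'⟩ := ContinuousLinearMap.exists_lt_apply_of_lt_opNorm _ hlt2
  set α := inner ℂ w u with hα
  have hsplit := norm_sq_split hw u
  set u' := u - α • w with hu'def
  have e1 : (x + rk v w) u = x u + α • v := by simp [rk, hα]
  have e2 : x u + α • v = α • (x w + v) + x u' := by simp [hu'def]; abel
  have n1 : ‖x u + α • v‖ ≤ 1 + ‖α‖ := by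
    refine (norm_add_le _ _).trans ?_
    rw [norm_smul, hv, mul_one]
    linarith [norm_apply_le_of_contraction hx u]
  have n2 : ‖α • (x w + v) + x u'‖ ≤ ‖α‖ * (2 - δ) + ‖u'‖ := by
    refine (norm_add_le _ _).trans ?_
    rw [norm_smul, hδ]
    have := norm_apply_le_of_contraction hx u'
    linarith
  rw [e1] at hu'
  have hα1 : 1 - δ ^ 2 / 16 < ‖α‖ := by linarith
  rw [e2] at hu'
  have hαle : ‖α‖ ≤ 1 := by nlinarith [norm_nonneg α, norm_nonneg u, sq_nonneg ‖u'‖]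
  have hu'sq : ‖u'‖ ^ 2 ≤ (δ / 2) ^ 2 := by
    nlinarith [norm_nonneg α, norm_nonneg u]
  have hu'le : ‖u'‖ ≤ δ / 2 := by
    exact abs_le_of_sq_le_sq' hu'sq (by linarith) |>.2
  nlinarith [norm_nonneg α]

lemma norm_add_rk_eq_two {x : H →L[ℂ] K} {v : K} {w : H} (hx : ‖x‖ ≤ 1) (hv : ‖v‖ = 1)
    (hw : ‖w‖ = 1) (h : x w = v) : ‖x + rk v w‖ = 2 := by
  have hr : ‖rk v w‖ = 1 := by simp [rk, hv, hw]
  refine le_antisymm ((norm_add_le _ _).trans (by linarith)) ?_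
  have := (x + rk v w).le_opNorm w
  have e : (x + rk v w) w = (2 : ℂ) • v := by
    simp [rk, h, hw, two_smul]
  rw [e, norm_smul, hv, hw] at this
  simpa using this

lemma inner_eq_of_mem_Face [CompleteSpace H] [CompleteSpace K] {x : H →L[ℂ] K} {v : K} {w : H}
    (hx : ‖x‖ ≤ 1) (hv : ‖v‖ = 1) (hw : ‖w‖ = 1) (h : x w = v) (k : H) :
    inner ℂ v (x k) = inner ℂ w k := by
  have h1 : ContinuousLinearMap.adjoint x v = w := by
    have hn : ‖ContinuousLinearMap.adjoint x‖ ≤ 1 := by simpa using hx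
    have h2 := norm_apply_le_of_contraction hn v
    have h3 : inner ℂ (ContinuousLinearMap.adjoint x v) w = 1 := by
      rw [ContinuousLinearMap.adjoint_inner_left, h, inner_self_one hv]
    have h4 := @norm_sub_sq ℂ _ _ _ _ (ContinuousLinearMap.adjoint x v) w
    rw [h3, hw] at h4
    simp only [RCLike.one_re] at h4
    have h0 : ‖ContinuousLinearMap.adjoint x v - w‖ = 0 := by
      nlinarith [norm_nonneg (ContinuousLinearMap.adjoint x v - w),
        norm_nonneg (ContinuousLinearMap.adjoint x v)]
    exact sub_eq_zero.1 (norm_eq_zero.1 h0)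
  rw [← ContinuousLinearMap.adjoint_inner_left, h1]

/-- A contraction in the corner may be completed by the rank one operator. -/
lemma norm_rk_add_le {y : H →L[ℂ] K} {v : K} {w : H} (hv : ‖v‖ = 1) (hw : ‖w‖ = 1)
    (hy : y ∈ Corner v w) (hy1 : ‖y‖ ≤ 1) : ‖rk v w + y‖ ≤ 1 := by
  refine ContinuousLinearMap.opNorm_le_bound _ zero_le_one fun h => ?_
  rw [one_mul]
  have e : (rk v w + y) h = inner ℂ w h • v + y (h - inner ℂ w h • w) := by
    simp [rk, hy.1]
  have h1 := norm_sq_add_smul hv (inner ℂ w h) (hy.2 (h - inner ℂ w h • w))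
  have h2 := norm_sq_split hw h
  have h3 := norm_apply_le_of_contraction hy1 (h - inner ℂ w h • w)
  rw [e]
  refine abs_le_of_sq_le_sq' ?_ (norm_nonneg _) |>.2
  nlinarith [norm_nonneg (y (h - inner ℂ w h • w))]

lemma rk_add_mem_Face {y : H →L[ℂ] K} {v : K} {w : H} (hv : ‖v‖ = 1) (hw : ‖w‖ = 1)
    (hy : y ∈ Corner v w) (hy1 : ‖y‖ ≤ 1) : rk v w + y ∈ Face v w :=
  ⟨norm_rk_add_le hv hw hy hy1, by simp [rk, hy.1, hw]⟩

lemma norm_sub_smul_le {v : K} (hv : ‖v‖ = 1) (k : K) : ‖k - inner ℂ v k • v‖ ≤ ‖k‖ := by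
  have := norm_sq_split hv k
  refine abs_le_of_sq_le_sq' ?_ (norm_nonneg _) |>.2
  nlinarith [sq_nonneg ‖inner ℂ v k‖]

/-- The compression of an operator to the corner. -/
lemma exists_compression {v : K} {w : H} (hv : ‖v‖ = 1) (hw : ‖w‖ = 1) (x : H →L[ℂ] K) :
    ∃ y ∈ Corner v w, ‖y‖ ≤ ‖x‖ ∧ ∀ h, y h = x (h - inner ℂ w h • w) -
      inner ℂ v (x (h - inner ℂ w h • w)) • v := by
  refine ⟨(ContinuousLinearMap.id ℂ K - rk v v) ∘L x ∘L (ContinuousLinearMap.id ℂ H - rk w w),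
    ?_, ?_, ?_⟩
  · refine mem_Corner.2 ⟨by simp [rk, hw], fun h => ?_⟩
    simp [rk, hv]
  · refine ContinuousLinearMap.opNorm_le_bound _ (norm_nonneg _) fun h => ?_
    have h1 := norm_sub_smul_le hv (x (h - inner ℂ w h • w))
    have h2 := norm_sub_smul_le hw h
    have h3 := x.le_opNorm (h - inner ℂ w h • w)
    have h4 := mul_le_mul_of_nonneg_left h2 (norm_nonneg x)
    have e : ((ContinuousLinearMap.id ℂ K - rk v v) ∘L x ∘L
        (ContinuousLinearMap.id ℂ H - rk w w)) h = x (h - inner ℂ w h • w) -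
      inner ℂ v (x (h - inner ℂ w h • w)) • v := rfl
    rw [e]
    linarith
  · exact fun h => rfl

lemma sub_rk_mem_Corner [CompleteSpace H] [CompleteSpace K] {x : H →L[ℂ] K} {v : K} {w : H}
    (hv : ‖v‖ = 1) (hw : ‖w‖ = 1) (hx : x ∈ Face v w) :
    x - rk v w ∈ Corner v w := by
  refine mem_Corner.2 ⟨by simp [rk, hx.2, hw], fun h => ?_⟩
  simp [rk, hv, inner_eq_of_mem_Face hx.1 hv hw hx.2]

lemma norm_sub_rk_le {x : H →L[ℂ] K} {v : K} {w : H} (hw : ‖w‖ = 1) (hx : x ∈ Face v w) :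
    ‖x - rk v w‖ ≤ 1 := by
  refine ContinuousLinearMap.opNorm_le_bound _ zero_le_one fun h => ?_
  have e : (x - rk v w) h = x (h - inner ℂ w h • w) := by simp [rk, hx.2]
  rw [e, one_mul]
  exact (norm_apply_le_of_contraction hx.1 _).trans (norm_sub_smul_le hw h)

/-- Every norm one operator is close to an operator in some face. -/
lemma exists_mem_Face_near [CompleteSpace H] [CompleteSpace K] {x : H →L[ℂ] K} (hx : ‖x‖ = 1)
    {ε : ℝ} (hε : 0 < ε) :
    ∃ (v : K) (w : H) (x' : H →L[ℂ] K), ‖v‖ = 1 ∧ ‖w‖ = 1 ∧ x' ∈ Face v w ∧ ‖x - x'‖ ≤ ε := by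
  obtain ⟨δ, hδ⟩ : ∃ δ, δ = min (1 / 2) (ε ^ 2 / 2) := ⟨_, rfl⟩
  have hδ0 : 0 < δ := by rw [hδ]; positivity
  have hδ1 : δ ≤ 1 / 2 := by rw [hδ]; exact min_le_left _ _
  have hδ2 : δ ≤ ε ^ 2 / 2 := by rw [hδ]; exact min_le_right _ _
  obtain ⟨u, hu, hu'⟩ := ContinuousLinearMap.exists_lt_apply_of_lt_opNorm x
    (show 1 - δ < ‖x‖ by rw [hx]; linarith)
  have hu0 : 0 < ‖u‖ := by
    have := norm_apply_le_of_contraction hx.le u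
    linarith
  obtain ⟨w, hwdef⟩ : ∃ w : H, w = ((‖u‖⁻¹ : ℝ) : ℂ) • u := ⟨_, rfl⟩
  have hw : ‖w‖ = 1 := by
    rw [hwdef, norm_smul]; simp [hu0.ne']
  have hxw : 1 - δ < ‖x w‖ := by
    rw [hwdef, map_smul, norm_smul]
    have : 1 ≤ ‖u‖⁻¹ := (one_le_inv₀ hu0).2 hu.le
    simp only [Complex.norm_real, norm_inv, norm_norm]
    nlinarith [norm_nonneg (x u)]
  have hc0 : 0 < ‖x w‖ := by linarith
  obtain ⟨v, hvdef⟩ : ∃ v : K, v = ((‖x w‖⁻¹ : ℝ) : ℂ) • x w := ⟨_, rfl⟩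
  have hv : ‖v‖ = 1 := by
    rw [hvdef, norm_smul]; simp [hc0.ne']
  have hxwv : x w = (‖x w‖ : ℂ) • v := by
    rw [hvdef, smul_smul, ← Complex.ofReal_mul, mul_inv_cancel₀ hc0.ne']; simp
  obtain ⟨y, hy, hyn, hyapp⟩ := exists_compression hv hw x
  refine ⟨v, w, rk v w + y, hv, hw, rk_add_mem_Face hv hw hy (hyn.trans hx.le), ?_⟩
  obtain ⟨a, ha⟩ : ∃ a, a = ContinuousLinearMap.adjoint x v := ⟨_, rfl⟩
  have e : x - (rk v w + y) = rk v (a - w) := by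
    ext h
    have h2 : inner ℂ v (x w) = ‖x w‖ := by
      conv_lhs => rw [hxwv]
      rw [inner_smul_right, inner_self_one hv, mul_one]
    have h1 : x (h - inner ℂ w h • w) = x h - (inner ℂ w h * ‖x w‖) • v := by
      rw [map_sub, map_smul, mul_smul, ← hxwv]
    simp only [sub_apply, add_apply, hyapp, rk,
      InnerProductSpace.rankOne_apply, h1, ha, inner_sub_left, inner_sub_right,
      ContinuousLinearMap.adjoint_inner_left, inner_smul_right, inner_self_one hv]
    module
  have hrn : ‖rk v (a - w)‖ = ‖a - w‖ := by rw [rk, InnerProductSpace.norm_rankOne, hv, one_mul]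
  rw [e, hrn]
  have han : ‖a‖ ≤ 1 := by
    have hn : ‖ContinuousLinearMap.adjoint x‖ ≤ 1 := by simp [hx]
    rw [ha]
    exact (norm_apply_le_of_contraction hn v).trans hv.le
  have h3 : inner ℂ a w = (‖x w‖ : ℂ) := by
    rw [ha, ContinuousLinearMap.adjoint_inner_left]
    conv_lhs => rw [hxwv]
    rw [inner_smul_right, inner_self_one hv, mul_one]
  have h4 := @norm_sub_sq ℂ _ _ _ _ a w
  rw [h3, hw] at h4
  simp only [RCLike.re_to_complex, Complex.ofReal_re] at h4
  refine abs_le_of_sq_le_sq' ?_ hε.le |>.2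
  nlinarith [norm_nonneg a]

lemma exists_unit_orthogonal {E : Type*} [NormedAddCommGroup E] [InnerProductSpace ℂ E]
    (hE : 3 ≤ Module.rank ℂ E) (a b : E) :
    ∃ u : E, ‖u‖ = 1 ∧ inner ℂ a u = 0 ∧ inner ℂ b u = 0 := by
  classical
  let U : Submodule ℂ E := Submodule.span ℂ (({a, b} : Finset E) : Set E)
  have hU : Uᗮ ≠ ⊥ := by
    intro hbot
    have hfin : FiniteDimensional ℂ U := FiniteDimensional.span_finset ℂ _
    have htop : U = ⊤ := Submodule.orthogonal_eq_bot_iff.1 hbot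
    have h1 : Module.rank ℂ U ≤ 2 := by
      refine (rank_span_finset_le ({a, b} : Finset E)).trans ?_
      exact_mod_cast Finset.card_le_two
    rw [htop, rank_top] at h1
    have := hE.trans h1
    norm_num at this
  obtain ⟨u, hu, hu0⟩ := Submodule.exists_mem_ne_zero_of_ne_bot hU
  have hn : ‖u‖ ≠ 0 := norm_ne_zero_iff.2 hu0
  have ha : inner ℂ a u = 0 := (Submodule.mem_orthogonal U u).1 hu a
    (Submodule.subset_span (by simp))
  have hb : inner ℂ b u = 0 := (Submodule.mem_orthogonal U u).1 hu b
    (Submodule.subset_span (by simp))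
  refine ⟨((‖u‖⁻¹ : ℝ) : ℂ) • u, ?_, ?_, ?_⟩
  · rw [norm_smul]; simp [hn]
  · rw [inner_smul_right, ha, mul_zero]
  · rw [inner_smul_right, hb, mul_zero]

/-- A unitary reflection carrying one unit vector to another. -/
lemma exists_reflection {a b : K} (ha : ‖a‖ = 1) (hb : ‖b‖ = 1) :
    ∃ R : K →ₗᵢ[ℂ] K, R a = b ∧ ∀ k, inner ℂ a k = 0 → inner ℂ b k = 0 → R k = k := by
  by_cases hab : a = b
  · exact ⟨LinearIsometry.id, by simp [hab], fun k _ _ => rfl⟩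
  obtain ⟨d, hd⟩ : ∃ d, d = a - b := ⟨_, rfl⟩
  obtain ⟨c, hc⟩ : ∃ c : ℂ, c = inner ℂ d a := ⟨_, rfl⟩
  have hd0 : d ≠ 0 := by rw [hd]; exact sub_ne_zero.2 hab
  have hdd : (inner ℂ d d : ℂ) = c + starRingEnd ℂ c := by
    have h1 : (inner ℂ d b : ℂ) = - starRingEnd ℂ c := by
      rw [hc, hd, inner_conj_symm, inner_sub_left, inner_sub_right, inner_self_one ha,
        inner_self_one hb]
      ring
    have h2 : (inner ℂ d d : ℂ) = inner ℂ d a - inner ℂ d b := by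
      rw [← inner_sub_right, ← hd]
    rw [h2, h1, ← hc]; ring
  have hdd0 : (inner ℂ d d : ℂ) ≠ 0 := inner_self_ne_zero.2 hd0
  have hc0 : c ≠ 0 := by
    intro h
    rw [hdd, h] at hdd0
    simp at hdd0
  have hcc0 : starRingEnd ℂ c ≠ 0 := (map_ne_zero _).2 hc0
  let L : K →ₗ[ℂ] K := LinearMap.id - c⁻¹ • (rk d d : K →L[ℂ] K).toLinearMap
  have hL : ∀ x, L x = x - (c⁻¹ * inner ℂ d x) • d := by
    intro x; simp [L, rk, smul_smul]
  refine ⟨L.isometryOfInner fun x y => ?_, ?_, fun k hk hk' => ?_⟩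
  · rw [hL, hL]
    simp only [inner_sub_left, inner_sub_right, inner_smul_left, inner_smul_right, hdd, map_mul,
      map_inv₀, inner_conj_symm]
    field_simp
    ring
  · change L a = b
    rw [hL, ← hc, inv_mul_cancel₀ hc0, one_smul, hd]; abel
  · change L k = k
    have : inner ℂ d k = 0 := by rw [hd, inner_sub_left, hk, hk', sub_zero]
    rw [hL, this]; simp

/-- Isometries can be prescribed on orthonormal pairs. -/
lemma exists_isometry_of_pairs (J : H →ₗᵢ[ℂ] K) {w₁ w₂ : H} {v₁ v₂ : K} (hw₁ : ‖w₁‖ = 1)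
    (hw₂ : ‖w₂‖ = 1) (hw : inner ℂ w₁ w₂ = 0) (hv₁ : ‖v₁‖ = 1) (hv₂ : ‖v₂‖ = 1)
    (hv : inner ℂ v₁ v₂ = 0) : ∃ V : H →ₗᵢ[ℂ] K, V w₁ = v₁ ∧ V w₂ = v₂ := by
  obtain ⟨R, hR, -⟩ := exists_reflection (a := J w₁) (b := v₁) (by simp [hw₁]) hv₁
  obtain ⟨R', hR', hfix⟩ := exists_reflection (a := R (J w₂)) (b := v₂) (by simp [hw₂]) hv₂
  refine ⟨R'.comp (R.comp J), ?_, by simpa using hR'⟩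
  have h1 : inner ℂ (R (J w₂)) v₁ = 0 := by
    rw [← hR, LinearIsometry.inner_map_map, LinearIsometry.inner_map_map, inner_eq_zero_symm, hw]
  have h2 := hfix v₁ h1 (inner_eq_zero_symm.1 hv)
  simp [hR, h2]

lemma exists_isometry_of_unit (J : H →ₗᵢ[ℂ] K) {w : H} {v : K} (hw : ‖w‖ = 1) (hv : ‖v‖ = 1) :
    ∃ V : H →ₗᵢ[ℂ] K, V w = v := by
  obtain ⟨R, hR, -⟩ := exists_reflection (a := J w) (b := v) (by simp [hw]) hv
  exact ⟨R.comp J, by simpa using hR⟩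

set_option maxHeartbeats 1000000 in
/-- First order estimate for the norm near a rank one operator. -/
lemma norm_half_rk_sub_le {g : H →L[ℂ] K} (hg : ‖g‖ ≤ 1) {v : K} {w : H} (hv : ‖v‖ = 1)
    (hw : ‖w‖ = 1) {t : ℝ} (ht : 0 ≤ t) (ht' : t ≤ 1 / 2) :
    ‖rk v w - t • g‖ ≤ 1 - t * (inner ℂ v (g w)).re + 3 * t ^ 2 := by
  by_contra! hlt
  obtain ⟨h, hh, hM⟩ := ContinuousLinearMap.exists_lt_apply_of_lt_opNorm _ hlt
  set z := (rk v w - t • g) h with hz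
  set a := inner ℂ v (g w) with ha
  have han : ‖a‖ ≤ 1 := by
    refine (norm_inner_le_norm _ _).trans ?_
    have := norm_apply_le_of_contraction hg w
    rw [hv, one_mul]; linarith
  have hare : |a.re| ≤ 1 := (Complex.abs_re_le_norm a).trans han
  have hM0 : 0 < ‖z‖ := by
    have := (abs_le.1 hare).2
    nlinarith
  obtain ⟨k, hk⟩ : ∃ k : K, k = ((‖z‖⁻¹ : ℝ) : ℂ) • z := ⟨_, rfl⟩
  have hkn : ‖k‖ = 1 := by rw [hk, norm_smul]; simp [hM0.ne']
  have hkz : ‖(inner ℂ k z : ℂ)‖ = ‖z‖ := by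
    rw [hk, inner_smul_left, inner_self_eq_norm_sq_to_K, norm_mul]
    simp
    field_simp
  set α := inner ℂ w h with hα
  set β := inner ℂ v k with hβ
  have hs1 := norm_sq_split hw h
  have hs2 := norm_sq_split hv k
  set h' := h - α • w with hh'
  set k' := k - β • v with hk'
  have hzz : z = α • v - (t : ℂ) • g h := by simp [hz, rk, hα]
  have hkv : inner ℂ k v = starRingEnd ℂ β := by rw [hβ, inner_conj_symm]
  have hgh : g h = α • g w + g h' := by simp [hh']
  have e : (inner ℂ k z : ℂ) = (starRingEnd ℂ β * α) * (1 - t * a)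
      - t * (starRingEnd ℂ β * inner ℂ v (g h') + inner ℂ k' (g h)) := by
    have hkk : k = β • v + k' := by simp [hk']
    have e1 : (inner ℂ k (g h) : ℂ) = starRingEnd ℂ β * (α * a + inner ℂ v (g h'))
        + inner ℂ k' (g h) := by
      conv_lhs => rw [hkk, inner_add_left, inner_smul_left]
      congr 2
      rw [hgh, inner_add_right, inner_smul_right]
    rw [hzz, inner_sub_right, inner_smul_right, inner_smul_right, hkv, e1]
    ring
  have n1 : ‖(inner ℂ v (g h') : ℂ)‖ ≤ ‖h'‖ := by
    refine (norm_inner_le_norm _ _).trans ?_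
    rw [hv, one_mul]; exact norm_apply_le_of_contraction hg h'
  have n2 : ‖(inner ℂ k' (g h) : ℂ)‖ ≤ ‖k'‖ := by
    refine (norm_inner_le_norm _ _).trans ?_
    have := norm_apply_le_of_contraction hg h
    nlinarith [norm_nonneg k', norm_nonneg (g h)]
  have hα1 : ‖α‖ ≤ 1 := by nlinarith [norm_nonneg α, norm_nonneg h, sq_nonneg ‖h'‖]
  have hβ1 : ‖β‖ ≤ 1 := by nlinarith [norm_nonneg β, sq_nonneg ‖k'‖]
  set A := ‖(1 - t * a : ℂ)‖ with hA
  have hAsq : A ^ 2 = 1 - 2 * t * a.re + t ^ 2 * ‖a‖ ^ 2 := by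
    rw [hA, ← Complex.normSq_eq_norm_sq, ← Complex.normSq_eq_norm_sq, Complex.normSq_apply,
      Complex.normSq_apply]
    simp
    ring
  have hA0 : 0 ≤ A := norm_nonneg _
  have hAle : A ≤ 1 - t * a.re + t ^ 2 / 2 := by
    refine abs_le_of_sq_le_sq' ?_ ?_ |>.2
    · have h1 : ‖a‖ ^ 2 ≤ 1 := by nlinarith [norm_nonneg a]
      have h2 : t ^ 2 * ‖a‖ ^ 2 ≤ t ^ 2 * 1 := mul_le_mul_of_nonneg_left h1 (sq_nonneg t)
      rw [hAsq]
      linarith [sq_nonneg (t * a.re - t ^ 2 / 2), show (1 - t * a.re + t ^ 2 / 2) ^ 2 =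
        1 - 2 * t * a.re + t ^ 2 * 1 + (t * a.re - t ^ 2 / 2) ^ 2 by ring]
    · linarith [mul_le_mul_of_nonneg_left (abs_le.1 hare).2 ht, sq_nonneg t]
  have hAge : 1 / 2 ≤ A := by
    have h1 : ‖(1 : ℂ)‖ ≤ ‖(1 - t * a : ℂ)‖ + ‖(t * a : ℂ)‖ := by
      simpa using norm_add_le (1 - t * a : ℂ) (t * a : ℂ)
    rw [norm_mul, Complex.norm_real, Real.norm_of_nonneg ht, norm_one] at h1
    linarith [mul_le_mul_of_nonneg_left han ht]
  have n3 : ‖z‖ ≤ ‖β‖ * ‖α‖ * A + t * (‖h'‖ + ‖k'‖) := by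
    rw [← hkz, e]
    refine (norm_sub_le _ _).trans ?_
    rw [norm_mul, norm_mul, norm_mul (t : ℂ), Complex.norm_real, Real.norm_of_nonneg ht,
      RCLike.norm_conj]
    gcongr
    refine (norm_add_le _ _).trans ?_
    rw [norm_mul, RCLike.norm_conj]
    linarith [mul_le_mul hβ1 n1 (norm_nonneg _) zero_le_one]
  have hab : ‖β‖ * ‖α‖ ≤ 1 - (‖h'‖ ^ 2 + ‖k'‖ ^ 2) / 2 := by
    rw [hkn] at hs2
    have : ‖h‖ ^ 2 ≤ 1 := by nlinarith [norm_nonneg h]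
    linarith [sq_nonneg (‖β‖ - ‖α‖),
      show (‖β‖ - ‖α‖) ^ 2 = ‖β‖ ^ 2 - 2 * (‖β‖ * ‖α‖) + ‖α‖ ^ 2 by ring]
  have n4 : ‖β‖ * ‖α‖ * A ≤ (1 - (‖h'‖ ^ 2 + ‖k'‖ ^ 2) / 2) * A :=
    mul_le_mul_of_nonneg_right hab hA0
  have n5 : (‖h'‖ ^ 2 + ‖k'‖ ^ 2) / 2 * (1 / 2) ≤ (‖h'‖ ^ 2 + ‖k'‖ ^ 2) / 2 * A :=
    mul_le_mul_of_nonneg_left hAge (by positivity)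
  linarith [sq_nonneg t, sq_nonneg (‖h'‖ - 2 * t), sq_nonneg (‖k'‖ - 2 * t),
    show (‖h'‖ - 2 * t) ^ 2 = ‖h'‖ ^ 2 - 4 * (t * ‖h'‖) + 4 * t ^ 2 by ring,
    show (‖k'‖ - 2 * t) ^ 2 = ‖k'‖ ^ 2 - 4 * (t * ‖k'‖) + 4 * t ^ 2 by ring]

end Hilbert

section Averages

variable {H K : Type*} [NormedAddCommGroup H] [InnerProductSpace ℂ H] [CompleteSpace H]
  [NormedAddCommGroup K] [InnerProductSpace ℂ K] [CompleteSpace K]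

/-- A contraction plus an isometry, when bounded below, is a sum of two isometries. -/
lemma exists_isometries_add_eq {x V : H →L[ℂ] K} (hx : ‖x‖ ≤ 1) (hV : ∀ h, ‖V h‖ = ‖h‖) {c : ℝ}
    (hc : 0 < c) (hb : ∀ h, c * ‖h‖ ≤ ‖(x + V) h‖) :
    ∃ V₁ V₂ : H →L[ℂ] K, (∀ h, ‖V₁ h‖ = ‖h‖) ∧ (∀ h, ‖V₂ h‖ = ‖h‖) ∧ x + V = V₁ + V₂ := by
  obtain ⟨y, hy⟩ : ∃ y : H →L[ℂ] K, y = (1 / 2 : ℂ) • (x + V) := ⟨_, rfl⟩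
  have hyapp : ∀ h, ‖y h‖ = 1 / 2 * ‖(x + V) h‖ := by
    intro h
    rw [hy, smul_apply, norm_smul]
    norm_num
  have hyn : ‖y‖ ≤ 1 := by
    refine ContinuousLinearMap.opNorm_le_bound _ zero_le_one fun h => ?_
    rw [hyapp, one_mul]
    have h1 := norm_add_le (x h) (V h)
    rw [hV] at h1
    have h2 := norm_apply_le_of_contraction hx h
    rw [add_apply]
    linarith
  obtain ⟨a, ha⟩ : ∃ a : H →L[ℂ] H, a = ContinuousLinearMap.adjoint y ∘L y := ⟨_, rfl⟩
  have ha0 : 0 ≤ a := by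
    rw [ContinuousLinearMap.nonneg_iff_isPositive, ha]
    exact ContinuousLinearMap.isPositive_adjoint_comp_self y
  have hain : ∀ h, (inner ℂ (a h) h : ℂ) = ((‖y h‖ ^ 2 : ℝ) : ℂ) := by
    intro h
    rw [ha, ContinuousLinearMap.comp_apply, ContinuousLinearMap.adjoint_inner_left,
      inner_self_eq_norm_sq_to_K]
    simp
  have hau : IsUnit a := by
    refine ContinuousLinearMap.isUnit_of_forall_le_norm_inner_map a
      (c := Real.toNNReal ((c / 2) ^ 2)) (by rw [Real.toNNReal_pos]; positivity) fun h => ?_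
    rw [Real.coe_toNNReal _ (by positivity), hain, Complex.norm_real,
      Real.norm_of_nonneg (by positivity), hyapp]
    have := hb h
    have h3 : c / 2 * ‖h‖ ≤ 1 / 2 * ‖(x + V) h‖ := by linarith
    calc ‖h‖ ^ 2 * (c / 2) ^ 2 = (c / 2 * ‖h‖) ^ 2 := by ring
      _ ≤ _ := by gcongr
  obtain ⟨S, hS⟩ : ∃ S : H →L[ℂ] H, S = CFC.sqrt a := ⟨_, rfl⟩
  have hSS : S * S = a := by rw [hS]; exact CFC.sqrt_mul_sqrt_self a ha0
  have hSsa : IsSelfAdjoint S := by rw [hS]; exact IsSelfAdjoint.of_nonneg (CFC.sqrt_nonneg a)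
  have hSy : ∀ h, ‖y h‖ = ‖S h‖ := by
    intro h
    have h1 : (inner ℂ (a h) h : ℂ) = ((‖S h‖ ^ 2 : ℝ) : ℂ) := by
      rw [← hSS, mul_apply_eq_comp]
      have h2 := ContinuousLinearMap.adjoint_inner_left S h (S h)
      rw [← ContinuousLinearMap.star_eq_adjoint, hSsa.star_eq] at h2
      rw [h2, inner_self_eq_norm_sq_to_K]
      simp
    rw [hain] at h1
    have h2 : ‖y h‖ ^ 2 = ‖S h‖ ^ 2 := by exact_mod_cast h1
    exact (sq_eq_sq₀ (norm_nonneg _) (norm_nonneg _)).1 h2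
  have hSn : ‖S‖ ≤ 1 := by
    refine ContinuousLinearMap.opNorm_le_bound _ zero_le_one fun h => ?_
    rw [← hSy, one_mul]
    exact norm_apply_le_of_contraction hyn h
  have hSu : IsUnit S := by
    have hcomm : Commute S S := Commute.refl S
    exact (hcomm.isUnit_mul_iff.1 (hSS ▸ hau)).1
  obtain ⟨u, hu⟩ := hSu
  obtain ⟨T, hT⟩ : ∃ T : H →L[ℂ] H, T = ((u⁻¹ : (H →L[ℂ] H)ˣ) : H →L[ℂ] H) := ⟨_, rfl⟩
  have hST : S * T = 1 := by rw [hT, ← hu]; exact u.mul_inv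
  have hTS : T * S = 1 := by rw [hT, ← hu]; exact u.inv_mul
  have hyT : ∀ k, ‖y (T k)‖ = ‖k‖ := by
    intro k
    rw [hSy, ← mul_apply_eq_comp, hST, one_apply_eq_self]
  obtain ⟨g, hg⟩ : ∃ g : H →L[ℂ] H, g = S + Complex.I • CFC.sqrt (1 - S ^ 2) := ⟨_, rfl⟩
  have hgu : g ∈ unitary (H →L[ℂ] H) := by
    rw [hg]
    exact IsSelfAdjoint.self_add_I_smul_cfcSqrt_sub_sq_mem_unitary S hSsa hSn
  have hgs : star g = S - Complex.I • CFC.sqrt (1 - S ^ 2) := by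
    have hR : star (CFC.sqrt (1 - S ^ 2)) = CFC.sqrt (1 - S ^ 2) :=
      (IsSelfAdjoint.of_nonneg (CFC.sqrt_nonneg (1 - S ^ 2))).star_eq
    rw [hg, star_add, star_smul, hSsa.star_eq, hR]
    simp [sub_eq_add_neg]
  refine ⟨y ∘L (T ∘L g), y ∘L (T ∘L star g), fun h => ?_, fun h => ?_, ?_⟩
  · rw [ContinuousLinearMap.comp_apply, ContinuousLinearMap.comp_apply, hyT]
    exact ContinuousLinearMap.norm_map_of_mem_unitary hgu h
  · rw [ContinuousLinearMap.comp_apply, ContinuousLinearMap.comp_apply, hyT]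
    exact ContinuousLinearMap.norm_map_of_mem_unitary (Unitary.star_mem hgu) h
  · have h1 : g + star g = (2 : ℂ) • S := by rw [hgs, hg]; module
    have h2 : T ∘L S = ContinuousLinearMap.id ℂ H := hTS
    rw [← ContinuousLinearMap.comp_add, ← ContinuousLinearMap.comp_add, h1,
      ContinuousLinearMap.comp_smul, h2, ContinuousLinearMap.comp_smul,
      ContinuousLinearMap.comp_id, hy, smul_smul]
    norm_num

omit [CompleteSpace H] [CompleteSpace K] in
lemma norm_le_one_of_isometric {V : H →L[ℂ] K} (hV : ∀ h, ‖V h‖ = ‖h‖) : ‖V‖ ≤ 1 :=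
  V.opNorm_le_bound zero_le_one fun h => by rw [hV, one_mul]

lemma exists_isometries_add_eq_of_mem_Face {x V : H →L[ℂ] K} {v : K} {w : H} (hv : ‖v‖ = 1)
    (hw : ‖w‖ = 1) (hx : x ∈ Face v w) (hx1 : ‖x - rk v w‖ < 1) (hV : ∀ h, ‖V h‖ = ‖h‖)
    (hVw : V w = v) :
    ∃ V₁ V₂ : H →L[ℂ] K, ((∀ h, ‖V₁ h‖ = ‖h‖) ∧ V₁ w = v) ∧ ((∀ h, ‖V₂ h‖ = ‖h‖) ∧ V₂ w = v) ∧
      x + V = V₁ + V₂ := by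
  obtain ⟨ρ, hρ⟩ : ∃ ρ, ρ = ‖x - rk v w‖ := ⟨_, rfl⟩
  have hρ0 : 0 ≤ ρ := hρ ▸ norm_nonneg _
  have hρ1 : ρ < 1 := hρ ▸ hx1
  have hVF : V ∈ Face v w := ⟨norm_le_one_of_isometric hV, hVw⟩
  have hxc := sub_rk_mem_Corner hv hw hx
  have hVc := sub_rk_mem_Corner hv hw hVF
  have hb : ∀ h, (1 - ρ) * ‖h‖ ≤ ‖(x + V) h‖ := by
    intro h
    set α := inner ℂ w h with hα
    have hsplit := norm_sq_split hw h
    set h' := h - α • w with hh'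
    have hwh' : inner ℂ w h' = 0 := by
      rw [hh', inner_sub_right, inner_smul_right, inner_self_one hw, mul_one, sub_self]
    have e1 : x h' = (x - rk v w) h' := by simp [rk, hwh']
    have e2 : V h' = (V - rk v w) h' := by simp [rk, hwh']
    have hin : inner ℂ v (x h' + V h') = 0 := by
      rw [inner_add_right, e1, e2, hxc.2, hVc.2, add_zero]
    have e3 : (x + V) h = (2 * α) • v + (x h' + V h') := by
      simp only [hh', map_sub, map_smul, hx.2, hVw, add_apply]
      module
    have h1 := norm_sq_add_smul hv (2 * α) hin
    have h2 : (1 - ρ) * ‖h'‖ ≤ ‖x h' + V h'‖ := by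
      have h3 : ‖x h'‖ ≤ ρ * ‖h'‖ := by rw [e1, hρ]; exact ContinuousLinearMap.le_opNorm _ _
      have h4 : ‖V h'‖ ≤ ‖x h' + V h'‖ + ‖x h'‖ := by
        have := norm_sub_le (x h' + V h') (x h')
        rwa [add_sub_cancel_left] at this
      rw [hV] at h4
      linarith
    have h5 : ((1 - ρ) * ‖h'‖) ^ 2 ≤ ‖x h' + V h'‖ ^ 2 :=
      pow_le_pow_left₀ (mul_nonneg (by linarith) (norm_nonneg _)) h2 2
    rw [e3]
    refine abs_le_of_sq_le_sq' ?_ (norm_nonneg _) |>.2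
    rw [h1, mul_pow, hsplit, norm_mul, mul_add]
    have h6 : (1 - ρ) ^ 2 ≤ 1 := by nlinarith
    have h7 : (1 - ρ) ^ 2 * ‖α‖ ^ 2 ≤ 1 * ‖α‖ ^ 2 := by gcongr
    have h8 : ‖(2 : ℂ)‖ = 2 := by norm_num
    rw [h8]
    nlinarith [sq_nonneg ‖α‖]
  obtain ⟨V₁, V₂, h1, h2, h12⟩ := exists_isometries_add_eq hx.1 hV (by linarith) hb
  have hsum : V₁ w + V₂ w = (2 : ℂ) • v := by
    have := congrArg (fun z : H →L[ℂ] K => z w) h12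
    simp only [add_apply, hx.2, hVw] at this
    rw [← this, two_smul]
  have heq : V₁ w = V₂ w := by
    refine eq_of_two_le_norm_add (by rw [h1, hw]) (by rw [h2, hw]) ?_
    rw [hsum, norm_smul, hv]
    norm_num
  have hV2 : V₂ w = v := by
    rw [heq, ← two_smul ℂ] at hsum
    exact smul_right_injective K (two_ne_zero' ℂ) hsum
  exact ⟨V₁, V₂, ⟨h1, heq.trans hV2⟩, ⟨h2, hV2⟩, h12⟩

lemma exists_list_isometries {x V : H →L[ℂ] K} {v : K} {w : H} (hv : ‖v‖ = 1)
    (hw : ‖w‖ = 1) (hx : x ∈ Face v w) (hx1 : ‖x - rk v w‖ < 1) (hV : ∀ h, ‖V h‖ = ‖h‖)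
    (hVw : V w = v) (n : ℕ) :
    ∃ l : List (H →L[ℂ] K), l.length = n + 1 ∧ (∀ U ∈ l, (∀ h, ‖U h‖ = ‖h‖) ∧ U w = v) ∧
      n • x + V = l.sum := by
  induction n with
  | zero => exact ⟨[V], by simp, by simpa using ⟨hV, hVw⟩, by simp⟩
  | succ n ih =>
    obtain ⟨l, hl, hU, hsum⟩ := ih
    match l, hl, hU, hsum with
    | U :: t, hl, hU, hsum =>
      obtain ⟨hU0, ht⟩ := List.forall_mem_cons.1 hU
      obtain ⟨A, B, hA, hB, hAB⟩ :=
        exists_isometries_add_eq_of_mem_Face hv hw hx hx1 hU0.1 hU0.2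
      refine ⟨A :: B :: t, by simpa using hl, ?_, ?_⟩
      · exact List.forall_mem_cons.2 ⟨hA, List.forall_mem_cons.2 ⟨hB, ht⟩⟩
      · rw [List.sum_cons] at hsum
        rw [List.sum_cons, List.sum_cons, succ_nsmul, add_right_comm, hsum, ← add_assoc A, ← hAB]
        abel

/-- The interior points of a face are averages of isometries. -/
lemma exists_average_isometries {x V : H →L[ℂ] K} {v : K} {w : H} (hv : ‖v‖ = 1)
    (hw : ‖w‖ = 1) (hx : x ∈ Corner v w) (hx1 : ‖x‖ < 1) (hV : ∀ h, ‖V h‖ = ‖h‖)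
    (hVw : V w = v) :
    ∃ l : List (H →L[ℂ] K), l ≠ [] ∧ (∀ U ∈ l, (∀ h, ‖U h‖ = ‖h‖) ∧ U w = v) ∧
      (l.length : ℝ) • (rk v w + x) = l.sum := by
  have hVF : V ∈ Face v w := ⟨norm_le_one_of_isometric hV, hVw⟩
  obtain ⟨n, hn⟩ := exists_nat_gt ((‖x‖ + 1) / (1 - ‖x‖))
  rw [div_lt_iff₀ (by linarith)] at hn
  have hn0 : (0 : ℝ) < n := by
    by_contra! h
    nlinarith [norm_nonneg x]
  obtain ⟨y, hy⟩ : ∃ y : H →L[ℂ] K, y = (n : ℝ)⁻¹ • (((n : ℝ) + 1) • x - (V - rk v w)) := ⟨_, rfl⟩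
  have hyc : y ∈ Corner v w := by
    rw [hy]
    exact real_smul_mem_Corner ((Corner v w).sub_mem (real_smul_mem_Corner hx _)
      (sub_rk_mem_Corner hv hw hVF)) _
  have hyn : ‖y‖ < 1 := by
    rw [hy, norm_smul, norm_inv, Real.norm_of_nonneg hn0.le, inv_mul_lt_iff₀ hn0, mul_one]
    refine (norm_sub_le _ _).trans_lt ?_
    rw [norm_smul, Real.norm_of_nonneg (by positivity)]
    have := norm_sub_rk_le hw hVF
    linarith
  obtain ⟨l, hl, hU, hsum⟩ := exists_list_isometries hv hw (rk_add_mem_Face hv hw hyc hyn.le)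
    (by rwa [add_sub_cancel_left]) hV hVw n
  refine ⟨l, by rintro rfl; simp at hl, hU, ?_⟩
  rw [← hsum, hl, ← Nat.cast_smul_eq_nsmul ℝ, smul_add (n : ℝ), hy, smul_inv_smul₀ hn0.ne']
  push_cast
  module

end Averages

/-- A surjective isometry between unit spheres, as a map between the ambient spaces. -/
structure IsSphereIsometry {X Y : Type*} [NormedAddCommGroup X] [NormedAddCommGroup Y]
    (Δ : X → Y) : Prop where
  norm_map : ∀ x, ‖x‖ = 1 → ‖Δ x‖ = 1
  surj : ∀ y, ‖y‖ = 1 → ∃ x, ‖x‖ = 1 ∧ Δ x = y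
  iso : ∀ x y, ‖x‖ = 1 → ‖y‖ = 1 → ‖Δ x - Δ y‖ = ‖x - y‖

/-- A functional norming the image of the face determined by `v` and `w`. -/
structure Supports {H K Y : Type*} [NormedAddCommGroup H] [InnerProductSpace ℂ H]
    [NormedAddCommGroup K] [InnerProductSpace ℂ K] [NormedAddCommGroup Y] [NormedSpace ℝ Y]
    (Δ : (H →L[ℂ] K) → Y) (v : K) (w : H) (ψ : Y →L[ℝ] ℝ) : Prop where
  abs_le : ∀ y, |ψ y| ≤ ‖y‖
  eq_one : ∀ x : H →L[ℂ] K, ‖x‖ ≤ 1 → x w = v → ψ (Δ x) = 1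
  eq_neg_one : ∀ x : H →L[ℂ] K, ‖x‖ ≤ 1 → x w = -v → ψ (Δ x) = -1

section Faces

variable {H K Y : Type*} [NormedAddCommGroup H] [InnerProductSpace ℂ H]
  [NormedAddCommGroup K] [InnerProductSpace ℂ K] [NormedAddCommGroup Y] [NormedSpace ℝ Y]
  {Δ : (H →L[ℂ] K) → Y}

lemma norm_eq_one_of_mem_Face {x : H →L[ℂ] K} {v : K} {w : H} (hv : ‖v‖ = 1) (hw : ‖w‖ = 1)
    (hx : x ∈ Face v w) : ‖x‖ = 1 :=
  norm_eq_one_of_apply hx.1 hw (by rw [hx.2, hv])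

lemma norm_sub_eq_two {x x' : H →L[ℂ] K} {v : K} {w : H} (hv : ‖v‖ = 1) (hw : ‖w‖ = 1)
    (hx : ‖x‖ ≤ 1) (hx' : ‖x'‖ ≤ 1) (h : x w = v) (h' : x' w = -v) : ‖x - x'‖ = 2 := by
  refine le_antisymm ((norm_sub_le _ _).trans (by linarith)) ?_
  have h1 := (x - x').le_opNorm w
  have e : (x - x') w = (2 : ℂ) • v := by rw [sub_apply, h, h', two_smul, sub_neg_eq_add]
  rw [e, norm_smul, hv, hw] at h1
  simpa using h1

lemma IsSphereIsometry.exists_face_antipode (hΔ : IsSphereIsometry Δ) {v : K} {w : H}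
    (hv : ‖v‖ = 1) (hw : ‖w‖ = 1) : ∃ q ∈ Face v w, Δ q = -Δ (-rk v w) := by
  have he : ‖-rk v w‖ = 1 := by rw [norm_neg, InnerProductSpace.norm_rankOne, hv, hw, one_mul]
  obtain ⟨q, hq, hq'⟩ := hΔ.surj (-Δ (-rk v w)) (by rw [norm_neg]; exact hΔ.norm_map _ he)
  refine ⟨q, ⟨hq.le, ?_⟩, hq'⟩
  refine apply_eq_of_norm_add_rk hq.le hv hw ?_
  have e : -Δ (-rk v w) - Δ (-rk v w) = (-2 : ℝ) • Δ (-rk v w) := by module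
  rw [← sub_neg_eq_add, ← hΔ.iso q _ hq he, hq', e, norm_smul, hΔ.norm_map _ he]
  norm_num

/-- The map takes antipodal points in opposite faces to antipodal points in opposite faces. -/
lemma IsSphereIsometry.apply_eq_neg (hΔ : IsSphereIsometry Δ) {v : K} {w : H}
    (hv : ‖v‖ = 1) (hw : ‖w‖ = 1) {x x' : H →L[ℂ] K} (hx : x ∈ Face v w) (hx' : ‖x'‖ = 1)
    (h : Δ x' = -Δ x) : x' w = -v := by
  have hv' : ‖-v‖ = 1 := by rwa [norm_neg]
  have he : ‖rk v w‖ = 1 := by rw [InnerProductSpace.norm_rankOne, hv, hw, one_mul]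
  obtain ⟨q, hq, hq'⟩ := hΔ.exists_face_antipode hv' hw
  have hr : rk (-v) w = -rk v w := by rw [rk, map_neg, neg_apply]
  rw [hr, neg_neg] at hq'
  have hx1 := norm_eq_one_of_mem_Face hv hw hx
  have h1 := norm_sub_eq_two hv hw hx.1 hq.1 hx.2 hq.2
  rw [← hΔ.iso x q hx1 (norm_eq_one_of_mem_Face hv' hw hq), hq', sub_neg_eq_add] at h1
  refine apply_eq_of_norm_add_rk hx'.le hv' hw ?_
  rw [hr, ← sub_eq_add_neg, ← hΔ.iso x' _ hx' he, h, ← neg_add', norm_neg, h1]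

omit [NormedSpace ℝ Y] in
lemma IsSphereIsometry.mem_Face_of_norm (hΔ : IsSphereIsometry Δ) {v : K} {w : H}
    (hv : ‖v‖ = 1) (hw : ‖w‖ = 1) {x : H →L[ℂ] K} (hx : ‖x‖ = 1) :
    x ∈ Face v w ↔ ‖Δ x - Δ (-rk v w)‖ = 2 := by
  have he : ‖-rk v w‖ = 1 := by rw [norm_neg, InnerProductSpace.norm_rankOne, hv, hw, one_mul]
  rw [hΔ.iso x _ hx he, sub_neg_eq_add]
  exact ⟨fun h => norm_add_rk_eq_two h.1 hv hw h.2,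
    fun h => ⟨hx.le, apply_eq_of_norm_add_rk hx.le hv hw h⟩⟩

lemma IsSphereIsometry.norm_add_eq_two (hΔ : IsSphereIsometry Δ) {v : K} {w : H}
    (hv : ‖v‖ = 1) (hw : ‖w‖ = 1) {x y : H →L[ℂ] K} (hx : x ∈ Face v w) (hy : y ∈ Face v w) :
    ‖Δ x + Δ y‖ = 2 := by
  have hx1 := norm_eq_one_of_mem_Face hv hw hx
  have hy1 := norm_eq_one_of_mem_Face hv hw hy
  obtain ⟨y', hy', hy''⟩ := hΔ.surj (-Δ y) (by rw [norm_neg]; exact hΔ.norm_map _ hy1)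
  rw [← sub_neg_eq_add, ← hy'', hΔ.iso x y' hx1 hy']
  exact norm_sub_eq_two hv hw hx.1 hy'.le hx.2 (hΔ.apply_eq_neg hv hw hy hy' hy'')

/-- The image of a face is convex. -/
lemma IsSphereIsometry.exists_combination (hΔ : IsSphereIsometry Δ) {v : K} {w : H}
    (hv : ‖v‖ = 1) (hw : ‖w‖ = 1) {x y : H →L[ℂ] K} (hx : x ∈ Face v w) (hy : y ∈ Face v w)
    {s : ℝ} (hs : 0 ≤ s) (hs' : s ≤ 1) : ∃ z ∈ Face v w, Δ z = (1 - s) • Δ x + s • Δ y := by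
  obtain ⟨q, hq, hqe⟩ := hΔ.exists_face_antipode hv hw
  have hq1 := hΔ.norm_map q (norm_eq_one_of_mem_Face hv hw hq)
  have hmid : ∀ x ∈ Face v w, ∃ z ∈ Face v w, Δ z = (1 / 2 : ℝ) • (Δ x + Δ q) := by
    intro x hx
    have hx1 := hΔ.norm_map x (norm_eq_one_of_mem_Face hv hw hx)
    have h2 := hΔ.norm_add_eq_two hv hw hx hq
    obtain ⟨z, hz, hz'⟩ := hΔ.surj ((1 / 2 : ℝ) • (Δ x + Δ q)) (by rw [norm_smul, h2]; norm_num)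
    refine ⟨z, (hΔ.mem_Face_of_norm hv hw hz).2 ?_, hz'⟩
    rw [← neg_neg (Δ (-rk v w)), ← hqe, sub_neg_eq_add]
    refine le_antisymm ((norm_add_le _ _).trans ?_) ?_
    · rw [hΔ.norm_map z hz, hq1]; norm_num
    · have e : (2 : ℝ) • (Δ z + Δ q) = (3 : ℝ) • (Δ x + Δ q) - (2 : ℝ) • Δ x := by
        rw [hz']; module
      have h3 := norm_sub_norm_le ((3 : ℝ) • (Δ x + Δ q)) ((2 : ℝ) • Δ x)
      rw [← e, norm_smul, norm_smul, norm_smul, h2, hx1] at h3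
      norm_num at h3
      linarith
  have hx1 := hΔ.norm_map x (norm_eq_one_of_mem_Face hv hw hx)
  have hy1 := hΔ.norm_map y (norm_eq_one_of_mem_Face hv hw hy)
  obtain ⟨x', hx', hxe⟩ := hmid x hx
  obtain ⟨y', hy', hye⟩ := hmid y hy
  have h4 := hΔ.norm_add_eq_two hv hw hx' hy'
  obtain ⟨a, ha⟩ : ∃ a, a = (1 - s) • Δ x + s • Δ y := ⟨_, rfl⟩
  obtain ⟨b, hb⟩ : ∃ b, b = s • Δ x + (1 - s) • Δ y := ⟨_, rfl⟩
  have ha1 : ‖a‖ ≤ 1 := by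
    rw [ha]
    refine (norm_add_le _ _).trans ?_
    rw [norm_smul, norm_smul, hx1, hy1, Real.norm_of_nonneg hs,
      Real.norm_of_nonneg (by linarith : 0 ≤ 1 - s)]
    linarith
  have hb1 : ‖b‖ ≤ 1 := by
    rw [hb]
    refine (norm_add_le _ _).trans ?_
    rw [norm_smul, norm_smul, hx1, hy1, Real.norm_of_nonneg hs,
      Real.norm_of_nonneg (by linarith : 0 ≤ 1 - s)]
    linarith
  have h5 : (2 : ℝ) • (Δ x' + Δ y') = (a + Δ q) + (b + Δ q) := by
    rw [hxe, hye, ha, hb]; module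
  have h6 : (4 : ℝ) ≤ ‖a + Δ q‖ + ‖b + Δ q‖ := by
    have := norm_add_le (a + Δ q) (b + Δ q)
    rw [← h5, norm_smul, h4] at this
    norm_num at this
    linarith
  have h7 := norm_add_le a (Δ q)
  have h8 := norm_add_le b (Δ q)
  obtain ⟨z, hz, hza⟩ := hΔ.surj a (by linarith)
  refine ⟨z, (hΔ.mem_Face_of_norm hv hw hz).2 ?_, hza.trans ha⟩
  rw [← neg_neg (Δ (-rk v w)), ← hqe, sub_neg_eq_add, hza]
  linarith

lemma IsSphereIsometry.exists_supports (hΔ : IsSphereIsometry Δ) {v : K} {w : H}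
    (hv : ‖v‖ = 1) (hw : ‖w‖ = 1) : ∃ ψ, Supports Δ v w ψ := by
  have hconv : Convex ℝ (Δ '' Face v w) := by
    rintro _ ⟨x, hx, rfl⟩ _ ⟨y, hy, rfl⟩ a b ha hb hab
    obtain ⟨z, hz, hz'⟩ := hΔ.exists_combination hv hw hx hy hb (by linarith)
    exact ⟨z, hz, by rw [hz', ← hab, add_sub_cancel_right]⟩
  have hdisj : Disjoint (Metric.ball (0 : Y) 1) (Δ '' Face v w) := by
    rw [Set.disjoint_left]
    rintro _ hy ⟨x, hx, rfl⟩
    rw [mem_ball_zero_iff, hΔ.norm_map x (norm_eq_one_of_mem_Face hv hw hx)] at hy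
    exact lt_irrefl _ hy
  obtain ⟨φ, u, hφ, hφ'⟩ := geometric_hahn_banach_open (convex_ball (0 : Y) 1)
    Metric.isOpen_ball hconv hdisj
  have hu : 0 < u := by simpa using hφ 0 (by simp)
  have hle : ∀ y, φ y ≤ u * ‖y‖ := by
    intro y
    refine le_of_forall_pos_le_add fun ε hε => ?_
    obtain ⟨r, hr⟩ : ∃ r, r = ‖y‖ + ε / u := ⟨_, rfl⟩
    have hεu : 0 < ε / u := by positivity
    have hr0 : 0 < r := by rw [hr]; positivity
    have := hφ (r⁻¹ • y) (by
      rw [mem_ball_zero_iff, norm_smul, norm_inv, Real.norm_of_nonneg hr0.le,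
        inv_mul_lt_iff₀ hr0]
      linarith)
    rw [map_smul, smul_eq_mul, inv_mul_lt_iff₀ hr0, hr, add_mul, div_mul_cancel₀ _ hu.ne'] at this
    linarith
  have habs : ∀ y, |(u⁻¹ • φ) y| ≤ ‖y‖ := by
    intro y
    rw [smul_apply, smul_eq_mul, abs_mul, abs_of_pos (inv_pos.2 hu), inv_mul_le_iff₀ hu]
    refine abs_le.2 ⟨?_, hle y⟩
    have := hle (-y)
    rw [map_neg, norm_neg] at this
    linarith
  have hone : ∀ x : H →L[ℂ] K, ‖x‖ ≤ 1 → x w = v → (u⁻¹ • φ) (Δ x) = 1 := by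
    intro x hx hxw
    have hx1 := hΔ.norm_map x (norm_eq_one_of_mem_Face hv hw ⟨hx, hxw⟩)
    refine le_antisymm ((le_abs_self _).trans ((habs _).trans hx1.le)) ?_
    rw [smul_apply, smul_eq_mul, le_inv_mul_iff₀ hu, mul_one]
    exact hφ' _ ⟨x, ⟨hx, hxw⟩, rfl⟩
  refine ⟨u⁻¹ • φ, habs, hone, fun x hx hxw => ?_⟩
  have hv' : ‖-v‖ = 1 := by rwa [norm_neg]
  have hx1 := norm_eq_one_of_mem_Face hv' hw ⟨hx, hxw⟩
  obtain ⟨x', hx', hx''⟩ := hΔ.surj (-Δ x) (by rw [norm_neg]; exact hΔ.norm_map _ hx1)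
  have h1 := hone x' hx'.le (by rw [hΔ.apply_eq_neg hv' hw ⟨hx, hxw⟩ hx' hx'', neg_neg])
  rw [hx'', map_neg] at h1
  linarith

lemma IsSphereIsometry.apply_neg_isometry [Nontrivial H] (hΔ : IsSphereIsometry Δ)
    {V : H →L[ℂ] K} (hV : ∀ h, ‖V h‖ = ‖h‖) : Δ (-V) = -Δ V := by
  have hV1 : ‖V‖ = 1 := by
    obtain ⟨w, hw⟩ := exists_norm_eq H zero_le_one
    exact norm_eq_one_of_apply (norm_le_one_of_isometric hV) hw (by rw [hV, hw])
  obtain ⟨x, hx, hx'⟩ := hΔ.surj (-Δ V) (by rw [norm_neg]; exact hΔ.norm_map _ hV1)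
  have : x = -V := by
    ext h
    rcases eq_or_ne h 0 with rfl | hh
    · simp
    have hn : ‖h‖ ≠ 0 := norm_ne_zero_iff.2 hh
    obtain ⟨w, hw⟩ : ∃ w : H, w = ((‖h‖⁻¹ : ℝ) : ℂ) • h := ⟨_, rfl⟩
    have hw1 : ‖w‖ = 1 := by rw [hw, norm_smul]; simp [hn]
    have h1 := hΔ.apply_eq_neg (v := V w) (by rw [hV, hw1]) hw1 ⟨hV1.le, rfl⟩ hx hx'
    have hhw : h = (‖h‖ : ℂ) • w := by
      rw [hw, smul_smul, ← Complex.ofReal_mul, mul_inv_cancel₀ hn, Complex.ofReal_one, one_smul]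
    rw [hhw, map_smul, map_smul, h1, neg_apply]
  rw [← this, hx']

/-- Convex combinations of operators agreeing at a norming vector. -/
lemma IsSphereIsometry.exists_combination_of_agree (hΔ : IsSphereIsometry Δ) {x y : H →L[ℂ] K}
    (hx : ‖x‖ ≤ 1) (hy : ‖y‖ ≤ 1) {p : H} (hp : ‖p‖ = 1) (hxp : ‖x p‖ = 1) (hxy : x p = y p)
    {s : ℝ} (hs : 0 ≤ s) (hs' : s ≤ 1) :
    ∃ z : H →L[ℂ] K, ‖z‖ = 1 ∧ Δ z = (1 - s) • Δ x + s • Δ y ∧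
      ∀ h, x h = y h → ‖x h‖ = ‖h‖ → z h = x h := by
  obtain ⟨z, hz, hze⟩ := hΔ.exists_combination hxp hp ⟨hx, rfl⟩ ⟨hy, hxy.symm⟩ hs hs'
  have hz1 := norm_eq_one_of_mem_Face hxp hp hz
  refine ⟨z, hz1, hze, fun h hxh hxn => ?_⟩
  rcases eq_or_ne h 0 with rfl | hh
  · simp
  have hn : ‖h‖ ≠ 0 := norm_ne_zero_iff.2 hh
  obtain ⟨w, hw⟩ : ∃ w : H, w = ((‖h‖⁻¹ : ℝ) : ℂ) • h := ⟨_, rfl⟩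
  have hw1 : ‖w‖ = 1 := by rw [hw, norm_smul]; simp [hn]
  have hxw : ‖x w‖ = 1 := by rw [hw, map_smul, norm_smul, hxn]; simp [hn]
  have hxyw : y w = x w := by rw [hw, map_smul, map_smul, hxh]
  obtain ⟨z', hz', hze'⟩ := hΔ.exists_combination hxw hw1 ⟨hx, rfl⟩ ⟨hy, hxyw⟩ hs hs'
  have hzz : z = z' := by
    have h1 := hΔ.iso z z' hz1 (norm_eq_one_of_mem_Face hxw hw1 hz')
    rw [hze, hze', sub_self, norm_zero] at h1
    exact sub_eq_zero.1 (norm_eq_zero.1 h1.symm)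
  have hhw : h = (‖h‖ : ℂ) • w := by
    rw [hw, smul_smul, ← Complex.ofReal_mul, mul_inv_cancel₀ hn, Complex.ofReal_one, one_smul]
  rw [hhw, map_smul, map_smul, hzz, hz'.2]

/-- Affinity along segments whose difference is a multiple of a partial isometry. -/
lemma IsSphereIsometry.affine_of_split (hΔ : IsSphereIsometry Δ) {x y : H →L[ℂ] K}
    (hx : ‖x‖ ≤ 1) (hy : ‖y‖ ≤ 1) {p : H} (hp : ‖p‖ = 1) (hxp : ‖x p‖ = 1) (hxy : x p = y p)
    {t : ℝ} (hsplit : ∀ h, ∃ h₁ h₂, h = h₁ + h₂ ∧ x h₁ = y h₁ ∧ ‖x h₁‖ = ‖h₁‖ ∧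
      ‖x h₂ - y h₂‖ = t * ‖h₂‖ ∧ ‖h₂‖ ≤ ‖h‖) (ht : 0 ≤ t)
    {s : ℝ} (hs : 0 ≤ s) (hs' : s ≤ 1) :
    Δ ((1 - s) • x + s • y) = (1 - s) • Δ x + s • Δ y := by
  obtain ⟨z, hz, hze, hzfix⟩ := hΔ.exists_combination_of_agree hx hy hp hxp hxy hs hs'
  rw [← hze]
  congr 1
  have hx1 : ‖x‖ = 1 := norm_eq_one_of_apply hx hp hxp
  have hy1 : ‖y‖ = 1 := norm_eq_one_of_apply hy hp (by rw [← hxy, hxp])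
  have hd : ‖x - y‖ ≤ t := by
    refine ContinuousLinearMap.opNorm_le_bound _ ht fun h => ?_
    obtain ⟨h₁, h₂, rfl, h1, -, h2, h3⟩ := hsplit h
    rw [sub_apply, map_add, map_add, h1, add_sub_add_left_eq_sub, h2]
    gcongr
  have hxz : ‖x - z‖ ≤ s * t := by
    rw [← hΔ.iso x z hx1 hz, hze]
    have e : Δ x - ((1 - s) • Δ x + s • Δ y) = s • (Δ x - Δ y) := by module
    rw [e, norm_smul, hΔ.iso x y hx1 hy1, Real.norm_of_nonneg hs]
    gcongr
  have hzy : ‖z - y‖ ≤ (1 - s) * t := by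
    rw [← hΔ.iso z y hz hy1, hze]
    have e : ((1 - s) • Δ x + s • Δ y) - Δ y = (1 - s) • (Δ x - Δ y) := by module
    rw [e, norm_smul, hΔ.iso x y hx1 hy1, Real.norm_of_nonneg (by linarith)]
    have : 0 ≤ 1 - s := by linarith
    gcongr
  ext h
  obtain ⟨h₁, h₂, rfl, h1, h1', h2, -⟩ := hsplit h
  have e1 : z h₂ = AffineMap.lineMap (x h₂) (y h₂) s := by
    have d1 : dist (x h₂) (z h₂) ≤ s * t * ‖h₂‖ := by
      rw [dist_eq_norm, ← sub_apply]
      exact (x - z).le_of_opNorm_le hxz h₂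
    have d2 : dist (z h₂) (y h₂) ≤ (1 - s) * t * ‖h₂‖ := by
      rw [dist_eq_norm, ← sub_apply]
      exact (z - y).le_of_opNorm_le hzy h₂
    have d3 : dist (x h₂) (y h₂) = t * ‖h₂‖ := by rw [dist_eq_norm, h2]
    have d4 := dist_triangle (x h₂) (z h₂) (y h₂)
    let : InnerProductSpace ℝ K := InnerProductSpace.rclikeToReal ℂ K
    refine eq_lineMap_of_dist_eq_mul_of_dist_eq_mul ?_ ?_ <;> rw [d3] <;> linarith
  rw [AffineMap.lineMap_apply_module] at e1
  rw [map_add, map_add, hzfix h₁ h1 h1', e1]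
  simp only [add_apply, smul_apply, ← h1]
  module

end Faces

section Orthogonal

variable {H K Y : Type*} [NormedAddCommGroup H] [InnerProductSpace ℂ H]
  [NormedAddCommGroup K] [InnerProductSpace ℂ K] [NormedAddCommGroup Y] [NormedSpace ℝ Y]
  {Δ : (H →L[ℂ] K) → Y}

/-- The combination `α f + β g + γ (V - f - g)` for two rank one pieces `f`, `g` of `V`. -/
noncomputable def tri (V : H →ₗᵢ[ℂ] K) (w₁ w₂ : H) (α β γ : ℝ) : H →L[ℂ] K :=
  α • rk (V w₁) w₁ + β • rk (V w₂) w₂ +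
    γ • (V.toContinuousLinearMap - rk (V w₁) w₁ - rk (V w₂) w₂)

/-- The component of `h` orthogonal to `w₁` and `w₂`. -/
noncomputable def rest (w₁ w₂ h : H) : H := h - inner ℂ w₁ h • w₁ - inner ℂ w₂ h • w₂

lemma eq_add_rest (w₁ w₂ h : H) :
    h = inner ℂ w₁ h • w₁ + (inner ℂ w₂ h • w₂ + rest w₁ w₂ h) := by
  rw [rest]; abel

section

variable {w₁ w₂ : H} (hw₁ : ‖w₁‖ = 1) (hw₂ : ‖w₂‖ = 1) (hw : inner ℂ w₁ w₂ = 0)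
include hw₁ hw₂ hw

omit hw₂ in
lemma inner_rest_left (h : H) : inner ℂ w₁ (rest w₁ w₂ h) = 0 := by
  rw [rest, inner_sub_right, inner_sub_right, inner_smul_right, inner_smul_right, hw,
    inner_self_one hw₁]
  ring

omit hw₁ in
lemma inner_rest_right (h : H) : inner ℂ w₂ (rest w₁ w₂ h) = 0 := by
  rw [rest, inner_sub_right, inner_sub_right, inner_smul_right, inner_smul_right,
    inner_eq_zero_symm.1 hw, inner_self_one hw₂]
  ring

lemma norm_sq_three (h : H) (a b c : ℂ) :
    ‖a • w₁ + (b • w₂ + c • rest w₁ w₂ h)‖ ^ 2 =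
      ‖a‖ ^ 2 + (‖b‖ ^ 2 + ‖c‖ ^ 2 * ‖rest w₁ w₂ h‖ ^ 2) := by
  rw [norm_sq_add_smul hw₁, norm_sq_add_smul hw₂, norm_smul, mul_pow]
  · rw [inner_smul_right, inner_rest_right hw₂ hw, mul_zero]
  · rw [inner_add_right, inner_smul_right, inner_smul_right, inner_rest_left hw₁ hw, hw]
    ring

lemma tri_apply_three (V : H →ₗᵢ[ℂ] K) (α β γ : ℝ) (h : H) (a b c : ℂ) :
    tri V w₁ w₂ α β γ (a • w₁ + (b • w₂ + c • rest w₁ w₂ h)) =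
      V ((α * a) • w₁ + ((β * b) • w₂ + (γ * c) • rest w₁ w₂ h)) := by
  simp only [tri, add_apply, smul_apply, sub_apply, rk, InnerProductSpace.rankOne_apply,
    inner_rest_right hw₂ hw, inner_rest_left hw₁ hw,
    hw, inner_eq_zero_symm.1 hw, inner_self_one hw₁, inner_self_one hw₂,
    LinearIsometry.coe_toContinuousLinearMap, map_add, map_smul]
  simp only [← Complex.coe_smul]
  module

lemma norm_sq_tri_apply_three (V : H →ₗᵢ[ℂ] K) (α β γ : ℝ) (h : H) (a b c : ℂ) :
    ‖tri V w₁ w₂ α β γ (a • w₁ + (b • w₂ + c • rest w₁ w₂ h))‖ ^ 2 =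
      α ^ 2 * ‖a‖ ^ 2 + (β ^ 2 * ‖b‖ ^ 2 + γ ^ 2 * (‖c‖ ^ 2 * ‖rest w₁ w₂ h‖ ^ 2)) := by
  rw [tri_apply_three hw₁ hw₂ hw, LinearIsometry.norm_map, norm_sq_three hw₁ hw₂ hw]
  simp only [norm_mul, mul_pow, Complex.norm_real, Real.norm_eq_abs, sq_abs]
  ring

lemma norm_tri_apply_eq (V : H →ₗᵢ[ℂ] K) {α β γ : ℝ} (hα : α ^ 2 = 1) (hβ : β ^ 2 = 1)
    (hγ : γ ^ 2 = 1) (h : H) : ‖tri V w₁ w₂ α β γ h‖ = ‖h‖ := by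
  refine (sq_eq_sq₀ (norm_nonneg _) (norm_nonneg _)).1 ?_
  conv_lhs => rw [eq_add_rest w₁ w₂ h, ← one_smul ℂ (rest w₁ w₂ h)]
  conv_rhs => rw [eq_add_rest w₁ w₂ h, ← one_smul ℂ (rest w₁ w₂ h)]
  rw [norm_sq_tri_apply_three hw₁ hw₂ hw, norm_sq_three hw₁ hw₂ hw, hα, hβ, hγ]
  ring

lemma norm_tri_le (V : H →ₗᵢ[ℂ] K) {α β γ : ℝ} (hα : α ^ 2 ≤ 1) (hβ : β ^ 2 ≤ 1)
    (hγ : γ ^ 2 ≤ 1) : ‖tri V w₁ w₂ α β γ‖ ≤ 1 := by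
  refine ContinuousLinearMap.opNorm_le_bound _ zero_le_one fun h => ?_
  rw [one_mul]
  refine (sq_le_sq₀ (norm_nonneg _) (norm_nonneg _)).1 ?_
  conv_lhs => rw [eq_add_rest w₁ w₂ h, ← one_smul ℂ (rest w₁ w₂ h)]
  conv_rhs => rw [eq_add_rest w₁ w₂ h, ← one_smul ℂ (rest w₁ w₂ h)]
  rw [norm_sq_tri_apply_three hw₁ hw₂ hw, norm_sq_three hw₁ hw₂ hw]
  have h1 := mul_le_mul_of_nonneg_right hα (sq_nonneg ‖(inner ℂ w₁ h : ℂ)‖)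
  have h2 := mul_le_mul_of_nonneg_right hβ (sq_nonneg ‖(inner ℂ w₂ h : ℂ)‖)
  have h3 := mul_le_mul_of_nonneg_right hγ (mul_nonneg (sq_nonneg ‖(1 : ℂ)‖)
    (sq_nonneg ‖rest w₁ w₂ h‖))
  linarith

lemma tri_apply_first (V : H →ₗᵢ[ℂ] K) (β γ : ℝ) : tri V w₁ w₂ 1 β γ w₁ = V w₁ := by
  have := tri_apply_three hw₁ hw₂ hw V 1 β γ 0 1 0 0
  simpa using this

/-- Affinity of a sphere isometry along segments of operators `tri V w₁ w₂ 1 β γ`. The switches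
`δ₂`, `δ₃` select the coordinates which move. -/
lemma IsSphereIsometry.tri_affine (hΔ : IsSphereIsometry Δ) (V : H →ₗᵢ[ℂ] K)
    {β γ β' γ' t : ℝ} {δ₂ δ₃ : ℝ} (hβ : β ^ 2 ≤ 1) (hγ : γ ^ 2 ≤ 1) (hβ' : β' ^ 2 ≤ 1)
    (hγ' : γ' ^ 2 ≤ 1) (hδ₂ : δ₂ = 0 ∧ β = β' ∧ β ^ 2 = 1 ∨ δ₂ = 1 ∧ (β - β') ^ 2 = t ^ 2)
    (hδ₃ : δ₃ = 0 ∧ γ = γ' ∧ γ ^ 2 = 1 ∨ δ₃ = 1 ∧ (γ - γ') ^ 2 = t ^ 2) (ht : 0 ≤ t)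
    {s : ℝ} (hs : 0 ≤ s) (hs' : s ≤ 1) :
    Δ (tri V w₁ w₂ 1 ((1 - s) * β + s * β') ((1 - s) * γ + s * γ')) =
      (1 - s) • Δ (tri V w₁ w₂ 1 β γ) + s • Δ (tri V w₁ w₂ 1 β' γ') := by
  have e : tri V w₁ w₂ 1 ((1 - s) * β + s * β') ((1 - s) * γ + s * γ') =
      (1 - s) • tri V w₁ w₂ 1 β γ + s • tri V w₁ w₂ 1 β' γ' := by
    simp only [tri]; module
  have hfirst := tri_apply_first hw₁ hw₂ hw V
  rw [e]
  refine hΔ.affine_of_split (norm_tri_le hw₁ hw₂ hw V (by norm_num) hβ hγ)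
    (norm_tri_le hw₁ hw₂ hw V (by norm_num) hβ' hγ') hw₁ (by rw [hfirst, V.norm_map, hw₁])
    (by rw [hfirst, hfirst]) (t := t) (fun h => ?_) ht hs hs'
  have hdiff : ∀ k, tri V w₁ w₂ 1 β γ k - tri V w₁ w₂ 1 β' γ' k =
      tri V w₁ w₂ 0 (β - β') (γ - γ') k := by
    intro k
    simp only [tri, add_apply, smul_apply, sub_apply]
    module
  set a := inner ℂ w₁ h
  set b := inner ℂ w₂ h
  refine ⟨a • w₁ + (((1 - δ₂ : ℝ) * b) • w₂ + ((1 - δ₃ : ℝ) : ℂ) • rest w₁ w₂ h),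
    (0 : ℂ) • w₁ + (((δ₂ : ℝ) * b) • w₂ + (δ₃ : ℂ) • rest w₁ w₂ h), ?_, ?_, ?_, ?_, ?_⟩
  · conv_lhs => rw [eq_add_rest w₁ w₂ h]
    push_cast
    module
  · rw [← sub_eq_zero, hdiff, tri_apply_three hw₁ hw₂ hw]
    rcases hδ₂ with ⟨rfl, rfl, -⟩ | ⟨rfl, -⟩ <;> rcases hδ₃ with ⟨rfl, rfl, -⟩ | ⟨rfl, -⟩ <;> simp
  · refine (sq_eq_sq₀ (norm_nonneg _) (norm_nonneg _)).1 ?_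
    rw [norm_sq_tri_apply_three hw₁ hw₂ hw, norm_sq_three hw₁ hw₂ hw]
    rcases hδ₂ with ⟨rfl, rfl, h2⟩ | ⟨rfl, -⟩ <;> rcases hδ₃ with ⟨rfl, rfl, h3⟩ | ⟨rfl, -⟩ <;>
      simp [*]
  · refine (sq_eq_sq₀ (norm_nonneg _) (mul_nonneg ht (norm_nonneg _))).1 ?_
    rw [hdiff, mul_pow, norm_sq_tri_apply_three hw₁ hw₂ hw, norm_sq_three hw₁ hw₂ hw]
    rcases hδ₂ with ⟨rfl, rfl, -⟩ | ⟨rfl, h2⟩ <;> rcases hδ₃ with ⟨rfl, rfl, -⟩ | ⟨rfl, h3⟩ <;>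
      simp [*, mul_add]
  · refine (sq_le_sq₀ (norm_nonneg _) (norm_nonneg _)).1 ?_
    conv_rhs => rw [eq_add_rest w₁ w₂ h, ← one_smul ℂ (rest w₁ w₂ h)]
    rw [norm_sq_three hw₁ hw₂ hw, norm_sq_three hw₁ hw₂ hw]
    have h1 := sq_nonneg ‖a‖
    have h2 := sq_nonneg ‖b‖
    have h3 := sq_nonneg ‖rest w₁ w₂ h‖
    rcases hδ₂ with ⟨rfl, -⟩ | ⟨rfl, -⟩ <;> rcases hδ₃ with ⟨rfl, -⟩ | ⟨rfl, -⟩ <;>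
      norm_num <;> linarith

end

lemma norm_two_smul_rk_sub_apply {V : H →L[ℂ] K} (hV : ∀ h, ‖V h‖ = ‖h‖) {w : H} (hw : ‖w‖ = 1)
    (h : H) : ‖((2 : ℝ) • rk (V w) w - V) h‖ = ‖h‖ := by
  obtain ⟨k, hk⟩ : ∃ k, k = h - inner ℂ w h • w := ⟨_, rfl⟩
  have hwk : inner ℂ w k = 0 := by
    rw [hk, inner_sub_right, inner_smul_right, inner_self_one hw]; ring
  have hh : h = inner ℂ w h • w + k := by rw [hk]; abel
  have e : ((2 : ℝ) • rk (V w) w - V) h = V (inner ℂ w h • w + (-k)) := by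
    have h2 : ((2 : ℝ) • rk (V w) w) h = (2 * inner ℂ w h) • V w := by
      rw [smul_apply, rk, InnerProductSpace.rankOne_apply, ← Complex.coe_smul, smul_smul]
      norm_num
    rw [sub_apply, h2]
    conv_lhs => rw [hh]
    simp only [map_add, map_smul, map_neg, inner_add_right, inner_smul_right, hwk,
      inner_self_one hw]
    module
  rw [e, hV]
  refine (sq_eq_sq₀ (norm_nonneg _) (norm_nonneg _)).1 ?_
  conv_rhs => rw [hh]
  rw [norm_sq_add_smul hw _ (by rw [inner_neg_right, hwk, neg_zero]), norm_neg,
    norm_sq_add_smul hw _ hwk]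

lemma IsSphereIsometry.two_smul_apply_rk (hΔ : IsSphereIsometry Δ) {V : H →L[ℂ] K}
    (hV : ∀ h, ‖V h‖ = ‖h‖) {w : H} (hw : ‖w‖ = 1) :
    (2 : ℝ) • Δ (rk (V w) w) = Δ V + Δ ((2 : ℝ) • rk (V w) w - V) := by
  have hVw : ((2 : ℝ) • rk (V w) w - V) w = V w := by
    simp [rk, hw, two_smul]
  have h1 := hΔ.affine_of_split (x := V) (y := (2 : ℝ) • rk (V w) w - V) (t := 2) (s := 1 / 2)
    (norm_le_one_of_isometric hV)
    (norm_le_one_of_isometric (norm_two_smul_rk_sub_apply hV hw)) hw (by rw [hV, hw])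
    hVw.symm (fun h => ?_) (by norm_num) (by norm_num) (by norm_num)
  · have e : (1 - 1 / 2 : ℝ) • V + (1 / 2 : ℝ) • ((2 : ℝ) • rk (V w) w - V) = rk (V w) w := by
      module
    rw [e] at h1
    rw [h1]; module
  · have hk : inner ℂ w (h - inner ℂ w h • w) = 0 := by
      rw [inner_sub_right, inner_smul_right, inner_self_one hw]; ring
    refine ⟨inner ℂ w h • w, h - inner ℂ w h • w, by abel, by rw [map_smul, map_smul, hVw],
      hV _, ?_, norm_sub_smul_le hw h⟩
    have e : V (h - inner ℂ w h • w) - ((2 : ℝ) • rk (V w) w - V) (h - inner ℂ w h • w) =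
        (2 : ℝ) • V (h - inner ℂ w h • w) := by
      rw [sub_apply, smul_apply, rk, InnerProductSpace.rankOne_apply, hk]
      module
    rw [e, norm_smul, hV]
    norm_num

lemma IsSphereIsometry.apply_neg_rk [Nontrivial H] (hΔ : IsSphereIsometry Δ) {V : H →L[ℂ] K}
    (hV : ∀ h, ‖V h‖ = ‖h‖) {w : H} (hw : ‖w‖ = 1) : Δ (-rk (V w) w) = -Δ (rk (V w) w) := by
  have h1 := hΔ.two_smul_apply_rk hV hw
  have h2 := hΔ.two_smul_apply_rk (V := -V) (fun h => by rw [neg_apply, norm_neg, hV]) hw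
  have e : rk ((-V) w) w = -rk (V w) w := by rw [neg_apply, rk, map_neg, neg_apply]
  have e' : (2 : ℝ) • -rk (V w) w - -V = -((2 : ℝ) • rk (V w) w - V) := by module
  rw [e, e', hΔ.apply_neg_isometry hV,
    hΔ.apply_neg_isometry (norm_two_smul_rk_sub_apply hV hw), ← neg_add, ← h1, ← smul_neg] at h2
  exact smul_right_injective Y (two_ne_zero (α := ℝ)) h2

/-- Additivity of a sphere isometry on orthogonal rank one partial isometries. -/
lemma IsSphereIsometry.apply_rk_add_smul_rk [Nontrivial H] (hΔ : IsSphereIsometry Δ)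
    (V : H →ₗᵢ[ℂ] K) {w₁ w₂ : H} (hw₁ : ‖w₁‖ = 1) (hw₂ : ‖w₂‖ = 1) (hw : inner ℂ w₁ w₂ = 0)
    {s : ℝ} (hs : 0 ≤ s) (hs' : s ≤ 1) :
    Δ (rk (V w₁) w₁ + s • rk (V w₂) w₂) = Δ (rk (V w₁) w₁) + s • Δ (rk (V w₂) w₂) := by
  have hV1 : V.toContinuousLinearMap = tri V w₁ w₂ 1 1 1 := by simp only [tri]; module
  have hiso : ∀ {α β γ : ℝ}, α ^ 2 = 1 → β ^ 2 = 1 → γ ^ 2 = 1 →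
      ∀ h, ‖tri V w₁ w₂ α β γ h‖ = ‖h‖ := norm_tri_apply_eq hw₁ hw₂ hw V
  have hf1 := hΔ.two_smul_apply_rk (V := V.toContinuousLinearMap) (w := w₁) V.norm_map hw₁
  have hg1 := hΔ.two_smul_apply_rk (V := V.toContinuousLinearMap) (w := w₂) V.norm_map hw₂
  have hf2 := hΔ.two_smul_apply_rk (V := tri V w₁ w₂ 1 (-1) 1) (w := w₁)
    (hiso (by norm_num) (by norm_num) (by norm_num)) hw₁
  rw [LinearIsometry.coe_toContinuousLinearMap] at hf1 hg1
  rw [tri_apply_first hw₁ hw₂ hw] at hf2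
  have ef1 : (2 : ℝ) • rk (V w₁) w₁ - V.toContinuousLinearMap = tri V w₁ w₂ 1 (-1) (-1) := by
    simp only [tri]; module
  have ef2 : (2 : ℝ) • rk (V w₁) w₁ - tri V w₁ w₂ 1 (-1) 1 = tri V w₁ w₂ 1 1 (-1) := by
    simp only [tri]; module
  have eg1 : (2 : ℝ) • rk (V w₂) w₂ - V.toContinuousLinearMap = -tri V w₁ w₂ 1 (-1) 1 := by
    simp only [tri]; module
  rw [ef1, hV1] at hf1
  rw [eg1, hV1, hΔ.apply_neg_isometry (hiso (by norm_num) (by norm_num) (by norm_num))] at hg1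
  rw [ef2] at hf2
  have hP := hΔ.tri_affine hw₁ hw₂ hw V (β := 1) (γ := 1) (β' := 1) (γ' := -1) (t := 2)
    (δ₂ := 0) (δ₃ := 1) (s := s / 2) (by norm_num) (by norm_num) (by norm_num) (by norm_num)
    (by norm_num) (by norm_num) (by norm_num) (by linarith) (by linarith)
  have hQ := hΔ.tri_affine hw₁ hw₂ hw V (β := 1) (γ := -1) (β' := -1) (γ' := -1) (t := 2)
    (δ₂ := 1) (δ₃ := 0) (s := 1 - s / 2) (by norm_num) (by norm_num) (by norm_num) (by norm_num)
    (by norm_num) (by norm_num) (by norm_num) (by linarith) (by linarith)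
  obtain ⟨r, hr⟩ : ∃ r, r = (1 - s) / (2 - s) := ⟨_, rfl⟩
  have h2s : 0 < 2 - s := by linarith
  have hr' : r * (2 - s) = 1 - s := by rw [hr, div_mul_cancel₀ _ h2s.ne']
  have hR := hΔ.tri_affine hw₁ hw₂ hw V (β := 1) (γ := 1 - s) (β' := s - 1) (γ' := -1)
    (t := 2 - s) (δ₂ := 1) (δ₃ := 1) (s := r) (by norm_num) (by nlinarith) (by nlinarith)
    (by norm_num) (.inr ⟨rfl, by ring⟩) (.inr ⟨rfl, by ring⟩) h2s.le
    (by rw [hr]; exact div_nonneg (by linarith) h2s.le)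
    (by rw [hr, div_le_one h2s]; linarith)
  rw [show (1 - s / 2) * 1 + s / 2 * 1 = 1 by ring,
    show (1 - s / 2) * 1 + s / 2 * -1 = 1 - s by ring] at hP
  rw [show (1 - (1 - s / 2)) * 1 + (1 - s / 2) * -1 = s - 1 by ring,
    show (1 - (1 - s / 2)) * -1 + (1 - s / 2) * -1 = -1 by ring] at hQ
  rw [show (1 - r) * 1 + r * (s - 1) = s by linear_combination -hr',
    show (1 - r) * (1 - s) + r * -1 = 0 by linear_combination -hr', hP, hQ] at hR
  have e : rk (V w₁) w₁ + s • rk (V w₂) w₂ = tri V w₁ w₂ 1 s 0 := by simp only [tri]; module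
  rw [e, hR]
  have hB : r * (1 - s / 2) = (1 - s) / 2 := by linear_combination hr' / 2
  have hA : (1 - r) * (1 - s / 2) = 1 / 2 := by linear_combination -hr' / 2
  have hD : r * (s / 2) = s / 2 - (1 - r) * (s / 2) := by ring
  simp only [smul_add, smul_smul, hA, sub_sub_cancel, hB, hD]
  linear_combination (norm := module) (s / 2 - 1 / 2) • hf1 - (s / 2) • hf2 - (s / 2) • hg1

end Orthogonal

section RankOneApproximation

variable {H K : Type*} [NormedAddCommGroup H] [InnerProductSpace ℂ H] [CompleteSpace H]
  [NormedAddCommGroup K] [InnerProductSpace ℂ K] [CompleteSpace K]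

omit [CompleteSpace H] [CompleteSpace K] in
lemma rk_mem_Corner {u v : K} {q w : H} (huv : inner ℂ u v = 0) (hqw : inner ℂ q w = 0) :
    rk v w ∈ Corner u q := by
  refine mem_Corner.2 ⟨?_, fun h => ?_⟩
  · rw [rk, InnerProductSpace.rankOne_apply, inner_eq_zero_symm.1 hqw, zero_smul]
  · rw [rk, InnerProductSpace.rankOne_apply, inner_smul_right, huv, mul_zero]

/-- A rank one operator with prescribed pairing with `rk v w`, close to a small operator. -/
lemma exists_rk_near {u v : K} {q w : H} (hv : ‖v‖ = 1) (hw : ‖w‖ = 1)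
    (huv : inner ℂ u v = 0) (hqw : inner ℂ q w = 0) {x : H →L[ℂ] K} (hx : x ∈ Corner u q)
    (hx1 : ‖x‖ ≤ 1 / 16) {c : ℝ} (hc : |c| = 1 / 2) :
    ∃ (v' : K) (w' : H) (s : ℝ), ‖v'‖ = 1 ∧ ‖w'‖ = 1 ∧ inner ℂ u v' = 0 ∧ inner ℂ q w' = 0 ∧
      0 ≤ s ∧ s ≤ 1 ∧ s * (inner ℂ v (rk v' w' w)).re = (inner ℂ v (x w)).re + c ∧
      ‖s • rk v' w' - x‖ ≤ 1 / 2 := by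
  have hc0 : c ≠ 0 := by rintro rfl; norm_num at hc
  have hrk : ‖rk v w‖ = 1 := by rw [InnerProductSpace.norm_rankOne, hv, hw, one_mul]
  obtain ⟨y, hy⟩ : ∃ y, y = x + c • rk v w := ⟨_, rfl⟩
  have hyC : y ∈ Corner u q := by
    rw [hy]
    exact (Corner u q).add_mem hx (real_smul_mem_Corner (rk_mem_Corner huv hqw) c)
  have hy1 : ‖y‖ ≤ 9 / 16 := by
    rw [hy]
    refine (norm_add_le _ _).trans ?_
    rw [norm_smul, hrk, Real.norm_eq_abs, hc]
    linarith
  have hyw : y w = x w + (c : ℂ) • v := by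
    rw [hy, add_apply, smul_apply, rk, InnerProductSpace.rankOne_apply, inner_self_one hw, one_smul,
      Complex.coe_smul]
  obtain ⟨b, hb⟩ : ∃ b, b = inner ℂ v (y w) := ⟨_, rfl⟩
  have hb' : b = inner ℂ v (x w) + c := by
    rw [hb, hyw, inner_add_right, inner_smul_right, inner_self_one hv, mul_one]
  have hxw : ‖x w‖ ≤ 1 / 16 := by
    have := x.le_opNorm w
    rw [hw, mul_one] at this
    linarith
  have hbn : 7 / 16 ≤ ‖b‖ := by
    have h1 := norm_inner_le_norm (𝕜 := ℂ) v (x w)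
    rw [hv, one_mul] at h1
    have h2 := norm_sub_le b (inner ℂ v (x w))
    rw [hb', add_sub_cancel_left, ← hb', Complex.norm_real, Real.norm_eq_abs, hc] at h2
    linarith
  have hb0 : b ≠ 0 := norm_pos_iff.1 (by linarith)
  have hywn : ‖y w‖ ≤ 9 / 16 := by
    have := y.le_opNorm w
    rw [hw, mul_one] at this
    linarith
  obtain ⟨l, hl⟩ : ∃ l, l = ContinuousLinearMap.adjoint y v := ⟨_, rfl⟩
  have hlh : ∀ h, inner ℂ l h = inner ℂ v (y h) := fun h => by
    rw [hl, ContinuousLinearMap.adjoint_inner_left]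
  have hln : ‖l‖ ≤ 9 / 16 := by
    have := (ContinuousLinearMap.adjoint y).le_opNorm v
    rw [hv, mul_one, LinearIsometryEquiv.norm_map, ← hl] at this
    linarith
  have hl0 : ‖l‖ ≠ 0 := by
    intro h
    apply hb0
    rw [hb, ← hlh, norm_eq_zero.1 h, inner_zero_left]
  have hyw0 : ‖y w‖ ≠ 0 := by
    intro h
    apply hb0
    rw [hb, norm_eq_zero.1 h, inner_zero_right]
  have hbn0 : ‖b‖ ≠ 0 := norm_ne_zero_iff.2 hb0
  obtain ⟨v', hv'⟩ : ∃ v' : K, v' = (b⁻¹ * ((‖b‖ / ‖y w‖ : ℝ) : ℂ)) • y w := ⟨_, rfl⟩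
  obtain ⟨w', hw'⟩ : ∃ w' : H, w' = ((‖l‖⁻¹ : ℝ) : ℂ) • l := ⟨_, rfl⟩
  obtain ⟨s, hs⟩ : ∃ s : ℝ, s = ‖y w‖ * ‖l‖ / ‖b‖ := ⟨_, rfl⟩
  have hz : ∀ h, (s • rk v' w') h = (inner ℂ v (y h) / b) • y w := by
    intro h
    rw [smul_apply, rk, InnerProductSpace.rankOne_apply, hw', inner_smul_left, hlh, hv',
      Complex.conj_ofReal, ← Complex.coe_smul, smul_smul, smul_smul]
    congr 1
    rw [hs]
    have h1 : ((‖b‖ : ℝ) : ℂ) ≠ 0 := Complex.ofReal_ne_zero.2 hbn0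
    have h2 : ((‖y w‖ : ℝ) : ℂ) ≠ 0 := Complex.ofReal_ne_zero.2 hyw0
    have h3 : ((‖l‖ : ℝ) : ℂ) ≠ 0 := Complex.ofReal_ne_zero.2 hl0
    push_cast
    field_simp
  have hzy : s • rk v' w' - y ∈ Corner v w := by
    refine mem_Corner.2 ⟨?_, fun h => ?_⟩
    · rw [sub_apply, hz, ← hb, div_self hb0, one_smul, sub_self]
    · rw [sub_apply, hz, inner_sub_right, inner_smul_right, ← hb, div_mul_cancel₀ _ hb0, sub_self]
  have hzyn : ‖s • rk v' w' - y‖ ≤ 1 / 2 := by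
    refine ContinuousLinearMap.opNorm_le_bound _ (by norm_num) fun h => ?_
    obtain ⟨k, hk⟩ : ∃ k, k = h - inner ℂ w h • w := ⟨_, rfl⟩
    have hkn : ‖k‖ ≤ ‖h‖ := hk ▸ norm_sub_smul_le hw h
    have hwk : inner ℂ w k = 0 := by
      rw [hk, inner_sub_right, inner_smul_right, inner_self_one hw]; ring
    have e : (s • rk v' w' - y) h = (s • rk v' w' - y) k := by
      rw [hk, map_sub, map_smul, hzy.1, smul_zero, sub_zero]
    have hyk : y k = x k := by
      rw [hy, add_apply, smul_apply, rk, InnerProductSpace.rankOne_apply, hwk, zero_smul, smul_zero,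
        add_zero]
    have hxk : ‖x k‖ ≤ 1 / 16 * ‖h‖ := x.le_of_opNorm_le_of_le hx1 hkn
    rw [e, sub_apply, hz, hyk]
    refine (norm_sub_le _ _).trans ?_
    rw [norm_smul, norm_div]
    have h1 := norm_inner_le_norm (𝕜 := ℂ) v (x k)
    rw [hv, one_mul] at h1
    have h2 : ‖(inner ℂ v (x k) : ℂ)‖ / ‖b‖ ≤ 1 / 7 * ‖h‖ := by
      rw [div_le_iff₀ (by linarith)]
      nlinarith [norm_nonneg h]
    have h3 : ‖(inner ℂ v (x k) : ℂ)‖ / ‖b‖ * ‖y w‖ ≤ 1 / 7 * ‖h‖ * (9 / 16) :=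
      mul_le_mul h2 hywn (norm_nonneg _) (by positivity)
    linarith [norm_nonneg h]
  refine ⟨v', w', s, ?_, ?_, ?_, ?_, ?_, ?_, ?_, ?_⟩
  · rw [hv', norm_smul, norm_mul, norm_inv, Complex.norm_real, Real.norm_of_nonneg (by positivity)]
    field_simp
  · rw [hw', norm_smul, Complex.norm_real, Real.norm_of_nonneg (by positivity),
      inv_mul_cancel₀ hl0]
  · rw [hv', inner_smul_right, hyC.2, mul_zero]
  · rw [hw', inner_smul_right, inner_eq_zero_symm.1 (by rw [hlh, hyC.1, inner_zero_right] :
      inner ℂ l q = 0), mul_zero]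
  · rw [hs]; positivity
  · rw [hs, div_le_one (by linarith)]
    nlinarith [norm_nonneg (y w), norm_nonneg l]
  · have h1 : inner ℂ v ((s • rk v' w') w) = b := by
      rw [hz, ← hb, div_self hb0, one_smul, ← hb]
    rw [smul_apply, ← Complex.coe_smul, inner_smul_right] at h1
    rw [← Complex.re_ofReal_mul, h1, hb', Complex.add_re, Complex.ofReal_re]
  · have e : s • rk v' w' - x = c • (rk v w + c⁻¹ • (s • rk v' w' - y)) := by
      rw [smul_add, smul_inv_smul₀ hc0, hy]; abel
    rw [e, norm_smul, Real.norm_eq_abs, hc]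
    have := norm_rk_add_le hv hw (real_smul_mem_Corner hzy c⁻¹) (by
      rw [norm_smul, norm_inv, Real.norm_eq_abs, hc]; linarith)
    linarith

end RankOneApproximation

section Functionals

variable {H K Y : Type*} [NormedAddCommGroup H] [InnerProductSpace ℂ H]
  [NormedAddCommGroup K] [InnerProductSpace ℂ K] [NormedAddCommGroup Y] [NormedSpace ℝ Y]
  {Δ : (H →L[ℂ] K) → Y}

lemma norm_rk_add_eq_one {u : K} {q : H} (hu : ‖u‖ = 1) (hq : ‖q‖ = 1) {y : H →L[ℂ] K}
    (hy : y ∈ Corner u q) (hy1 : ‖y‖ ≤ 1) : ‖rk u q + y‖ = 1 :=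
  norm_eq_one_of_mem_Face hu hq (rk_add_mem_Face hu hq hy hy1)

lemma Supports.abs_apply_sub_le {v : K} {w : H} {ψ : Y →L[ℝ] ℝ} (hψ : Supports Δ v w ψ)
    (hΔ : IsSphereIsometry Δ) {x y : H →L[ℂ] K} (hx : ‖x‖ = 1) (hy : ‖y‖ = 1) :
    |ψ (Δ x) - ψ (Δ y)| ≤ ‖x - y‖ := by
  rw [← map_sub, ← hΔ.iso x y hx hy]
  exact hψ.abs_le _

lemma IsSphereIsometry.apply_add_orthogonal (hΔ : IsSphereIsometry Δ) (J : H →ₗᵢ[ℂ] K)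
    {u v : K} {q w : H} (hu : ‖u‖ = 1) (hq : ‖q‖ = 1) (hv : ‖v‖ = 1) (hw : ‖w‖ = 1)
    (huv : inner ℂ u v = 0) (hqw : inner ℂ q w = 0) {s : ℝ} (hs : 0 ≤ s) (hs' : s ≤ 1) :
    Δ (rk u q + s • rk v w) = Δ (rk u q) + s • Δ (rk v w) := by
  obtain ⟨V, rfl, rfl⟩ := exists_isometry_of_pairs J hq hw hqw hu hv huv
  have : Nontrivial H := ⟨⟨q, 0, by rintro rfl; simp at hq⟩⟩
  exact hΔ.apply_rk_add_smul_rk V hq hw hqw hs hs'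

lemma Supports.apply_orthogonal {v : K} {w : H} {ψ : Y →L[ℝ] ℝ} (hψ : Supports Δ v w ψ)
    (hΔ : IsSphereIsometry Δ) (J : H →ₗᵢ[ℂ] K) {u : K} {q : H} (hu : ‖u‖ = 1) (hq : ‖q‖ = 1)
    (hv : ‖v‖ = 1) (hw : ‖w‖ = 1) (huv : inner ℂ u v = 0) (hqw : inner ℂ q w = 0) :
    ψ (Δ (rk u q)) = 0 := by
  have h1 := hΔ.apply_add_orthogonal J hu hq hv hw huv hqw zero_le_one le_rfl
  have hn : ‖rk u q‖ ≤ 1 := by rw [InnerProductSpace.norm_rankOne, hu, hq, one_mul]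
  have h2 := rk_add_mem_Face hv hw
    (rk_mem_Corner (inner_eq_zero_symm.1 huv) (inner_eq_zero_symm.1 hqw)) hn
  have h3 := hψ.eq_one (rk v w) (by rw [InnerProductSpace.norm_rankOne, hv, hw, one_mul])
    (by rw [rk, InnerProductSpace.rankOne_apply, inner_self_one hw, one_smul])
  rw [one_smul, one_smul, add_comm] at h1
  have h4 := hψ.eq_one _ h2.1 h2.2
  rw [h1, map_add, h3] at h4
  linarith

lemma Supports.le_apply_rk {v : K} {w : H} {ψ : Y →L[ℝ] ℝ} (hψ : Supports Δ v w ψ)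
    (hΔ : IsSphereIsometry Δ) (J : H →ₗᵢ[ℂ] K) (hH : 3 ≤ Module.rank ℂ H)
    (hK : 3 ≤ Module.rank ℂ K) (hv : ‖v‖ = 1) (hw : ‖w‖ = 1) {v' : K} {w' : H}
    (hv' : ‖v'‖ = 1) (hw' : ‖w'‖ = 1) :
    (inner ℂ v (rk v' w' w)).re ≤ ψ (Δ (rk v' w')) := by
  obtain ⟨u, hu, huv, huv'⟩ := exists_unit_orthogonal hK v v'
  obtain ⟨q, hq, hqw, hqw'⟩ := exists_unit_orthogonal hH w w'
  rw [inner_eq_zero_symm] at huv huv' hqw hqw'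
  have h0 := hψ.apply_orthogonal hΔ J hu hq hv hw huv hqw
  have hrk : ‖rk v w‖ = 1 := by rw [InnerProductSpace.norm_rankOne, hv, hw, one_mul]
  have hrk' : ‖rk v' w'‖ = 1 := by rw [InnerProductSpace.norm_rankOne, hv', hw', one_mul]
  have h1 := hψ.eq_one (rk v w) hrk.le
    (by rw [rk, InnerProductSpace.rankOne_apply, inner_self_one hw, one_smul])
  have key : ∀ t : ℝ, 0 < t → t ≤ 1 / 4 →
      (inner ℂ v (rk v' w' w)).re ≤ ψ (Δ (rk v' w')) + 6 * t := by
    intro t ht ht'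
    have h2 := hΔ.apply_add_orthogonal J hu hq hv hw huv hqw (s := 1 / 2) (by norm_num)
      (by norm_num)
    have h3 := hΔ.apply_add_orthogonal J hu hq hv' hw' huv' hqw' ht.le (by linarith)
    have h4 := hψ.abs_apply_sub_le hΔ
      (norm_rk_add_eq_one hu hq (real_smul_mem_Corner (rk_mem_Corner huv hqw) (1 / 2))
        (by rw [norm_smul, hrk]; norm_num))
      (norm_rk_add_eq_one hu hq (real_smul_mem_Corner (rk_mem_Corner huv' hqw') t)
        (by rw [norm_smul, hrk', Real.norm_of_nonneg ht.le]; linarith))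
    have e : rk u q + (1 / 2 : ℝ) • rk v w - (rk u q + t • rk v' w') =
        (1 / 2 : ℝ) • (rk v w - (2 * t) • rk v' w') := by module
    have h5 := norm_half_rk_sub_le hrk'.le hv hw (t := 2 * t) (by linarith) (by linarith)
    rw [e, h2, h3, map_add, map_add, map_smul, map_smul, h0, h1, norm_smul,
      Real.norm_of_nonneg (by norm_num)] at h4
    have h6 := (le_abs_self _).trans h4
    simp only [smul_eq_mul] at h6
    have h7 : t * (inner ℂ v (rk v' w' w)).re ≤ t * (ψ (Δ (rk v' w')) + 6 * t) := by nlinarith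
    exact le_of_mul_le_mul_left h7 ht
  refine le_of_forall_pos_le_add fun ε hε => ?_
  have := key (min (1 / 4) (ε / 6)) (by positivity) (min_le_left _ _)
  linarith [min_le_right (1 / 4) (ε / 6)]

/-- Supporting functionals take the expected values on rank one partial isometries. -/
lemma Supports.apply_rk {v : K} {w : H} {ψ : Y →L[ℝ] ℝ} (hψ : Supports Δ v w ψ)
    (hΔ : IsSphereIsometry Δ) (J : H →ₗᵢ[ℂ] K) (hH : 3 ≤ Module.rank ℂ H)
    (hK : 3 ≤ Module.rank ℂ K) (hv : ‖v‖ = 1) (hw : ‖w‖ = 1) {v' : K} {w' : H}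
    (hv' : ‖v'‖ = 1) (hw' : ‖w'‖ = 1) :
    ψ (Δ (rk v' w')) = (inner ℂ v (rk v' w' w)).re := by
  refine le_antisymm ?_ (hψ.le_apply_rk hΔ J hH hK hv hw hv' hw')
  have h1 := hψ.le_apply_rk hΔ J hH hK hv hw (v' := -v') (by rwa [norm_neg]) hw'
  have : Nontrivial H := ⟨⟨w, 0, by rintro rfl; simp at hw⟩⟩
  have e : rk (-v') w' = -rk v' w' := by rw [rk, map_neg, neg_apply]
  obtain ⟨V, rfl⟩ := exists_isometry_of_unit J hw' hv'
  have h2 := hΔ.apply_neg_rk (V := V.toContinuousLinearMap) V.norm_map hw'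
  rw [LinearIsometry.coe_toContinuousLinearMap] at h2
  rw [e, h2, map_neg, neg_apply, inner_neg_right, Complex.neg_re] at h1
  linarith

/-- Supporting functionals take the expected values near an orthogonal rank one operator. -/
lemma Supports.apply_rk_add [CompleteSpace H] [CompleteSpace K] {v : K} {w : H} {ψ : Y →L[ℝ] ℝ}
    (hψ : Supports Δ v w ψ) (hΔ : IsSphereIsometry Δ) (J : H →ₗᵢ[ℂ] K)
    (hH : 3 ≤ Module.rank ℂ H) (hK : 3 ≤ Module.rank ℂ K) {u : K} {q : H} (hu : ‖u‖ = 1)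
    (hq : ‖q‖ = 1) (hv : ‖v‖ = 1) (hw : ‖w‖ = 1) (huv : inner ℂ u v = 0)
    (hqw : inner ℂ q w = 0) {x : H →L[ℂ] K} (hx : x ∈ Corner u q) (hx1 : ‖x‖ ≤ 1 / 16) :
    ψ (Δ (rk u q + x)) = (inner ℂ v (x w)).re := by
  have h0 := hψ.apply_orthogonal hΔ J hu hq hv hw huv hqw
  have key : ∀ c : ℝ, |c| = 1 / 2 →
      |(inner ℂ v (x w)).re + c - ψ (Δ (rk u q + x))| ≤ 1 / 2 := by
    intro c hc
    obtain ⟨v', w', s, hv', hw', huv', hqw', hs, hs', hsz, hzx⟩ :=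
      exists_rk_near hv hw huv hqw hx hx1 hc
    have h1 := hΔ.apply_add_orthogonal J hu hq hv' hw' huv' hqw' hs hs'
    have h2 := hψ.apply_rk hΔ J hH hK hv hw hv' hw'
    have h3 := hψ.abs_apply_sub_le hΔ
      (norm_rk_add_eq_one hu hq (real_smul_mem_Corner (rk_mem_Corner huv' hqw') s)
        (by rw [norm_smul, InnerProductSpace.norm_rankOne, hv', hw', Real.norm_of_nonneg hs]
            linarith))
      (norm_rk_add_eq_one hu hq hx (by linarith))
    rw [h1, map_add, map_smul, h0, h2, zero_add, smul_eq_mul, hsz, add_sub_add_left_eq_sub] at h3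
    exact h3.trans hzx
  have h1 := (_root_.abs_le.1 (key (1 / 2) (by norm_num))).2
  have h2 := (_root_.abs_le.1 (key (-1 / 2) (by norm_num [abs_of_neg]))).1
  linarith

end Functionals

section Extension

variable {H K Y : Type*} [NormedAddCommGroup H] [InnerProductSpace ℂ H] [CompleteSpace H]
  [NormedAddCommGroup K] [InnerProductSpace ℂ K] [CompleteSpace K]
  [NormedAddCommGroup Y] [NormedSpace ℝ Y] {Δ : (H →L[ℂ] K) → Y}

omit [CompleteSpace H] [CompleteSpace K] in
lemma Supports.apply_of_near {v : K} {w : H} {ψ : Y →L[ℝ] ℝ} (hψ : Supports Δ v w ψ)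
    (hΔ : IsSphereIsometry Δ) (hv : ‖v‖ = 1) (hw : ‖w‖ = 1) {x : H →L[ℂ] K} (hx : ‖x‖ = 1)
    (h : ∀ ε, 0 < ε → ∃ y : H →L[ℂ] K, ‖y‖ = 1 ∧ ‖x - y‖ ≤ ε ∧
      ψ (Δ y) = (inner ℂ v (y w)).re) : ψ (Δ x) = (inner ℂ v (x w)).re := by
  refine eq_of_abs_sub_le_all fun ε hε => ?_
  obtain ⟨y, hy, hxy, hye⟩ := h (ε / 2) (by linarith)
  have h1 := hψ.abs_apply_sub_le hΔ hx hy
  have h2 : |(inner ℂ v (y w)).re - (inner ℂ v (x w)).re| ≤ ‖x - y‖ := by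
    rw [abs_sub_comm, ← Complex.sub_re, ← inner_sub_right, ← sub_apply]
    refine (Complex.abs_re_le_norm _).trans ((norm_inner_le_norm _ _).trans ?_)
    have := (x - y).le_opNorm w
    rw [hw, mul_one] at this
    rwa [hv, one_mul]
  have h3 := abs_sub_le (ψ (Δ x)) (ψ (Δ y)) (inner ℂ v (x w)).re
  rw [hye] at h1 h3
  linarith

lemma exists_interior_near {u : K} {q : H} (hu : ‖u‖ = 1) (hq : ‖q‖ = 1) {x : H →L[ℂ] K}
    (hx : x ∈ Face u q) {ε : ℝ} (hε : 0 < ε) :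
    ∃ x' ∈ Corner u q, ‖x'‖ < 1 ∧ ‖x - (rk u q + x')‖ ≤ ε := by
  obtain ⟨δ, hδ⟩ : ∃ δ, δ = min ε 1 := ⟨_, rfl⟩
  have hδ0 : 0 < δ := by rw [hδ]; positivity
  have hδ1 : δ ≤ 1 := by rw [hδ]; exact min_le_right _ _
  have hδε : δ ≤ ε := by rw [hδ]; exact min_le_left _ _
  have h1 := norm_sub_rk_le hq hx
  refine ⟨(1 - δ) • (x - rk u q), real_smul_mem_Corner (sub_rk_mem_Corner hu hq hx) _, ?_, ?_⟩
  · rw [norm_smul, Real.norm_of_nonneg (by linarith)]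
    nlinarith [norm_nonneg (x - rk u q)]
  · have e : x - (rk u q + (1 - δ) • (x - rk u q)) = δ • (x - rk u q) := by module
    rw [e, norm_smul, Real.norm_of_nonneg hδ0.le]
    nlinarith

/-- Propagation of the value of a supporting functional in the direction of an isometry. -/
lemma Supports.apply_rk_add_add_smul {v : K} {w : H} {ψ : Y →L[ℝ] ℝ} {u : K} {q : H}
    (hΔ : IsSphereIsometry Δ) (hu : ‖u‖ = 1) (hq : ‖q‖ = 1) {δ t : ℝ} (ht : 0 ≤ t)
    {x V : H →L[ℂ] K} (hx : x ∈ Corner u q) (hδ : ‖x‖ + t + δ ≤ 1) (hV : ∀ h, ‖V h‖ = ‖h‖)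
    (hVq : V q = u)
    (hgood : ∀ y ∈ Corner u q, ‖y‖ < δ → ψ (Δ (rk u q + (x + y))) = (inner ℂ v ((x + y) w)).re)
    {y : H →L[ℂ] K} (hy : y ∈ Corner u q) (hyδ : ‖y‖ < δ) :
    ψ (Δ (rk u q + (x + t • (V - rk u q) + y))) =
      (inner ℂ v ((x + t • (V - rk u q) + y) w)).re := by
  have hVF : V ∈ Face u q := ⟨norm_le_one_of_isometric hV, hVq⟩
  obtain ⟨d, hd⟩ : ∃ d, d = V - rk u q := ⟨_, rfl⟩
  have hdC : d ∈ Corner u q := hd ▸ sub_rk_mem_Corner hu hq hVF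
  have hd1 : ‖d‖ ≤ 1 := hd ▸ norm_sub_rk_le hq hVF
  have htd : ∀ r : ℝ, 0 ≤ r → ‖r • d‖ ≤ r := fun r hr => by
    rw [norm_smul, Real.norm_of_nonneg hr]
    nlinarith
  have hxy := norm_add_le x y
  have hC0 : x + y ∈ Corner u q := (Corner u q).add_mem hx hy
  have hF0 := rk_add_mem_Face hu hq hC0 (by linarith)
  have hF1 := rk_add_mem_Face hu hq ((Corner u q).add_mem hC0 (real_smul_mem_Corner hdC t))
    (by linarith [norm_add_le (x + y) (t • d), htd t ht])
  obtain ⟨s, hs⟩ : ∃ s, s = min 1 ((δ - ‖y‖) / (t + 1) / 2) := ⟨_, rfl⟩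
  have hs0 : 0 < s := by
    rw [hs]
    refine lt_min one_pos (half_pos (div_pos (by linarith) (by linarith)))
  have hs1 : s ≤ 1 := by rw [hs]; exact min_le_left _ _
  have hst : s * t < δ - ‖y‖ := by
    have h1 : s ≤ (δ - ‖y‖) / (t + 1) / 2 := by rw [hs]; exact min_le_right _ _
    rw [div_div, le_div_iff₀ (by linarith)] at h1
    nlinarith
  have h1 := hΔ.affine_of_split hF0.1 hF1.1 hq (by rw [hF0.2, hu]) (by rw [hF0.2, hF1.2])
    (t := t) (fun h => ?_) ht hs0.le hs1
  · have e : (1 - s) • (rk u q + (x + y)) + s • (rk u q + (x + y + t • d)) =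
        rk u q + (x + (y + (s * t) • d)) := by module
    have h2 := hgood (y + (s * t) • d) ((Corner u q).add_mem hy (real_smul_mem_Corner hdC _))
      (by linarith [norm_add_le y ((s * t) • d), htd (s * t) (by positivity)])
    have h3 := hgood y hy hyδ
    rw [← e, h1, map_add, map_smul, map_smul, h3] at h2
    have e' : x + t • d + y = x + y + t • d := by abel
    rw [← hd, e']
    simp only [add_apply, smul_apply, inner_add_right, Complex.add_re, smul_eq_mul,
      ← Complex.coe_smul, inner_smul_right, Complex.re_ofReal_mul] at h2 ⊢
    have h4 : s * (ψ (Δ (rk u q + (x + y + t • d)))) = s * ((inner ℂ v (x w)).re +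
        (inner ℂ v (y w)).re + t * (inner ℂ v (d w)).re) := by linear_combination h2
    exact mul_left_cancel₀ hs0.ne' h4
  · have hk : inner ℂ q (h - inner ℂ q h • q) = 0 := by
      rw [inner_sub_right, inner_smul_right, inner_self_one hq]; ring
    refine ⟨inner ℂ q h • q, h - inner ℂ q h • q, by abel, by rw [map_smul, map_smul, hF0.2, hF1.2],
      by rw [map_smul, norm_smul, norm_smul, hF0.2, hu, hq], ?_, norm_sub_smul_le hq h⟩
    rw [← sub_apply, add_sub_add_left_eq_sub, sub_add_cancel_left, neg_apply, smul_apply, norm_neg,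
      norm_smul, Real.norm_of_nonneg ht, hd, sub_apply, rk, InnerProductSpace.rankOne_apply, hk,
      zero_smul, sub_zero, hV]

lemma Supports.apply_rk_add_list {v : K} {w : H} {ψ : Y →L[ℝ] ℝ} {u : K} {q : H}
    (hΔ : IsSphereIsometry Δ) (hu : ‖u‖ = 1) (hq : ‖q‖ = 1) {δ t : ℝ} (ht : 0 ≤ t)
    (hgood : ∀ y ∈ Corner u q, ‖y‖ < δ → ψ (Δ (rk u q + y)) = (inner ℂ v (y w)).re)
    (l : List (H →L[ℂ] K)) (hl : ∀ U ∈ l, (∀ h, ‖U h‖ = ‖h‖) ∧ U q = u)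
    (hδ : t * l.length + δ ≤ 1) :
    t • (l.sum - (l.length : ℝ) • rk u q) ∈ Corner u q ∧
    ‖t • (l.sum - (l.length : ℝ) • rk u q)‖ ≤ t * l.length ∧
    ∀ y ∈ Corner u q, ‖y‖ < δ → ψ (Δ (rk u q + (t • (l.sum - (l.length : ℝ) • rk u q) + y))) =
      (inner ℂ v ((t • (l.sum - (l.length : ℝ) • rk u q) + y) w)).re := by
  induction l with
  | nil => exact ⟨by simp, by simp, by simpa using hgood⟩
  | cons V l ih =>
    rw [List.length_cons, Nat.cast_succ] at hδ ⊢
    obtain ⟨h1, h2, h3⟩ := ih (fun U hU => hl U (List.mem_cons_of_mem _ hU)) (by linarith)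
    obtain ⟨hV, hVq⟩ := hl V List.mem_cons_self
    have hVF : V ∈ Face u q := ⟨norm_le_one_of_isometric hV, hVq⟩
    have e : t • ((V :: l).sum - ((l.length : ℝ) + 1) • rk u q) =
        t • (l.sum - (l.length : ℝ) • rk u q) + t • (V - rk u q) := by
      rw [List.sum_cons]; module
    rw [e]
    refine ⟨(Corner u q).add_mem h1 (real_smul_mem_Corner (sub_rk_mem_Corner hu hq hVF) t),
      (norm_add_le _ _).trans ?_, fun y hy hyδ => ?_⟩
    · rw [norm_smul t (V - _), Real.norm_of_nonneg ht]
      nlinarith [norm_sub_rk_le hq hVF]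
    · exact Supports.apply_rk_add_add_smul hΔ hu hq ht h1 (by linarith) hV hVq h3 hy hyδ

variable (J : H →ₗᵢ[ℂ] K) (hH : 3 ≤ Module.rank ℂ H) (hK : 3 ≤ Module.rank ℂ K)
include J hH hK

/-- Supporting functionals take the expected values on orthogonal faces. -/
lemma Supports.apply_of_mem_Face {v : K} {w : H} {ψ : Y →L[ℝ] ℝ} (hψ : Supports Δ v w ψ)
    (hΔ : IsSphereIsometry Δ) {u : K} {q : H} (hu : ‖u‖ = 1)
    (hq : ‖q‖ = 1) (hv : ‖v‖ = 1) (hw : ‖w‖ = 1) (huv : inner ℂ u v = 0)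
    (hqw : inner ℂ q w = 0) {x : H →L[ℂ] K} (hx : x ∈ Face u q) :
    ψ (Δ x) = (inner ℂ v (x w)).re := by
  obtain ⟨V, hVq⟩ := exists_isometry_of_unit J hq hu
  refine hψ.apply_of_near hΔ hv hw (norm_eq_one_of_mem_Face hu hq hx) fun ε hε => ?_
  obtain ⟨x', hx', hx'1, hxx'⟩ := exists_interior_near hu hq hx hε
  refine ⟨_, norm_rk_add_eq_one hu hq hx' hx'1.le, hxx', ?_⟩
  obtain ⟨δ, hδ⟩ : ∃ δ, δ = min (1 / 16) ((1 - ‖x'‖) / 2) := ⟨_, rfl⟩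
  have hδ0 : 0 < δ := by rw [hδ]; exact lt_min (by norm_num) (by linarith)
  have hδ1 : δ ≤ 1 / 16 := by rw [hδ]; exact min_le_left _ _
  have hδ2 : δ ≤ (1 - ‖x'‖) / 2 := by rw [hδ]; exact min_le_right _ _
  have h1δ : 0 < 1 - δ := by linarith
  obtain ⟨l, hl0, hl, hsum⟩ := exists_average_isometries hu hq
    (real_smul_mem_Corner hx' (1 - δ)⁻¹) (by
      rw [norm_smul, norm_inv, Real.norm_of_nonneg h1δ.le, inv_mul_lt_iff₀ h1δ]
      linarith) (V := V.toContinuousLinearMap) V.norm_map hVq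
  have hlen : (0 : ℝ) < l.length := by exact_mod_cast List.length_pos_iff.2 hl0
  have h1 := (Supports.apply_rk_add_list (ψ := ψ) (v := v) (w := w) hΔ hu hq
    (δ := δ) (t := (1 - δ) / l.length)
    (by positivity) (fun y hy hyδ => hψ.apply_rk_add hΔ J hH hK hu hq hv hw huv hqw hy
      (by linarith)) l hl (by rw [div_mul_cancel₀ _ hlen.ne']; linarith)).2.2 0
    (Corner u q).zero_mem (by rwa [norm_zero])
  have e : ((1 - δ) / l.length) • (l.sum - (l.length : ℝ) • rk u q) = x' := by
    rw [← hsum, ← smul_sub, add_sub_cancel_left, smul_smul, smul_smul, div_mul_cancel₀ _ hlen.ne',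
      mul_inv_cancel₀ h1δ.ne', one_smul]
  rw [e, add_zero] at h1
  rw [h1, add_apply, rk, InnerProductSpace.rankOne_apply, hqw, zero_smul, zero_add]

omit J hH hK [CompleteSpace H] [CompleteSpace K] in
lemma eq_zero_of_mem_Corner {u : K} {q : H} (hq : ‖q‖ = 1) {x : H →L[ℂ] K}
    (hx : x ∈ Corner u q) (h : ∀ v w, ‖v‖ = 1 → ‖w‖ = 1 → inner ℂ u v = 0 → inner ℂ q w = 0 →
      (inner ℂ v (x w)).re = 0) : x = 0 := by
  ext h'
  obtain ⟨k, hk⟩ : ∃ k, k = h' - inner ℂ q h' • q := ⟨_, rfl⟩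
  have hqk : inner ℂ q k = 0 := by
    rw [hk, inner_sub_right, inner_smul_right, inner_self_one hq]; ring
  have e : x h' = x k := by rw [hk, map_sub, map_smul, hx.1, smul_zero, sub_zero]
  rw [e, zero_apply]
  by_contra h0
  have hxk : ‖x k‖ ≠ 0 := norm_ne_zero_iff.2 h0
  have hk0 : ‖k‖ ≠ 0 := by
    rw [norm_ne_zero_iff]
    rintro rfl
    exact h0 (map_zero x)
  have h1 := h (((‖x k‖⁻¹ : ℝ) : ℂ) • x k) (((‖k‖⁻¹ : ℝ) : ℂ) • k)
    (by rw [norm_smul, Complex.norm_real, norm_inv, norm_norm, inv_mul_cancel₀ hxk])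
    (by rw [norm_smul, Complex.norm_real, norm_inv, norm_norm, inv_mul_cancel₀ hk0])
    (by rw [inner_smul_right, hx.2, mul_zero]) (by rw [inner_smul_right, hqk, mul_zero])
  rw [map_smul, inner_smul_left, inner_smul_right, Complex.conj_ofReal, Complex.re_ofReal_mul,
    Complex.re_ofReal_mul, ← RCLike.re_eq_complex_re, inner_self_eq_norm_sq] at h1
  exact (by positivity : ‖x k‖⁻¹ * (‖k‖⁻¹ * ‖x k‖ ^ 2) ≠ 0) h1

/-- Sphere isometries are affine on faces. -/
lemma IsSphereIsometry.affine_of_mem_Face (hΔ : IsSphereIsometry Δ) {u : K} {q : H}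
    (hu : ‖u‖ = 1) (hq : ‖q‖ = 1) {x y : H →L[ℂ] K} (hx : x ∈ Face u q) (hy : y ∈ Face u q)
    {s : ℝ} (hs : 0 ≤ s) (hs' : s ≤ 1) :
    Δ ((1 - s) • x + s • y) = (1 - s) • Δ x + s • Δ y := by
  obtain ⟨z, hz, hze⟩ := hΔ.exists_combination hu hq hx hy hs hs'
  have hC : z - ((1 - s) • x + s • y) ∈ Corner u q := by
    have e : z - ((1 - s) • x + s • y) =
        (z - rk u q) - ((1 - s) • (x - rk u q) + s • (y - rk u q)) := by module
    rw [e]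
    exact (Corner u q).sub_mem (sub_rk_mem_Corner hu hq hz) ((Corner u q).add_mem
      (real_smul_mem_Corner (sub_rk_mem_Corner hu hq hx) _)
      (real_smul_mem_Corner (sub_rk_mem_Corner hu hq hy) _))
  rw [← hze, ← sub_eq_zero.1 (eq_zero_of_mem_Corner hq hC fun v w hv hw huv hqw => ?_)]
  obtain ⟨ψ, hψ⟩ := hΔ.exists_supports hv hw
  have h1 := congrArg ψ hze
  rw [map_add, map_smul, map_smul, hψ.apply_of_mem_Face J hH hK hΔ hu hq hv hw huv hqw hx,
    hψ.apply_of_mem_Face J hH hK hΔ hu hq hv hw huv hqw hy,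
    hψ.apply_of_mem_Face J hH hK hΔ hu hq hv hw huv hqw hz] at h1
  simp only [sub_apply, add_apply, smul_apply, inner_sub_right, inner_add_right, Complex.sub_re,
    Complex.add_re, ← Complex.coe_smul, inner_smul_right, Complex.re_ofReal_mul, h1, smul_eq_mul]
  ring

lemma Supports.apply_isometry {v : K} {w : H} {ψ : Y →L[ℝ] ℝ} (hψ : Supports Δ v w ψ)
    (hΔ : IsSphereIsometry Δ) (hv : ‖v‖ = 1) (hw : ‖w‖ = 1) {V : H →L[ℂ] K}
    (hV : ∀ h, ‖V h‖ = ‖h‖) : ψ (Δ V) = (inner ℂ v (V w)).re := by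
  obtain ⟨n, hn, hn1, hn2⟩ := exists_unit_orthogonal hH w (ContinuousLinearMap.adjoint V v)
  rw [ContinuousLinearMap.adjoint_inner_left] at hn2
  exact hψ.apply_of_mem_Face J hH hK hΔ (by rw [hV, hn]) hn hv hw (inner_eq_zero_symm.1 hn2)
    (inner_eq_zero_symm.1 hn1) ⟨norm_le_one_of_isometric hV, rfl⟩

/-- Supporting functionals take the expected values on the whole sphere. -/
lemma Supports.apply_eq {v : K} {w : H} {ψ : Y →L[ℝ] ℝ} (hψ : Supports Δ v w ψ)
    (hΔ : IsSphereIsometry Δ) (hv : ‖v‖ = 1) (hw : ‖w‖ = 1) {x : H →L[ℂ] K} (hx : ‖x‖ = 1) :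
    ψ (Δ x) = (inner ℂ v (x w)).re := by
  refine hψ.apply_of_near hΔ hv hw hx fun ε hε => ?_
  obtain ⟨u, q, y, hu, hq, hy, hxy⟩ := exists_mem_Face_near hx (half_pos hε)
  obtain ⟨z, hz, hz1, hyz⟩ := exists_interior_near hu hq hy (half_pos hε)
  refine ⟨_, norm_rk_add_eq_one hu hq hz hz1.le, ?_, ?_⟩
  · have := norm_sub_le_norm_sub_add_norm_sub x y (rk u q + z)
    linarith
  obtain ⟨V, hVq⟩ := exists_isometry_of_unit J hq hu
  obtain ⟨l, hl0, hl, hsum⟩ := exists_average_isometries hu hq hz hz1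
    (V := V.toContinuousLinearMap) V.norm_map hVq
  have hconv : Convex ℝ {x | x ∈ Face u q ∧ ψ (Δ x) = (inner ℂ v (x w)).re} := by
    rintro a ⟨ha, ha'⟩ b ⟨hb, hb'⟩ r s hr hs hrs
    obtain rfl : r = 1 - s := by linarith
    refine ⟨⟨?_, ?_⟩, ?_⟩
    · refine (norm_add_le _ _).trans ?_
      rw [norm_smul, norm_smul, Real.norm_of_nonneg hr, Real.norm_of_nonneg hs]
      nlinarith [ha.1, hb.1]
    · rw [add_apply, smul_apply, smul_apply, ha.2, hb.2]
      module
    · rw [hΔ.affine_of_mem_Face J hH hK hu hq ha hb hs (by linarith), map_add, map_smul, map_smul,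
        ha', hb']
      simp only [add_apply, smul_apply, inner_add_right, Complex.add_re, ← Complex.coe_smul,
        inner_smul_right, Complex.re_ofReal_mul, smul_eq_mul]
  have hlen : (0 : ℝ) < l.length := by exact_mod_cast List.length_pos_iff.2 hl0
  have h1 : ∑ i : Fin l.length, (l.length : ℝ)⁻¹ • l[i] ∈
      {x | x ∈ Face u q ∧ ψ (Δ x) = (inner ℂ v (x w)).re} := by
    refine hconv.sum_mem (fun _ _ => by positivity) (by simp [hlen.ne']) fun i _ => ?_
    obtain ⟨hU, hUq⟩ := hl l[i] (List.getElem_mem _)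
    exact ⟨⟨norm_le_one_of_isometric hU, hUq⟩, hψ.apply_isometry J hH hK hΔ hv hw hU⟩
  rw [← Finset.smul_sum] at h1
  have h2 : ∑ i : Fin l.length, l[i] = l.sum := Fin.sum_univ_getElem l
  rw [h2, ← hsum, inv_smul_smul₀ hlen.ne'] at h1
  exact h1.2

end Extension

section Main

variable {H K Y : Type*} [NormedAddCommGroup H] [InnerProductSpace ℂ H] [CompleteSpace H]
  [NormedAddCommGroup K] [InnerProductSpace ℂ K] [CompleteSpace K]
  [NormedAddCommGroup Y] [NormedSpace ℝ Y]

/-- `T` is a surjective real-linear isometry extending `Δ` from the unit sphere. -/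
def IsLinearExtension {X : Type*} [NormedAddCommGroup X] [NormedSpace ℝ X] (Δ T : X → Y) : Prop :=
  (∀ x y, T (x + y) = T x + T y) ∧ (∀ (r : ℝ) x, T (r • x) = r • T x) ∧ (∀ x, ‖T x‖ = ‖x‖) ∧
    Function.Surjective T ∧ ∀ x, ‖x‖ = 1 → T x = Δ x

lemma IsLinearExtension.unique {X : Type*} [NormedAddCommGroup X] [NormedSpace ℝ X]
    {Δ T T' : X → Y} (hT : IsLinearExtension Δ T) (hT' : IsLinearExtension Δ T') : T = T' := by
  ext x
  rcases eq_or_ne x 0 with rfl | hx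
  · rw [norm_eq_zero.1 ((hT.2.2.1 0).trans norm_zero),
      norm_eq_zero.1 ((hT'.2.2.1 0).trans norm_zero)]
  · have hn : ‖x‖ ≠ 0 := norm_ne_zero_iff.2 hx
    have h1 : ‖‖x‖⁻¹ • x‖ = 1 := by rw [norm_smul, norm_inv, norm_norm, inv_mul_cancel₀ hn]
    rw [← smul_inv_smul₀ hn x, hT.2.1, hT'.2.1, hT.2.2.2.2 _ h1, hT'.2.2.2.2 _ h1]

lemma IsSphereIsometry.eq_of_supports {Δ : (H →L[ℂ] K) → Y} (hΔ : IsSphereIsometry Δ)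
    (J : H →ₗᵢ[ℂ] K) (hH : 3 ≤ Module.rank ℂ H) (hK : 3 ≤ Module.rank ℂ K) {y : Y}
    (h : ∀ v w ψ, ‖v‖ = 1 → ‖w‖ = 1 → Supports Δ v w ψ → ψ y = 0) : y = 0 := by
  by_contra hy
  have hn : ‖y‖ ≠ 0 := norm_ne_zero_iff.2 hy
  obtain ⟨x, hx, hxy⟩ := hΔ.surj (‖y‖⁻¹ • y)
    (by rw [norm_smul, norm_inv, norm_norm, inv_mul_cancel₀ hn])
  obtain ⟨h', hh'⟩ : ∃ h, x h ≠ 0 := by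
    by_contra! h0
    rw [ContinuousLinearMap.ext h0 (g := 0), norm_zero] at hx
    exact zero_ne_one hx
  have hxh : ‖x h'‖ ≠ 0 := norm_ne_zero_iff.2 hh'
  have hh0 : ‖h'‖ ≠ 0 := by
    rw [norm_ne_zero_iff]
    rintro rfl
    exact hh' (map_zero x)
  have hv : ‖((‖x h'‖⁻¹ : ℝ) : ℂ) • x h'‖ = 1 := by
    rw [norm_smul, Complex.norm_real, norm_inv, norm_norm, inv_mul_cancel₀ hxh]
  have hw : ‖((‖h'‖⁻¹ : ℝ) : ℂ) • h'‖ = 1 := by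
    rw [norm_smul, Complex.norm_real, norm_inv, norm_norm, inv_mul_cancel₀ hh0]
  obtain ⟨ψ, hψ⟩ := hΔ.exists_supports hv hw
  have h1 := hψ.apply_eq J hH hK hΔ hv hw hx
  rw [hxy, map_smul, h _ _ ψ hv hw hψ, smul_zero, map_smul, inner_smul_left, inner_smul_right,
    Complex.conj_ofReal, Complex.re_ofReal_mul,
    Complex.re_ofReal_mul, ← RCLike.re_eq_complex_re, inner_self_eq_norm_sq] at h1
  exact (by positivity : ‖x h'‖⁻¹ * (‖h'‖⁻¹ * ‖x h'‖ ^ 2) ≠ 0) h1.symm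

lemma IsSphereIsometry.exists_isLinearExtension_of_isometry {Δ : (H →L[ℂ] K) → Y}
    (hΔ : IsSphereIsometry Δ)
    (J : H →ₗᵢ[ℂ] K) (hH : 3 ≤ Module.rank ℂ H) (hK : 3 ≤ Module.rank ℂ K) :
    ∃ T, IsLinearExtension Δ T := by
  obtain ⟨T, hT⟩ : ∃ T : (H →L[ℂ] K) → Y, ∀ x, T x = ‖x‖ • Δ (‖x‖⁻¹ • x) := ⟨_, fun _ => rfl⟩
  have hunit : ∀ x : H →L[ℂ] K, x ≠ 0 → ‖‖x‖⁻¹ • x‖ = 1 := fun x hx => by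
    rw [norm_smul, norm_inv, norm_norm, inv_mul_cancel₀ (norm_ne_zero_iff.2 hx)]
  have hval : ∀ v w ψ, ‖v‖ = 1 → ‖w‖ = 1 → Supports Δ v w ψ →
      ∀ x, ψ (T x) = (inner ℂ v (x w)).re := by
    intro v w ψ hv hw hψ x
    rcases eq_or_ne x 0 with rfl | hx
    · simp [hT]
    rw [hT, map_smul, hψ.apply_eq J hH hK hΔ hv hw (hunit x hx), smul_apply, ← Complex.coe_smul,
      inner_smul_right, Complex.re_ofReal_mul, smul_eq_mul,
      mul_inv_cancel_left₀ (norm_ne_zero_iff.2 hx)]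
  have hnorm : ∀ x, ‖T x‖ = ‖x‖ := by
    intro x
    rcases eq_or_ne x 0 with rfl | hx
    · simp [hT]
    rw [hT, norm_smul, norm_norm, hΔ.norm_map _ (hunit x hx), mul_one]
  have hsmul : ∀ (r : ℝ) x, T (r • x) = r • T x := by
    refine fun r x => sub_eq_zero.1 (hΔ.eq_of_supports J hH hK fun v w ψ hv hw hψ => ?_)
    rw [map_sub, map_smul, hval v w ψ hv hw hψ, hval v w ψ hv hw hψ, smul_apply,
      ← Complex.coe_smul, inner_smul_right, Complex.re_ofReal_mul, smul_eq_mul, sub_self]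
  have hext : ∀ x, ‖x‖ = 1 → T x = Δ x := fun x hx => by
    rw [hT, hx, inv_one, one_smul, one_smul]
  refine ⟨T, fun x y => ?_, hsmul, hnorm, fun y => ?_, hext⟩
  · refine sub_eq_zero.1 (hΔ.eq_of_supports J hH hK fun v w ψ hv hw hψ => ?_)
    rw [map_sub, map_add, hval v w ψ hv hw hψ, hval v w ψ hv hw hψ, hval v w ψ hv hw hψ, add_apply,
      inner_add_right, Complex.add_re, sub_self]
  · rcases eq_or_ne y 0 with rfl | hy
    · exact ⟨0, norm_eq_zero.1 ((hnorm 0).trans norm_zero)⟩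
    have hn : ‖y‖ ≠ 0 := norm_ne_zero_iff.2 hy
    obtain ⟨x, hx, hxy⟩ := hΔ.surj (‖y‖⁻¹ • y)
      (by rw [norm_smul, norm_inv, norm_norm, inv_mul_cancel₀ hn])
    exact ⟨‖y‖ • x, by rw [hsmul, hext x hx, hxy, smul_inv_smul₀ hn]⟩

lemma exists_linearIsometry_of_embedding {E F : Type*} [NormedAddCommGroup E]
    [InnerProductSpace ℂ E] [NormedAddCommGroup F] [InnerProductSpace ℂ F] [CompleteSpace F]
    {s : Set E} {t : Set F} (b : HilbertBasis s ℂ E) (c : HilbertBasis t ℂ F) (f : s ↪ t) :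
    Nonempty (E →ₗᵢ[ℂ] F) :=
  ⟨((c.orthonormal.comp f f.injective).orthogonalFamily.linearIsometry).comp
    b.repr.toLinearIsometry⟩

/-- Of two Hilbert spaces, one embeds isometrically in the other. -/
lemma exists_linearIsometry_or (H K : Type*) [NormedAddCommGroup H] [InnerProductSpace ℂ H]
    [CompleteSpace H] [NormedAddCommGroup K] [InnerProductSpace ℂ K] [CompleteSpace K] :
    Nonempty (H →ₗᵢ[ℂ] K) ∨ Nonempty (K →ₗᵢ[ℂ] H) := by
  obtain ⟨s, b, -⟩ := exists_hilbertBasis ℂ H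
  obtain ⟨t, c, -⟩ := exists_hilbertBasis ℂ K
  rcases Function.Embedding.total s t with ⟨⟨f⟩⟩ | ⟨⟨f⟩⟩
  · exact .inl (exists_linearIsometry_of_embedding b c f)
  · exact .inr (exists_linearIsometry_of_embedding c b f)

lemma IsSphereIsometry.exists_isLinearExtension {Δ : (H →L[ℂ] K) → Y}
    (hΔ : IsSphereIsometry Δ) (hH : 3 ≤ Module.rank ℂ H) (hK : 3 ≤ Module.rank ℂ K) :
    ∃ T, IsLinearExtension Δ T := by
  rcases exists_linearIsometry_or H K with ⟨⟨J⟩⟩ | ⟨⟨J⟩⟩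
  · exact hΔ.exists_isLinearExtension_of_isometry J hH hK
  have hΔ' : IsSphereIsometry fun x : K →L[ℂ] H => Δ (ContinuousLinearMap.adjoint x) := by
    refine ⟨fun x hx => hΔ.norm_map _ (by rwa [LinearIsometryEquiv.norm_map]), fun y hy => ?_,
      fun x y hx hy => ?_⟩
    · obtain ⟨x, hx, hxy⟩ := hΔ.surj y hy
      exact ⟨ContinuousLinearMap.adjoint x, by rwa [LinearIsometryEquiv.norm_map],
        by rwa [ContinuousLinearMap.adjoint_adjoint]⟩
    · rw [hΔ.iso _ _ (by rwa [LinearIsometryEquiv.norm_map])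
        (by rwa [LinearIsometryEquiv.norm_map]), ← map_sub, LinearIsometryEquiv.norm_map]
  obtain ⟨T, hadd, hsmul, hnorm, hsurj, hext⟩ :=
    hΔ'.exists_isLinearExtension_of_isometry J hK hH
  refine ⟨fun x => T (ContinuousLinearMap.adjoint x), fun x y => by simp only [map_add, hadd],
    fun r x => ?_, fun x => by simp only [hnorm, LinearIsometryEquiv.norm_map], fun y => ?_,
    fun x hx => ?_⟩
  · beta_reduce
    rw [← hsmul, ← Complex.coe_smul, LinearIsometryEquiv.map_smulₛₗ, Complex.conj_ofReal,
      Complex.coe_smul]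
  · obtain ⟨x, hx⟩ := hsurj y
    exact ⟨ContinuousLinearMap.adjoint x, by simp only [ContinuousLinearMap.adjoint_adjoint, hx]⟩
  · exact (hext _ (by rwa [LinearIsometryEquiv.norm_map])).trans
      (congrArg Δ (ContinuousLinearMap.adjoint_adjoint x))

end Main

end OperatorSphere

/-- the type 1 Cartan factor `B(H, K)` with `dim H ≥ 3` and
`dim K ≥ 3` satisfies the Mazur–Ulam property: every surjective isometry between
the unit sphere of `B(H, K)` and the unit sphere of a real Banach space `Y` admits
a unique extension to a surjective real-linear isometry from `B(H, K)` onto `Y`. -/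
theorem mazur_ulam_property_operators_rank_ge_three
    {H K : Type*} [NormedAddCommGroup H] [InnerProductSpace ℂ H] [CompleteSpace H]
    [NormedAddCommGroup K] [InnerProductSpace ℂ K] [CompleteSpace K]
    (hH : 3 ≤ Module.rank ℂ H) (hK : 3 ≤ Module.rank ℂ K)
    {Y : Type*} [NormedAddCommGroup Y] [NormedSpace ℝ Y] [CompleteSpace Y]
    (Δ : (H →L[ℂ] K) → Y)
    (hmap : ∀ x : H →L[ℂ] K, ‖x‖ = 1 → ‖Δ x‖ = 1)
    (hsurj : ∀ y : Y, ‖y‖ = 1 → ∃ x : H →L[ℂ] K, ‖x‖ = 1 ∧ Δ x = y)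
    (hiso : ∀ x y : H →L[ℂ] K, ‖x‖ = 1 → ‖y‖ = 1 → ‖Δ x - Δ y‖ = ‖x - y‖) :
    ∃! T : (H →L[ℂ] K) → Y,
      (∀ x y : H →L[ℂ] K, T (x + y) = T x + T y) ∧
      (∀ (r : ℝ) (x : H →L[ℂ] K), T (r • x) = r • T x) ∧
      (∀ x : H →L[ℂ] K, ‖T x‖ = ‖x‖) ∧
      Function.Surjective T ∧
      (∀ x : H →L[ℂ] K, ‖x‖ = 1 → T x = Δ x) := by
  obtain ⟨T, hT⟩ := OperatorSphere.IsSphereIsometry.exists_isLinearExtension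
    ⟨hmap, hsurj, hiso⟩ hH hK
  exact ⟨T, hT, fun T' hT' => OperatorSphere.IsLinearExtension.unique hT' hT⟩
end

section
/- Every complex Hilbert space satisfies the Mazur–Ulam property: if H is a non-zero complex Hilbert space, Y is a real Banach space, and Δ : S(H) → S(Y) is a surjective isometry between the unit spheres, then Δ extends to a surjective real-linear isometry from H onto Y. -/
open Real Filter Topology

lemma norm_inv_norm_smul {V : Type*} [NormedAddCommGroup V] [NormedSpace ℝ V] {x : V}
    (hx : x ≠ 0) : ‖‖x‖⁻¹ • x‖ = 1 :=
  norm_smul_inv_norm (𝕜 := ℝ) hx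

section Rhombus

variable {Y : Type*} [NormedAddCommGroup Y] [NormedSpace ℝ Y]

/-- The ellipse with conjugate semi-axes `u` and `v`, parametrised by the eccentric angle. -/
noncomputable def ellipse (u v : Y) (θ : ℝ) : Y := cos θ • u + sin θ • v

lemma ellipse_add_pi_div_two (u v : Y) (θ : ℝ) :
    ellipse u v (θ + π / 2) = -sin θ • u + cos θ • v := by
  simp [ellipse, cos_add_pi_div_two, sin_add_pi_div_two]

lemma norm_ellipse_add_pi (u v : Y) (θ : ℝ) :
    ‖ellipse u v (θ + π / 2 + π / 2)‖ = ‖ellipse u v θ‖ := by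
  rw [← norm_neg (ellipse u v θ), ellipse_add_pi_div_two, cos_add_pi_div_two, sin_add_pi_div_two]
  congr 1
  simp only [ellipse]
  module

lemma ellipse_sub_add_ellipse_add (u v : Y) (θ δ : ℝ) :
    ellipse u v (θ - δ) + ellipse u v (θ + δ) = (2 * cos δ) • ellipse u v θ := by
  simp only [ellipse, cos_add, cos_sub, sin_add, sin_sub]
  module

lemma ellipse_sub_sub_ellipse_add (u v : Y) (θ δ : ℝ) :
    ellipse u v (θ - δ) - ellipse u v (θ + δ) = (-(2 * sin δ)) • ellipse u v (θ + π / 2) := by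
  rw [ellipse_add_pi_div_two]
  simp only [ellipse, cos_add, cos_sub, sin_add, sin_sub]
  module

/-- Both the point at angle `θ` and its conjugate point lie on the unit sphere. -/
def IsContact (u v : Y) (θ : ℝ) : Prop :=
  ‖ellipse u v θ‖ = 1 ∧ ‖ellipse u v (θ + π / 2)‖ = 1

lemma periodic_isContact (u v : Y) : Function.Periodic (IsContact u v) (π / 2) := by
  intro θ
  simp only [IsContact, norm_ellipse_add_pi, and_comm]

lemma IsContact.midpoint
    (hr : ∀ u v : Y, ‖u‖ = 1 → ‖v‖ = 1 → ‖u + v‖ ^ 2 + ‖u - v‖ ^ 2 = 4) {u v : Y} {θ δ : ℝ}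
    (hδ : cos (2 * δ) ≠ 0) (h₁ : IsContact u v (θ - δ)) (h₂ : IsContact u v (θ + δ)) :
    IsContact u v θ := by
  have e₁ := hr _ _ h₁.1 h₂.1
  have e₂ := hr _ _ h₁.2 h₂.2
  rw [sub_add_eq_add_sub, add_right_comm] at e₂
  rw [ellipse_sub_add_ellipse_add, ellipse_sub_sub_ellipse_add] at e₁ e₂
  simp only [norm_smul, norm_ellipse_add_pi, mul_pow, Real.norm_eq_abs, sq_abs, neg_sq] at e₁ e₂
  rw [cos_two_mul'] at hδ
  have hcs := cos_sq_add_sin_sq δ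
  set a := ‖ellipse u v θ‖
  set b := ‖ellipse u v (θ + π / 2)‖
  have hab : a ^ 2 = b ^ 2 := by
    have : (cos δ ^ 2 - sin δ ^ 2) * (a ^ 2 - b ^ 2) = 0 := by linarith
    linarith [(mul_eq_zero.mp this).resolve_left hδ]
  have ha1 : a ^ 2 = 1 := by
    rw [← hab] at e₁
    linear_combination e₁ / 4 - a ^ 2 * hcs
  have hb1 : b ^ 2 = 1 := hab ▸ ha1
  exact ⟨(pow_eq_one_iff_of_nonneg (norm_nonneg _) two_ne_zero).mp ha1,
    (pow_eq_one_iff_of_nonneg (norm_nonneg _) two_ne_zero).mp hb1⟩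

lemma isContact_dyadic
    (hr : ∀ u v : Y, ‖u‖ = 1 → ‖v‖ = 1 → ‖u + v‖ ^ 2 + ‖u - v‖ ^ 2 = 4) {u v : Y}
    (hu : ‖u‖ = 1) (hv : ‖v‖ = 1) (huv : ‖u + v‖ = ‖u - v‖) (n : ℕ) :
    ∀ k : ℤ, IsContact u v (k * (π / 4 / 2 ^ n)) := by
  induction n with
  | zero =>
    have h0 : IsContact u v 0 := by simp [IsContact, ellipse, hu, hv]
    have h1 : IsContact u v (π / 4) := by
      have hs : ‖u + v‖ ^ 2 = 2 := by
        have := hr u v hu hv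
        rw [← huv] at this
        linarith
      have hs' : ‖u + v‖ = √2 := by rw [← hs, sqrt_sq (norm_nonneg _)]
      have h2 : |√2 / 2| * √2 = 1 := by
        rw [abs_of_nonneg (by positivity), div_mul_eq_mul_div, mul_self_sqrt two_pos.le]
        norm_num
      constructor
      · rw [ellipse, cos_pi_div_four, sin_pi_div_four, ← smul_add, norm_smul, hs', norm_eq_abs, h2]
      · rw [ellipse_add_pi_div_two, cos_pi_div_four, sin_pi_div_four, neg_smul, neg_add_eq_sub,
          ← smul_sub, norm_smul, norm_sub_rev, ← huv, hs', norm_eq_abs, h2]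
    intro k
    obtain ⟨j, rfl | rfl⟩ := Int.even_or_odd' k
    · have := (periodic_isContact u v).int_mul j 0
      rw [show ((2 * j : ℤ) : ℝ) * (π / 4 / 2 ^ 0) = 0 + j * (π / 2) by push_cast; ring]
      exact this ▸ h0
    · have := (periodic_isContact u v).int_mul j (π / 4)
      rw [show ((2 * j + 1 : ℤ) : ℝ) * (π / 4 / 2 ^ 0) = π / 4 + j * (π / 2) by push_cast; ring]
      exact this ▸ h1
  | succ n ih =>
    intro k
    obtain ⟨j, rfl | rfl⟩ := Int.even_or_odd' k
    · convert ih j using 1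
      push_cast
      ring
    · have hpos : 0 < π / 4 / 2 ^ n := by positivity
      have hle : π / 4 / 2 ^ n ≤ π / 4 := div_le_self (by positivity) (one_le_pow₀ one_le_two)
      refine IsContact.midpoint hr (δ := π / 4 / 2 ^ (n + 1)) ?_ ?_ ?_
      · rw [show 2 * (π / 4 / 2 ^ (n + 1)) = π / 4 / 2 ^ n by ring]
        exact (cos_pos_of_mem_Ioo ⟨by linarith [pi_pos], by linarith [pi_pos]⟩).ne'
      · convert ih j using 1
        push_cast
        ring
      · convert ih (j + 1) using 1
        push_cast
        ring

/-- In a normed space satisfying the rhombus law, isosceles-orthogonal unit vectors span a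
Euclidean plane. -/
lemma norm_ellipse_eq_one
    (hr : ∀ u v : Y, ‖u‖ = 1 → ‖v‖ = 1 → ‖u + v‖ ^ 2 + ‖u - v‖ ^ 2 = 4) {u v : Y}
    (hu : ‖u‖ = 1) (hv : ‖v‖ = 1) (huv : ‖u + v‖ = ‖u - v‖) (θ : ℝ) :
    ‖ellipse u v θ‖ = 1 := by
  have hclosed : IsClosed {t : ℝ | ‖ellipse u v t‖ = 1} := by
    refine isClosed_eq ?_ continuous_const
    unfold ellipse
    fun_prop
  have hh : Tendsto (fun n : ℕ => π / 4 / 2 ^ n) atTop (𝓝 0) :=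
    tendsto_const_nhds.div_atTop (tendsto_pow_atTop_atTop_of_one_lt one_lt_two)
  have hlim : Tendsto (fun n : ℕ => (⌊θ / (π / 4 / 2 ^ n)⌋ : ℝ) * (π / 4 / 2 ^ n)) atTop (𝓝 θ) := by
    refine tendsto_of_tendsto_of_tendsto_of_le_of_le (g := fun n => θ - π / 4 / 2 ^ n)
      (by simpa using tendsto_const_nhds.sub hh) tendsto_const_nhds (fun n => ?_) (fun n => ?_)
    · have hpos : 0 < π / 4 / 2 ^ n := by positivity
      have := (div_lt_iff₀ hpos).mp (Int.lt_floor_add_one (θ / (π / 4 / 2 ^ n)))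
      simp only
      linarith
    · have hpos : 0 < π / 4 / 2 ^ n := by positivity
      exact (le_div_iff₀ hpos).mp (Int.floor_le _)
  exact hclosed.mem_of_tendsto hlim
    (Eventually.of_forall fun n => (isContact_dyadic hr hu hv huv n _).1)

end Rhombus

section Sphere

variable {E Y : Type*} [NormedAddCommGroup E] [InnerProductSpace ℝ E]
  [NormedAddCommGroup Y] [NormedSpace ℝ Y] {Δ : E → Y}

lemma sphere_isometry_neg
    (hmap : ∀ x : E, ‖x‖ = 1 → ‖Δ x‖ = 1)
    (hsurj : ∀ y : Y, ‖y‖ = 1 → ∃ x : E, ‖x‖ = 1 ∧ Δ x = y)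
    (hiso : ∀ x y : E, ‖x‖ = 1 → ‖y‖ = 1 → ‖Δ x - Δ y‖ = ‖x - y‖) {x : E} (hx : ‖x‖ = 1) :
    Δ (-x) = -Δ x := by
  obtain ⟨z, hz, hzx⟩ := hsurj (-Δ x) (by rw [norm_neg, hmap x hx])
  have h2 : ‖x - z‖ = 2 := by
    rw [← hiso x z hx hz, hzx, sub_neg_eq_add, ← two_smul ℝ, norm_smul, hmap x hx]
    norm_num
  have hs := norm_sub_sq_real x z
  have h0 : ‖x + z‖ ^ 2 = 0 := by
    rw [norm_add_sq_real]
    rw [h2, hx, hz] at hs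
    rw [hx, hz]
    linarith
  rw [← hzx, ← eq_neg_of_add_eq_zero_right (norm_eq_zero.mp (pow_eq_zero_iff two_ne_zero |>.mp h0))]

lemma sphere_isometry_norm_add
    (hmap : ∀ x : E, ‖x‖ = 1 → ‖Δ x‖ = 1)
    (hsurj : ∀ y : Y, ‖y‖ = 1 → ∃ x : E, ‖x‖ = 1 ∧ Δ x = y)
    (hiso : ∀ x y : E, ‖x‖ = 1 → ‖y‖ = 1 → ‖Δ x - Δ y‖ = ‖x - y‖) {x y : E}
    (hx : ‖x‖ = 1) (hy : ‖y‖ = 1) : ‖Δ x + Δ y‖ = ‖x + y‖ := by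
  have := hiso x (-y) hx (by rwa [norm_neg])
  rwa [sphere_isometry_neg hmap hsurj hiso hy, sub_neg_eq_add, sub_neg_eq_add] at this

lemma sphere_isometry_cos_sin
    (hmap : ∀ x : E, ‖x‖ = 1 → ‖Δ x‖ = 1)
    (hsurj : ∀ y : Y, ‖y‖ = 1 → ∃ x : E, ‖x‖ = 1 ∧ Δ x = y)
    (hiso : ∀ x y : E, ‖x‖ = 1 → ‖y‖ = 1 → ‖Δ x - Δ y‖ = ‖x - y‖) {x y : E}
    (hx : ‖x‖ = 1) (hy : ‖y‖ = 1) (hxy : inner ℝ x y = 0) (θ : ℝ) :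
    Δ (cos θ • x + sin θ • y) = cos θ • Δ x + sin θ • Δ y := by
  have hadd := fun x y => @sphere_isometry_norm_add _ _ _ _ _ _ _ hmap hsurj hiso x y
  have hr : ∀ u v : Y, ‖u‖ = 1 → ‖v‖ = 1 → ‖u + v‖ ^ 2 + ‖u - v‖ ^ 2 = 4 := by
    intro u v hu hv
    obtain ⟨a, ha, rfl⟩ := hsurj u hu
    obtain ⟨b, hb, rfl⟩ := hsurj v hv
    rw [hiso a b ha hb, hadd a b ha hb, norm_add_sq_real, norm_sub_sq_real, ha, hb]
    ring
  have hortho : ‖Δ x + Δ y‖ = ‖Δ x - Δ y‖ := by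
    rw [hiso x y hx hy, hadd x y hx hy]
    refine (sq_eq_sq₀ (norm_nonneg _) (norm_nonneg _)).mp ?_
    rw [norm_add_sq_real, norm_sub_sq_real, hxy]
    ring
  have hE := norm_ellipse_eq_one hr (hmap x hx) (hmap y hy) hortho
  obtain ⟨z, hz, hzθ⟩ := hsurj _ (hE θ)
  -- The point at angle `φ` has the same chord to the point at angle `θ` as in the Euclidean plane.
  have chord : ∀ φ : ℝ,
      ‖ellipse (Δ x) (Δ y) θ - ellipse (Δ x) (Δ y) φ‖ ^ 2 = 2 - 2 * cos (φ - θ) := by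
    intro φ
    have h := ellipse_sub_sub_ellipse_add (Δ x) (Δ y) ((θ + φ) / 2) ((φ - θ) / 2)
    rw [show (θ + φ) / 2 - (φ - θ) / 2 = θ by ring,
      show (θ + φ) / 2 + (φ - θ) / 2 = φ by ring] at h
    rw [h, norm_smul, hE, mul_one, norm_eq_abs, sq_abs,
      show cos (φ - θ) = cos (2 * ((φ - θ) / 2)) by ring_nf, cos_two_mul']
    linear_combination 2 * cos_sq_add_sin_sq ((φ - θ) / 2)
  have hzx : inner ℝ z x = cos θ := by
    have h := chord 0
    rw [← hzθ, show ellipse (Δ x) (Δ y) 0 = Δ x by simp [ellipse], hiso z x hz hx,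
      norm_sub_sq_real, hz, hx, zero_sub, cos_neg] at h
    linarith
  have hzy : inner ℝ z y = sin θ := by
    have h := chord (π / 2)
    rw [← hzθ, show ellipse (Δ x) (Δ y) (π / 2) = Δ y by simp [ellipse], hiso z y hz hy,
      norm_sub_sq_real, hz, hy, cos_pi_div_two_sub] at h
    linarith
  have hzero : ‖z - (cos θ • x + sin θ • y)‖ ^ 2 = 0 := by
    rw [norm_sub_sq_real, norm_add_sq_real, inner_add_right]
    simp only [inner_smul_right, inner_smul_left, norm_smul, hz, hx, hy, hzx, hzy, hxy, mul_one,
      norm_eq_abs, sq_abs]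
    simp only [mul_zero]
    linear_combination -cos_sq_add_sin_sq θ
  rw [← sub_eq_zero.mp (norm_eq_zero.mp (pow_eq_zero_iff two_ne_zero |>.mp hzero)), hzθ, ellipse]

/-- The positively homogeneous extension of a map defined on the unit sphere. -/
noncomputable def radialExtension (Δ : E → Y) (x : E) : Y := ‖x‖ • Δ (‖x‖⁻¹ • x)

lemma radialExtension_of_norm_eq_one {x : E} (hx : ‖x‖ = 1) :
    radialExtension Δ x = Δ x := by
  simp [radialExtension, hx]

lemma radialExtension_smul_of_nonneg {r : ℝ} (hr : 0 ≤ r) (x : E) :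
    radialExtension Δ (r • x) = r • radialExtension Δ x := by
  rcases hr.eq_or_lt with rfl | hr
  · simp [radialExtension]
  · simp only [radialExtension, norm_smul, norm_eq_abs, abs_of_pos hr, smul_smul, mul_inv]
    congr 3
    field_simp

lemma norm_radialExtension (hmap : ∀ x : E, ‖x‖ = 1 → ‖Δ x‖ = 1) (x : E) :
    ‖radialExtension Δ x‖ = ‖x‖ := by
  rcases eq_or_ne x 0 with rfl | hx
  · simp [radialExtension]
  · rw [radialExtension, norm_smul, norm_norm, hmap _ (norm_inv_norm_smul hx), mul_one]

lemma radialExtension_smul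
    (hmap : ∀ x : E, ‖x‖ = 1 → ‖Δ x‖ = 1)
    (hsurj : ∀ y : Y, ‖y‖ = 1 → ∃ x : E, ‖x‖ = 1 ∧ Δ x = y)
    (hiso : ∀ x y : E, ‖x‖ = 1 → ‖y‖ = 1 → ‖Δ x - Δ y‖ = ‖x - y‖) (r : ℝ) (x : E) :
    radialExtension Δ (r • x) = r • radialExtension Δ x := by
  have hneg : ∀ x : E, radialExtension Δ (-x) = -radialExtension Δ x := by
    intro x
    rcases eq_or_ne x 0 with rfl | hx
    · simp [radialExtension]
    · rw [radialExtension, norm_neg, smul_neg,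
        sphere_isometry_neg hmap hsurj hiso (norm_inv_norm_smul hx), smul_neg, radialExtension]
  rcases le_total 0 r with hr | hr
  · exact radialExtension_smul_of_nonneg hr x
  · rw [← neg_neg (r • x), hneg, ← neg_smul, radialExtension_smul_of_nonneg (neg_nonneg.mpr hr),
      neg_smul, neg_neg]

lemma radialExtension_orthonormal
    (hmap : ∀ x : E, ‖x‖ = 1 → ‖Δ x‖ = 1)
    (hsurj : ∀ y : Y, ‖y‖ = 1 → ∃ x : E, ‖x‖ = 1 ∧ Δ x = y)
    (hiso : ∀ x y : E, ‖x‖ = 1 → ‖y‖ = 1 → ‖Δ x - Δ y‖ = ‖x - y‖) {x y : E}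
    (hx : ‖x‖ = 1) (hy : ‖y‖ = 1) (hxy : inner ℝ x y = 0) (a b : ℝ) :
    radialExtension Δ (a • x + b • y) = a • Δ x + b • Δ y := by
  set z : ℂ := ⟨a, b⟩
  have ha : a = ‖z‖ * cos z.arg := (Complex.norm_mul_cos_arg z).symm
  have hb : b = ‖z‖ * sin z.arg := (Complex.norm_mul_sin_arg z).symm
  have hunit : ‖cos z.arg • x + sin z.arg • y‖ = 1 := by
    refine (pow_eq_one_iff_of_nonneg (norm_nonneg _) two_ne_zero).mp ?_
    rw [norm_add_sq_real]
    simp only [inner_smul_right, inner_smul_left, norm_smul, hx, hy, hxy, mul_one, norm_eq_abs,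
      sq_abs, mul_zero, add_zero, cos_sq_add_sin_sq]
  rw [ha, hb]
  simp only [mul_smul, ← smul_add]
  rw [radialExtension_smul_of_nonneg (norm_nonneg z), radialExtension_of_norm_eq_one hunit,
    sphere_isometry_cos_sin hmap hsurj hiso hx hy hxy]

lemma radialExtension_add
    (hmap : ∀ x : E, ‖x‖ = 1 → ‖Δ x‖ = 1)
    (hsurj : ∀ y : Y, ‖y‖ = 1 → ∃ x : E, ‖x‖ = 1 ∧ Δ x = y)
    (hiso : ∀ x y : E, ‖x‖ = 1 → ‖y‖ = 1 → ‖Δ x - Δ y‖ = ‖x - y‖) (x y : E) :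
    radialExtension Δ (x + y) = radialExtension Δ x + radialExtension Δ y := by
  have hsmul := radialExtension_smul hmap hsurj hiso
  rcases eq_or_ne x 0 with rfl | hx
  · simp [radialExtension]
  obtain ⟨e, he⟩ : ∃ e, e = ‖x‖⁻¹ • x := ⟨_, rfl⟩
  have he1 : ‖e‖ = 1 := he ▸ norm_inv_norm_smul hx
  have hxe : x = ‖x‖ • e := he ▸ (smul_inv_smul₀ (norm_ne_zero_iff.mpr hx) x).symm
  obtain ⟨w, hw⟩ : ∃ w, w = y - inner ℝ e y • e := ⟨_, rfl⟩
  have hy : y = inner ℝ e y • e + w := by rw [hw]; abel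
  rcases eq_or_ne w 0 with hw0 | hw0
  · rw [hw0, add_zero] at hy
    generalize inner ℝ e y = c at hy
    generalize ‖x‖ = b at hxe
    subst hxe
    rw [hy, ← add_smul, hsmul, hsmul, hsmul, add_smul]
  have hew : inner ℝ e w = 0 := by
    rw [hw, inner_sub_right, inner_smul_right, real_inner_self_eq_norm_sq, he1]
    ring
  set f := ‖w‖⁻¹ • w with hf
  have hf1 : ‖f‖ = 1 := norm_inv_norm_smul hw0
  have hef : inner ℝ e f = 0 := by rw [hf, inner_smul_right, hew, mul_zero]
  have hwf : w = ‖w‖ • f := (smul_inv_smul₀ (norm_ne_zero_iff.mpr hw0) w).symm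
  have hlin := radialExtension_orthonormal hmap hsurj hiso he1 hf1 hef
  rw [hwf] at hy
  have hsum : x + y = (‖x‖ + inner ℝ e y) • e + ‖w‖ • f := by
    rw [add_smul, add_assoc, ← hy, ← hxe]
  have hTx : radialExtension Δ x = ‖x‖ • Δ e := by rw [he, radialExtension]
  have hTy : radialExtension Δ y = inner ℝ e y • Δ e + ‖w‖ • Δ f := by rw [← hlin, ← hy]
  rw [hsum, hlin, hTx, hTy, add_smul, add_assoc]

lemma radialExtension_surjective
    (hsurj : ∀ y : Y, ‖y‖ = 1 → ∃ x : E, ‖x‖ = 1 ∧ Δ x = y) :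
    Function.Surjective (radialExtension Δ) := by
  intro y
  rcases eq_or_ne y 0 with rfl | hy
  · exact ⟨0, by simp [radialExtension]⟩
  obtain ⟨x, hx, hxy⟩ := hsurj (‖y‖⁻¹ • y) (norm_inv_norm_smul hy)
  refine ⟨‖y‖ • x, ?_⟩
  rw [radialExtension_smul_of_nonneg (norm_nonneg y), radialExtension_of_norm_eq_one hx, hxy,
    smul_inv_smul₀ (norm_ne_zero_iff.mpr hy)]

end Sphere

/-- every (non-zero) complex Hilbert space satisfies the Mazur–Ulam
property: every surjective isometry from its unit sphere onto the unit sphere of a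
real Banach space `Y` extends to a surjective real-linear isometry onto `Y`. -/
theorem mazur_ulam_property_complex_hilbert
    {H : Type*} [NormedAddCommGroup H] [InnerProductSpace ℂ H] [CompleteSpace H]
    [Nontrivial H]
    {Y : Type*} [NormedAddCommGroup Y] [NormedSpace ℝ Y] [CompleteSpace Y]
    (Δ : H → Y)
    (hmap : ∀ x : H, ‖x‖ = 1 → ‖Δ x‖ = 1)
    (hsurj : ∀ y : Y, ‖y‖ = 1 → ∃ x : H, ‖x‖ = 1 ∧ Δ x = y)
    (hiso : ∀ x y : H, ‖x‖ = 1 → ‖y‖ = 1 → ‖Δ x - Δ y‖ = ‖x - y‖) :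
    ∃ T : H → Y,
      (∀ x y : H, T (x + y) = T x + T y) ∧
      (∀ (r : ℝ) (x : H), T (r • x) = r • T x) ∧
      (∀ x : H, ‖T x‖ = ‖x‖) ∧
      Function.Surjective T ∧
      (∀ x : H, ‖x‖ = 1 → T x = Δ x) := by
  let _ := InnerProductSpace.rclikeToReal ℂ H
  exact ⟨radialExtension Δ, radialExtension_add hmap hsurj hiso,
    radialExtension_smul hmap hsurj hiso,
    norm_radialExtension hmap, radialExtension_surjective hsurj,
    fun _ hx => radialExtension_of_norm_eq_one hx⟩
end

section
/- Let H be a non-zero complex Hilbert space, let Y be a real Banach space, and let Δ : S(H) → S(Y) be a surjective isometry between the unit spheres. Then the norm of Y satisfies ‖x + y‖² + ‖x − y‖² = 4 for all x, y ∈ S(Y); consequently (by Day's theorem) Y is a Hilbert space, i.e. the norm of Y comes from an inner product. -/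
/-- A closed subset of `ℝ` containing `a` and `b`, and closed under midpoints of its points in
`[a, b]`, contains `[a, b]`. -/
theorem IsClosed.Icc_subset_of_midpoint_mem {S : Set ℝ} (hS : IsClosed S) {a b : ℝ}
    (ha : a ∈ S) (hb : b ∈ S)
    (hmid : ∀ s ∈ S ∩ Set.Icc a b, ∀ t ∈ S ∩ Set.Icc a b, (s + t) / 2 ∈ S) :
    Set.Icc a b ⊆ S := by
  intro t ht
  have hl : IsCompact (S ∩ Set.Icc a t) := isCompact_Icc.inter_left hS
  have hr : IsCompact (S ∩ Set.Icc t b) := isCompact_Icc.inter_left hS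
  obtain ⟨s, ⟨hsS, hs⟩, hsmax⟩ := hl.exists_isGreatest ⟨a, ha, le_rfl, ht.1⟩
  obtain ⟨r, ⟨hrS, hr⟩, hrmin⟩ := hr.exists_isLeast ⟨b, hb, ht.2, le_rfl⟩
  have hm := hmid s ⟨hsS, hs.1, hs.2.trans ht.2⟩ r ⟨hrS, ht.1.trans hr.1, hr.2⟩
  have hsr : s ≤ r := hs.2.trans hr.1
  rcases le_total ((s + r) / 2) t with h | h
  · have := hsmax ⟨hm, by linarith [hs.1], h⟩
    rwa [show t = s by linarith [hs.2, hr.1]]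
  · have := hrmin ⟨hm, h, by linarith [hr.2]⟩
    rwa [show t = r by linarith [hs.2, hr.1]]

open Complex in
/-- A norm on the plane that satisfies the parallelogram identity on unit vectors and for which
`1`, `I` is a pair of unit vectors of maximal determinant is the Euclidean norm. -/
theorem Complex.eq_norm_of_unit_parallelogram {N : ℂ → ℝ} (hcont : Continuous N)
    (hnonneg : ∀ z, 0 ≤ N z) (hsmul : ∀ (r : ℝ) z, N (r * z) = |r| * N z)
    (hpar : ∀ z w, N z = 1 → N w = 1 → N (z + w) ^ 2 + N (z - w) ^ 2 = 4)
    (h_one : N 1 = 1) (h_I : N I = 1)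
    (hdet : ∀ z w : ℂ, z.re * w.im - z.im * w.re ≤ N z * N w) (z : ℂ) : N z = ‖z‖ := by
  have hneg : ∀ z, N (-z) = N z := fun z => by simpa using hsmul (-1) z
  have hself : ∀ u : ℂ, normSq u ≤ N u * N (I * u) := fun u => by
    have := hdet u (I * u)
    simp only [mul_re, mul_im, I_re, I_im] at this
    rw [normSq_apply]
    linarith
  have hexp : ∀ θ : ℝ, exp (θ * I) = Real.cos θ + Real.sin θ * I := fun θ => by
    rw [exp_mul_I, ofReal_cos, ofReal_sin]
  set A : Set ℝ := {θ | N (exp (θ * I)) = 1 ∧ N (I * exp (θ * I)) = 1} with hA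
  have hclosed : IsClosed A :=
    (isClosed_eq (by fun_prop) continuous_const).inter
      (isClosed_eq (by fun_prop) continuous_const)
  have hzero : (0 : ℝ) ∈ A := by simp [hA, h_one, h_I]
  have hadd : ∀ θ ∈ A, θ + Real.pi / 2 ∈ A := by
    rintro θ ⟨h₁, h₂⟩
    have : exp (((θ + Real.pi / 2 : ℝ) : ℂ) * I) = I * exp (θ * I) := by
      push_cast
      rw [add_mul, exp_add, exp_pi_div_two_mul_I, mul_comm]
    refine ⟨by rwa [this], ?_⟩
    rw [this, ← mul_assoc, I_mul_I, neg_one_mul, hneg, h₁]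
  have hsub : ∀ θ, θ + Real.pi / 2 ∈ A → θ ∈ A := by
    rintro θ ⟨h₁, h₂⟩
    have : exp (((θ + Real.pi / 2 : ℝ) : ℂ) * I) = I * exp (θ * I) := by
      push_cast
      rw [add_mul, exp_add, exp_pi_div_two_mul_I, mul_comm]
    rw [this] at h₁ h₂
    rw [← mul_assoc, I_mul_I, neg_one_mul, hneg] at h₂
    exact ⟨h₂, h₁⟩
  have hmid : ∀ s ∈ A ∩ Set.Icc 0 (Real.pi / 2), ∀ t ∈ A ∩ Set.Icc 0 (Real.pi / 2),
      (s + t) / 2 ∈ A := by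
    rintro s ⟨⟨hs₁, hs₂⟩, hs⟩ t ⟨⟨ht₁, ht₂⟩, ht⟩
    set u := exp (s * I) + exp (t * I) with hu
    set v := exp (s * I) - exp (t * I) with hv
    have hc : 0 < Real.cos ((s - t) / 2) :=
      Real.cos_pos_of_mem_Ioo ⟨by linarith [hs.1, ht.2, Real.pi_pos],
        by linarith [hs.2, ht.1, Real.pi_pos]⟩
    have hue : u = ((2 * Real.cos ((s - t) / 2) : ℝ) : ℂ) * exp (((s + t) / 2 : ℝ) * I) := by
      rw [hu, hexp, hexp, hexp]
      apply Complex.ext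
      · simp [-ofReal_add, -ofReal_sub, -ofReal_div, -ofReal_cos, -ofReal_sin]
        rw [Real.cos_add_cos]; ring
      · simp [-ofReal_add, -ofReal_sub, -ofReal_div, -ofReal_cos, -ofReal_sin]
        rw [Real.sin_add_sin]; ring
    have huv : normSq u + normSq v = 4 := by
      have h₁ := Real.sin_sq_add_cos_sq s
      have h₂ := Real.sin_sq_add_cos_sq t
      rw [hu, hv, hexp, hexp, normSq_apply, normSq_apply]
      simp only [add_re, add_im, sub_re, sub_im, ofReal_re, ofReal_im, mul_re, mul_im, I_re, I_im]
      linarith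
    have h₁ : N u ^ 2 + N v ^ 2 = 4 := hpar _ _ hs₁ ht₁
    have h₂ : N (I * u) ^ 2 + N (I * v) ^ 2 = 4 := by
      rw [hu, hv, mul_add, mul_sub]
      exact hpar _ _ hs₂ ht₂
    have hsu := hself u
    have hsv := hself v
    have heq : N u = N (I * u) := by
      have : (N u - N (I * u)) ^ 2 ≤ 0 := by nlinarith [sq_nonneg (N v - N (I * v))]
      nlinarith [pow_eq_zero_iff (two_ne_zero) |>.1 (le_antisymm this (sq_nonneg _))]
    have hsq : N u ^ 2 = normSq u := by
      rw [← heq] at hsu h₂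
      nlinarith [sq_nonneg (N v - N (I * v))]
    have hNu : N u = 2 * Real.cos ((s - t) / 2) * N (exp (((s + t) / 2 : ℝ) * I)) := by
      rw [hue, hsmul, abs_of_pos (by positivity)]
    have hNIu : N (I * u) = 2 * Real.cos ((s - t) / 2) * N (I * exp (((s + t) / 2 : ℝ) * I)) := by
      rw [hue, mul_left_comm, hsmul, abs_of_pos (by positivity)]
    have hnu : normSq u = (2 * Real.cos ((s - t) / 2)) ^ 2 := by
      rw [hue, normSq_mul, normSq_ofReal, normSq_eq_norm_sq, norm_exp_ofReal_mul_I]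
      ring
    have hNu' : N u = 2 * Real.cos ((s - t) / 2) := by
      rw [hnu] at hsq
      exact (pow_left_inj₀ (hnonneg u) (by positivity) two_ne_zero).1 hsq
    have hcc : (2 * Real.cos ((s - t) / 2)) ≠ 0 := by positivity
    exact ⟨mul_left_cancel₀ hcc (by rw [← hNu, hNu', mul_one]),
      mul_left_cancel₀ hcc (by rw [← hNIu, ← heq, hNu', mul_one])⟩
  have hquad : Set.Icc 0 (Real.pi / 2) ⊆ A :=
    hclosed.Icc_subset_of_midpoint_mem hzero (by simpa using hadd 0 hzero) hmid
  have harg : z.arg ∈ A := by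
    have h₁ := neg_pi_lt_arg z
    have h₂ := arg_le_pi z
    rcases le_total 0 z.arg with h | h
    · rcases le_total z.arg (Real.pi / 2) with h' | h'
      · exact hquad ⟨h, h'⟩
      · have := hadd _ (hquad (show z.arg - Real.pi / 2 ∈ _ from ⟨by linarith, by linarith⟩))
        rwa [sub_add_cancel] at this
    · apply hsub
      rcases le_total (-(Real.pi / 2)) z.arg with h' | h'
      · exact hquad ⟨by linarith, by linarith⟩
      · exact hsub _ (hquad ⟨by linarith, by linarith⟩)
  rw [← norm_mul_exp_arg_mul_I z, hsmul, harg.1, norm_mul_exp_arg_mul_I, mul_one, abs_norm]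

/-- **Day's theorem**: a real normed space whose norm satisfies the parallelogram identity on
unit vectors satisfies it everywhere. -/
theorem parallelogram_of_unit_parallelogram {E : Type*} [NormedAddCommGroup E] [NormedSpace ℝ E]
    (hpar : ∀ x y : E, ‖x‖ = 1 → ‖y‖ = 1 → ‖x + y‖ ^ 2 + ‖x - y‖ ^ 2 = 4) (x y : E) :
    ‖x + y‖ ^ 2 + ‖x - y‖ ^ 2 = 2 * (‖x‖ ^ 2 + ‖y‖ ^ 2) := by
  by_cases hli : LinearIndependent ℝ ![x, y]
  swap
  · rw [LinearIndependent.pair_iff] at hli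
    push Not at hli
    obtain ⟨s, t, hst, hne⟩ := hli
    have hcol : ∀ (c : ℝ) (v : E),
        ‖v + c • v‖ ^ 2 + ‖v - c • v‖ ^ 2 = 2 * (‖v‖ ^ 2 + ‖c • v‖ ^ 2) := fun c v => by
      have h₁ : v + c • v = (1 + c) • v := by module
      have h₂ : v - c • v = (1 - c) • v := by module
      rw [h₁, h₂, norm_smul, norm_smul, norm_smul, mul_pow, mul_pow, mul_pow]
      simp only [Real.norm_eq_abs, sq_abs]
      ring
    by_cases hs : s = 0
    · have ht := hne hs
      have : y = (0 : ℝ) • x := by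
        subst hs
        simpa [ht] using hst
      rw [this]
      exact hcol 0 x
    · have : x = (-(t / s)) • y := by
        have : s • x = -(t • y) := eq_neg_of_add_eq_zero_left hst
        rw [neg_smul, div_eq_inv_mul, mul_smul, ← smul_neg, ← this, inv_smul_smul₀ hs]
      have h := hcol (-(t / s)) y
      rw [← this, norm_sub_rev, add_comm y x] at h
      linarith
  set L₀ : ℂ → E := fun z => z.re • x + z.im • y with hL₀
  have hL₀cont : Continuous L₀ := by fun_prop
  have hL₀add : ∀ z w, L₀ (z + w) = L₀ z + L₀ w := fun z w => by
    simp only [hL₀, Complex.add_re, Complex.add_im]; module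
  have hL₀smul : ∀ (r : ℝ) z, L₀ (r * z) = r • L₀ z := fun r z => by
    simp only [hL₀, Complex.re_ofReal_mul, Complex.im_ofReal_mul]; module
  have hL₀ne : ∀ z, z ≠ 0 → 0 < ‖L₀ z‖ := fun z hz => norm_pos_iff.2 fun h => hz <| by
    obtain ⟨h₁, h₂⟩ := LinearIndependent.pair_iff.1 hli _ _ h
    exact Complex.ext h₁ h₂
  have hL₀norm : ∀ z, z ≠ 0 → ‖L₀ ((‖L₀ z‖⁻¹ : ℝ) * z)‖ = 1 := fun z hz => by
    rw [hL₀smul, norm_smul, norm_inv, norm_norm, inv_mul_cancel₀ (hL₀ne z hz).ne']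
  have hbdd : ∃ c > 0, ∀ z, c * ‖z‖ ≤ ‖L₀ z‖ := by
    obtain ⟨w, hw, hmin⟩ := (isCompact_sphere (0 : ℂ) 1).exists_isMinOn
      ⟨1, by simp⟩ hL₀cont.norm.continuousOn
    refine ⟨‖L₀ w‖, hL₀ne w (by rintro rfl; simp at hw), fun z => ?_⟩
    by_cases hz : z = 0
    · simp [hz]
    have hz' : 0 < ‖z‖ := norm_pos_iff.2 hz
    have := hmin (show ((‖z‖⁻¹ : ℝ) : ℂ) * z ∈ Metric.sphere (0 : ℂ) 1 by simp [hz])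
    simp only [Set.mem_ofPred_eq] at this
    rw [hL₀smul, norm_smul, norm_inv, norm_norm, inv_mul_eq_div, le_div_iff₀ hz'] at this
    exact this
  obtain ⟨c, hc, hcL⟩ := hbdd
  set S : Set ℂ := {z | ‖L₀ z‖ = 1} with hS
  have hScomp : IsCompact S := by
    refine Metric.isCompact_of_isClosed_isBounded
      (isClosed_eq hL₀cont.norm continuous_const) (isBounded_iff_forall_norm_le.2 ⟨c⁻¹, ?_⟩)
    intro z hz
    have := hcL z
    rw [show ‖L₀ z‖ = 1 from hz] at this
    rw [← one_div, le_div_iff₀ hc]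
    linarith
  set d : ℂ × ℂ → ℝ := fun p => p.1.re * p.2.im - p.1.im * p.2.re with hd
  have hone := hL₀norm 1 one_ne_zero
  have hI := hL₀norm Complex.I Complex.I_ne_zero
  obtain ⟨⟨a, b⟩, ⟨ha, hb⟩, hmax⟩ := (hScomp.prod hScomp).exists_isMaxOn
    ⟨(_, _), hone, hI⟩ (f := d) (by fun_prop)
  have hm : 0 < d (a, b) := by
    refine lt_of_lt_of_le ?_ (hmax (show (_, _) ∈ S ×ˢ S from ⟨hone, hI⟩))
    have h₁ := hL₀ne 1 one_ne_zero
    have h₂ := hL₀ne Complex.I Complex.I_ne_zero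
    simp only [hd, Complex.re_ofReal_mul, Complex.im_ofReal_mul, Complex.one_re, Complex.one_im,
      Complex.I_re, Complex.I_im]
    have : 0 < ‖L₀ 1‖⁻¹ * ‖L₀ Complex.I‖⁻¹ := by positivity
    linarith
  have hdet₀ : ∀ z w, d (z, w) ≤ d (a, b) * (‖L₀ z‖ * ‖L₀ w‖) := fun z w => by
    by_cases hz : z = 0
    · simp [hz, hd, hL₀]
    by_cases hw : w = 0
    · simp [hw, hd, hL₀]
    have h := hmax (show (_, _) ∈ S ×ˢ S from ⟨hL₀norm z hz, hL₀norm w hw⟩)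
    have h₁ := hL₀ne z hz
    have h₂ := hL₀ne w hw
    have hscale : d (((‖L₀ z‖⁻¹ : ℝ) : ℂ) * z, ((‖L₀ w‖⁻¹ : ℝ) : ℂ) * w)
        = d (z, w) / (‖L₀ z‖ * ‖L₀ w‖) := by
      simp only [hd, Complex.re_ofReal_mul, Complex.im_ofReal_mul]
      field_simp
    simp only [Set.mem_ofPred_eq] at h
    rwa [hscale, div_le_iff₀ (by positivity)] at h
  set P : ℂ → ℂ := fun z => z.re * a + z.im * b with hP
  have hPadd : ∀ z w, P (z + w) = P z + P w := fun z w => by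
    simp only [hP, Complex.add_re, Complex.add_im]; push_cast; ring
  have hPsub : ∀ z w, P (z - w) = P z - P w := fun z w => by
    simp only [hP, Complex.sub_re, Complex.sub_im]; push_cast; ring
  have hL₀sub : ∀ z w, L₀ (z - w) = L₀ z - L₀ w := fun z w => by
    simp only [hL₀, Complex.sub_re, Complex.sub_im]; module
  have hnorm : ∀ z, ‖L₀ (P z)‖ = ‖z‖ := by
    refine Complex.eq_norm_of_unit_parallelogram (hL₀cont.comp (by fun_prop)).norm
      (fun _ => norm_nonneg _) ?_ ?_ ?_ ?_ ?_
    · intro r z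
      have : P (r * z) = r * P z := by
        simp only [hP, Complex.re_ofReal_mul, Complex.im_ofReal_mul]; push_cast; ring
      rw [this, hL₀smul, norm_smul, Real.norm_eq_abs]
    · intro z w hz hw
      simp only [hPadd, hPsub, hL₀add, hL₀sub]
      exact hpar _ _ hz hw
    · simpa [hP, hS] using ha
    · simpa [hP, hS] using hb
    · intro z w
      have h := hdet₀ (P z) (P w)
      have : d (P z, P w) = d (a, b) * (z.re * w.im - z.im * w.re) := by
        simp only [hd, hP, Complex.add_re, Complex.add_im, Complex.re_ofReal_mul,
          Complex.im_ofReal_mul]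
        ring
      rw [this] at h
      exact le_of_mul_le_mul_left h hm
  have hPsurj : ∀ w, ∃ z, P z = w := fun w => by
    refine ⟨⟨d (w, b) / d (a, b), d (a, w) / d (a, b)⟩, ?_⟩
    have hm' := hm.ne'
    apply Complex.ext
    · simp only [hP, Complex.add_re, Complex.re_ofReal_mul]
      field_simp
      simp only [hd]
      ring
    · simp only [hP, Complex.add_im, Complex.im_ofReal_mul]
      field_simp
      simp only [hd]
      ring
  obtain ⟨z, hz⟩ := hPsurj 1
  obtain ⟨w, hw⟩ := hPsurj Complex.I
  have hx : L₀ (P z) = x := by simp [hz, hL₀]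
  have hy : L₀ (P w) = y := by simp [hw, hL₀]
  rw [← hx, ← hy, ← hL₀add, ← hL₀sub, ← hPadd, ← hPsub, hnorm, hnorm, hnorm, hnorm]
  simpa only [sq] using parallelogram_law_with_norm ℝ z w

/-- A surjective isometry between the unit spheres of an inner product space and of a real normed
space preserves antipodal points. -/
theorem map_neg_of_sphere_isometry {H : Type*} [NormedAddCommGroup H] [InnerProductSpace ℂ H]
    {Y : Type*} [NormedAddCommGroup Y] [NormedSpace ℝ Y] {Δ : H → Y}
    (hmap : ∀ x : H, ‖x‖ = 1 → ‖Δ x‖ = 1)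
    (hsurj : ∀ y : Y, ‖y‖ = 1 → ∃ x : H, ‖x‖ = 1 ∧ Δ x = y)
    (hiso : ∀ x y : H, ‖x‖ = 1 → ‖y‖ = 1 → ‖Δ x - Δ y‖ = ‖x - y‖)
    {x : H} (hx : ‖x‖ = 1) : Δ (-x) = -Δ x := by
  obtain ⟨z, hz, hzx⟩ := hsurj (-Δ x) (by rw [norm_neg, hmap x hx])
  have hdist : ‖x - z‖ = 2 := by
    rw [← hiso x z hx hz, hzx, sub_neg_eq_add, ← two_smul ℝ, norm_smul, hmap x hx]
    norm_num
  have hpar := parallelogram_law_with_norm ℂ x z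
  rw [hdist, hx, hz] at hpar
  have hsum : x + z = 0 := norm_eq_zero.1 (by nlinarith)
  rw [← hzx, eq_neg_of_add_eq_zero_right hsum]


/-- if there is a surjective isometry between the unit sphere of a
non-zero complex Hilbert space `H` and the unit sphere of a real Banach space `Y`,
then `‖x + y‖² + ‖x − y‖² = 4` for all `x, y ∈ S(Y)`, and consequently the norm of
`Y` comes from an inner product. -/
theorem target_is_hilbert_of_sphere_isometry
    {H : Type*} [NormedAddCommGroup H] [InnerProductSpace ℂ H] [CompleteSpace H]
    [Nontrivial H]
    {Y : Type*} [NormedAddCommGroup Y] [NormedSpace ℝ Y] [CompleteSpace Y]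
    (Δ : H → Y)
    (hmap : ∀ x : H, ‖x‖ = 1 → ‖Δ x‖ = 1)
    (hsurj : ∀ y : Y, ‖y‖ = 1 → ∃ x : H, ‖x‖ = 1 ∧ Δ x = y)
    (hiso : ∀ x y : H, ‖x‖ = 1 → ‖y‖ = 1 → ‖Δ x - Δ y‖ = ‖x - y‖) :
    (∀ x y : Y, ‖x‖ = 1 → ‖y‖ = 1 → ‖x + y‖ ^ 2 + ‖x - y‖ ^ 2 = 4) ∧
      Nonempty (InnerProductSpace ℝ Y) := by
  have hpar : ∀ x y : Y, ‖x‖ = 1 → ‖y‖ = 1 → ‖x + y‖ ^ 2 + ‖x - y‖ ^ 2 = 4 := by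
    intro x y hx hy
    obtain ⟨u, hu, rfl⟩ := hsurj x hx
    obtain ⟨v, hv, rfl⟩ := hsurj y hy
    have hadd : ‖Δ u + Δ v‖ = ‖u + v‖ := by
      rw [← sub_neg_eq_add, ← map_neg_of_sphere_isometry hmap hsurj hiso hv,
        hiso u (-v) hu (by rwa [norm_neg]), sub_neg_eq_add]
    rw [hadd, hiso u v hu hv]
    have := parallelogram_law_with_norm ℂ u v
    rw [hu, hv] at this
    linarith
  refine ⟨hpar, ⟨InnerProductSpace.ofNorm ℝ fun x y => ?_⟩⟩
  simpa only [sq] using parallelogram_of_unit_parallelogram hpar x y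
end
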